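/- (Extrapolation: I_α controlled by M_α in mixed weak norm) Let 0<α<mn and q = n/(mn−α). Let u_1,…,u_m and v be weights on ℝ^n with u⃗^{mq} = (u_1^{mq},…,u_m^{mq}) ∈ A_{(1,…,1)} and v^q ∈ A_∞, and write ν = ∏_{i=1}^m u_i^q. Then there exists a constant C such that for all f_1,…,f_m bounded with compact support, ‖I_α(f⃗)/v‖_{L^{q,∞}(ν v^q)} ≤ C ‖M_α(f⃗)/v‖_{L^{q,∞}(ν v^q)}. -/

import Mathlib

open MeasureTheory ENNReal Set

noncomputable section

/-- Euclidean space `ℝ^n`. -/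
abbrev ESp (n : ℕ) := EuclideanSpace ℝ (Fin n)

/-- An axis-parallel cube with positive finite side length. -/
def IsCube {n : ℕ} (Q : Set (ESp n)) : Prop :=
  ∃ (c : Fin n → ℝ) (h : ℝ), 0 < h ∧ Q = {x : ESp n | ∀ i, c i ≤ x i ∧ x i ≤ c i + h}

/-- The measure `w(E) = ∫_E w` associated to a weight `w`. -/
def wMeas {n : ℕ} (w : ESp n → ℝ) (E : Set (ESp n)) : ℝ≥0∞ :=
  ∫⁻ x in E, ENNReal.ofReal (w x)

/-- A weight: a nonnegative locally integrable function, positive (and finite) a.e. -/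
def IsWeight {n : ℕ} (w : ESp n → ℝ) : Prop :=
  Measurable w ∧ (∀ x, 0 ≤ w x) ∧ (∀ᵐ x ∂(volume : Measure (ESp n)), 0 < w x) ∧
    ∀ Q : Set (ESp n), IsCube Q → wMeas w Q < ⊤

/-- `C` is an admissible `A₁` constant for `w`. -/
def A1Const {n : ℕ} (w : ESp n → ℝ) (C : ℝ≥0∞) : Prop :=
  ∀ Q : Set (ESp n), IsCube Q →
    (volume Q)⁻¹ * wMeas w Q ≤ C * essInf (fun x => ENNReal.ofReal (w x)) (volume.restrict Q)

/-- The Muckenhoupt class `A₁`. -/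
def IsA1 {n : ℕ} (w : ESp n → ℝ) : Prop := ∃ C : ℝ≥0∞, C < ⊤ ∧ A1Const w C

/-- The Muckenhoupt class `A_p`, `1 < p < ∞`. -/
def IsAp {n : ℕ} (w : ESp n → ℝ) (p : ℝ) : Prop :=
  ∃ C : ℝ≥0∞, C < ⊤ ∧ ∀ Q : Set (ESp n), IsCube Q →
    ((volume Q)⁻¹ * wMeas w Q) *
      ((volume Q)⁻¹ * ∫⁻ x in Q, ENNReal.ofReal (w x) ^ (1 - p / (p - 1))) ^ (p - 1) ≤ C

/-- The class `A_∞ = ⋃_{p ≥ 1} A_p`. -/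
def IsAinfty {n : ℕ} (w : ESp n → ℝ) : Prop :=
  IsA1 w ∨ ∃ p : ℝ, 1 < p ∧ IsAp w p

/-- The Hardy–Littlewood maximal function (over cubes). -/
def maxFn {n : ℕ} (f : ESp n → ℝ) (x : ESp n) : ℝ≥0∞ :=
  ⨆ (Q : Set (ESp n)) (_ : IsCube Q) (_ : x ∈ Q),
    (volume Q)⁻¹ * ∫⁻ y in Q, ENNReal.ofReal |f y|

/-- The Fujii–Wilson `A_∞` constant. -/
def FW {n : ℕ} (w : ESp n → ℝ) : ℝ≥0∞ :=
  ⨆ (Q : Set (ESp n)) (_ : IsCube Q),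
    (wMeas w Q)⁻¹ * ∫⁻ x in Q, maxFn (Q.indicator w) x

/-- The weighted weak `L^{q,∞}(w)` quasinorm of `g`. -/
def wnorm {n : ℕ} (g : ESp n → ℝ≥0∞) (q : ℝ) (w : ESp n → ℝ) : ℝ≥0∞ :=
  ⨆ (t : ℝ) (_ : 0 < t), ENNReal.ofReal t * (wMeas w {x | ENNReal.ofReal t < g x}) ^ (1 / q)

/-- The weighted `L¹(w)` norm. -/
def L1norm {n : ℕ} (f : ESp n → ℝ) (w : ESp n → ℝ) : ℝ≥0∞ :=
  ∫⁻ x, ENNReal.ofReal (|f x| * w x)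

/-- The fractional maximal operator `M_α`. -/
def fracM {n : ℕ} (α : ℝ) (f : ESp n → ℝ) (x : ESp n) : ℝ≥0∞ :=
  ⨆ (Q : Set (ESp n)) (_ : IsCube Q) (_ : x ∈ Q),
    ((volume Q) ^ (1 - α / (n : ℝ)))⁻¹ * ∫⁻ y in Q, ENNReal.ofReal |f y|

/-- The fractional integral (Riesz potential) `I_α`. -/
def fracI {n : ℕ} (α : ℝ) (f : ESp n → ℝ) (x : ESp n) : ℝ :=
  ∫ y, f y / dist x y ^ ((n : ℝ) - α)

/-- The multi(sub)linear maximal function `𝓜`. -/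
def multiM {n m : ℕ} (f : Fin m → ESp n → ℝ) (x : ESp n) : ℝ≥0∞ :=
  ⨆ (Q : Set (ESp n)) (_ : IsCube Q) (_ : x ∈ Q),
    ∏ i, (volume Q)⁻¹ * ∫⁻ y in Q, ENNReal.ofReal |f i y|

/-- The multi(sub)linear fractional maximal operator `𝓜_α`. -/
def multiMα {n m : ℕ} (α : ℝ) (f : Fin m → ESp n → ℝ) (x : ESp n) : ℝ≥0∞ :=
  ⨆ (Q : Set (ESp n)) (_ : IsCube Q) (_ : x ∈ Q),
    ∏ i, ((volume Q) ^ (1 - α / ((m : ℝ) * (n : ℝ))))⁻¹ * ∫⁻ y in Q, ENNReal.ofReal |f i y|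

/-- The multilinear fractional integral `𝓘_α`. -/
def multiIα {n m : ℕ} (α : ℝ) (f : Fin m → ESp n → ℝ) (x : ESp n) : ℝ :=
  ∫ y : Fin m → ESp n, (∏ i, f i (y i)) / (∑ i, dist x (y i)) ^ ((m : ℝ) * (n : ℝ) - α)

/-- The multilinear class `A_{(1,…,1)}`. -/
def A11 {n m : ℕ} (w : Fin m → ESp n → ℝ) : Prop :=
  ∃ C : ℝ≥0∞, C < ⊤ ∧ ∀ Q : Set (ESp n), IsCube Q →
    ((volume Q)⁻¹ * ∫⁻ x in Q, ENNReal.ofReal (∏ i, w i x ^ ((m : ℝ)⁻¹))) ^ (m : ℝ) *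
      ∏ i, (essInf (fun x => ENNReal.ofReal (w i x)) (volume.restrict Q))⁻¹ ≤ C


section
namespace Ext

/-! ## Dyadic cubes in `Fin n → ℝ` -/

abbrev Idx (n : ℕ) := ℤ × (Fin n → ℤ)

def D {n : ℕ} (I : Idx n) : Set (Fin n → ℝ) := {x | ∀ i, ⌊x i / (2:ℝ) ^ I.1⌋ = I.2 i}

def cell {n : ℕ} (j : ℤ) (x : Fin n → ℝ) : Idx n := (j, fun i => ⌊x i / (2:ℝ) ^ j⌋)

lemma mem_cell {n : ℕ} (j : ℤ) (x : Fin n → ℝ) : x ∈ D (cell j x) := fun _ => rfl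

lemma mem_D_iff {n : ℕ} {I : Idx n} {x : Fin n → ℝ} : x ∈ D I ↔ cell I.1 x = I := by
  constructor
  · intro h; ext1
    · rfl
    · funext i; exact h i
  · intro h; rw [← h]; exact mem_cell _ _

lemma floor_coarse (a : ℝ) {j k : ℤ} (h : j ≤ k) :
    ⌊a / (2:ℝ) ^ k⌋ = ⌊a / (2:ℝ) ^ j⌋ / (2 ^ (k - j).toNat : ℕ) := by
  rw [← Int.floor_div_natCast]
  congr 1
  push_cast
  have : (2:ℝ) ^ k = 2 ^ j * 2 ^ (k-j).toNat := by
    rw [← zpow_natCast, Int.toNat_of_nonneg (by omega), ← zpow_add₀ (by norm_num)]; congr 1; ring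
  rw [this, div_div]

lemma D_nested {n : ℕ} {I J : Idx n} (h : (D I ∩ D J).Nonempty) (hs : I.1 ≤ J.1) : D I ⊆ D J := by
  obtain ⟨x, hx1, hx2⟩ := h
  intro y hy i
  rw [← hx2 i, floor_coarse (y i) hs, floor_coarse (x i) hs, hy i, hx1 i]

lemma D_eq_of_meet {n : ℕ} {I J : Idx n} (h : (D I ∩ D J).Nonempty) (hs : I.1 = J.1) : I = J := by
  obtain ⟨x, hx1, hx2⟩ := h
  rw [mem_D_iff] at hx1 hx2
  rw [← hx1, ← hx2, hs]

lemma D_eq_pi {n : ℕ} (I : Idx n) :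
    D I = Set.pi univ (fun i => Ico ((I.2 i : ℝ) * 2 ^ I.1) ((I.2 i + 1 : ℝ) * 2 ^ I.1)) := by
  ext x
  have h2 : (0:ℝ) < 2 ^ I.1 := by positivity
  simp only [D, mem_ofPred_eq, Set.mem_pi, mem_univ, true_implies, mem_Ico, Int.floor_eq_iff,
    le_div_iff₀ h2, div_lt_iff₀ h2]

lemma D_meas {n : ℕ} (I : Idx n) : MeasurableSet (D I) := by
  rw [D_eq_pi]; exact MeasurableSet.univ_pi (fun i => measurableSet_Ico)

lemma D_nonempty {n : ℕ} (I : Idx n) : (D I).Nonempty := by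
  refine ⟨fun i => (I.2 i : ℝ) * 2 ^ I.1, ?_⟩
  rw [D_eq_pi]
  intro i _
  have h2 : (0:ℝ) < 2 ^ I.1 := by positivity
  simp only [mem_Ico, le_refl, true_and]
  nlinarith

/-- closed cube -/
def K {n : ℕ} (I : Idx n) : Set (Fin n → ℝ) :=
  Icc (fun i => (I.2 i : ℝ) * 2 ^ I.1) (fun i => (I.2 i : ℝ) * 2 ^ I.1 + 2 ^ I.1)

lemma D_ae_K {n : ℕ} (I : Idx n) : D I =ᵐ[volume] K I := by
  rw [D_eq_pi, K]
  have := Measure.univ_pi_Ico_ae_eq_Icc (μ := fun _ : Fin n => (volume : Measure ℝ))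
    (f := fun i => (I.2 i : ℝ) * 2 ^ I.1) (g := fun i => (I.2 i : ℝ) * 2 ^ I.1 + 2 ^ I.1)
  simp only [add_mul, one_mul]
  exact this

lemma vol_D {n : ℕ} (I : Idx n) : volume (D I) = ENNReal.ofReal (2 ^ I.1) ^ n := by
  rw [measure_congr (D_ae_K I), K, Real.volume_Icc_pi]
  simp

lemma vol_D_ne_zero {n : ℕ} (I : Idx n) : volume (D I) ≠ 0 := by
  rw [vol_D]; 
  apply pow_ne_zero
  simp; positivity

lemma vol_D_ne_top {n : ℕ} (I : Idx n) : volume (D I) ≠ ⊤ := by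
  rw [vol_D]; exact pow_ne_top ofReal_ne_top

/-! ## The covering lemma -/

def IsMx {n : ℕ} (G : Set (Idx n)) (I : Idx n) : Prop :=
  I ∈ G ∧ ∀ J ∈ G, (D I ∩ D J).Nonempty → J.1 ≤ I.1

lemma exists_mx {n : ℕ} (G : Set (Idx n)) (B : ℤ) (hB : ∀ I ∈ G, I.1 ≤ B) {I : Idx n}
    (hI : I ∈ G) {x : Fin n → ℝ} (hx : x ∈ D I) : ∃ J, IsMx G J ∧ x ∈ D J := by
  obtain ⟨j, ⟨hj1, hj2⟩⟩ := Int.exists_greatest_of_bdd (P := fun j => cell j x ∈ G)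
    ⟨B, fun z hz => hB _ hz⟩ ⟨I.1, by rw [mem_D_iff.1 hx]; exact hI⟩
  refine ⟨cell j x, ⟨hj1, fun J hJ hm => ?_⟩, mem_cell j x⟩
  by_contra hlt
  push Not at hlt
  have := D_nested hm hlt.le (mem_cell j x)
  have h2 := hj2 J.1 (by rw [mem_D_iff.1 this]; exact hJ)
  exact absurd h2 (not_le.2 hlt)

lemma cover {n : ℕ} (G : Set (Idx n)) (B : ℤ) (hB : ∀ I ∈ G, I.1 ≤ B)
    (σ τ : Measure (Fin n → ℝ)) (h : ∀ I, IsMx G I → σ (D I) ≤ τ (D I)) :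
    σ (⋃ I ∈ G, D I) ≤ τ (⋃ I ∈ G, D I) := by
  have hU : (⋃ I ∈ G, D I) = ⋃ I ∈ {I | IsMx G I}, D I := by
    apply Subset.antisymm
    · intro x hx
      simp only [mem_iUnion, exists_prop] at hx ⊢
      obtain ⟨I, hI, hx⟩ := hx
      exact exists_mx G B hB hI hx
    · exact biUnion_subset_biUnion_left (fun I hI => hI.1)
  have hd : {I | IsMx G I}.PairwiseDisjoint (D (n := n)) := by
    intro I hI J hJ hne
    rw [Function.onFun, Set.disjoint_iff_inter_eq_empty]
    by_contra hc
    have hc := Set.nonempty_iff_ne_empty.2 hc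
    have h1 := hI.2 J hJ.1 hc
    have h2 := hJ.2 I hI.1 (by rwa [inter_comm])
    exact hne (D_eq_of_meet hc (le_antisymm h2 h1))
  rw [hU, measure_biUnion (to_countable _) hd (fun I _ => D_meas I),
    measure_biUnion (to_countable _) hd (fun I _ => D_meas I)]
  exact ENNReal.tsum_le_tsum (fun I => h I.1 I.2)

/-! ## Discrete layer cake -/

/-- `Σ_{k} 2^{kp} 1[2^k < x]` -/
def lc (p : ℝ) (x : ℝ≥0∞) : ℝ≥0∞ := ∑' k : ℤ, if (2:ℝ≥0∞) ^ k < x then ((2:ℝ≥0∞) ^ k) ^ p else 0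

lemma two_zpow_ne_top (k : ℤ) : (2:ℝ≥0∞) ^ k ≠ ⊤ := 
  (ENNReal.zpow_lt_top (by norm_num) (by norm_num) k).ne

lemma two_zpow_ne_zero (k : ℤ) : (2:ℝ≥0∞) ^ k ≠ 0 := 
  (ENNReal.zpow_pos (by norm_num) (by norm_num) k).ne'

lemma le_lc {p : ℝ} (hp : 0 < p) (x : ℝ≥0∞) : x ^ p ≤ 2 ^ p * lc p x := by
  rcases eq_or_ne x 0 with rfl | h0
  · simp [hp]
  rcases eq_or_ne x ⊤ with rfl | ht
  · have : lc p ⊤ = ⊤ := by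
      rw [eq_top_iff]
      calc (⊤:ℝ≥0∞) = ∑' k : ℕ, 1 := by simp
        _ ≤ ∑' k : ℕ, (fun k : ℤ => if (2:ℝ≥0∞) ^ k < ⊤ then ((2:ℝ≥0∞) ^ k) ^ p else 0) k := by
          apply ENNReal.tsum_le_tsum
          intro k
          simp only [if_pos (two_zpow_ne_top k).lt_top]
          apply ENNReal.one_le_rpow _ hp
          rw [zpow_natCast]
          exact one_le_pow₀ (by norm_num)
        _ ≤ lc p ⊤ := ENNReal.tsum_comp_le_tsum_of_injective Nat.cast_injective _
    rw [this, ENNReal.mul_top]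
    · exact le_top
    · simp
  · obtain ⟨k, hk1, hk2⟩ := ENNReal.exists_mem_Ioc_zpow h0 ht (y := 2) (by norm_num) (by norm_num)
    calc x ^ p ≤ (2 ^ (k+1)) ^ p := by gcongr
      _ = 2 ^ p * ((2:ℝ≥0∞) ^ k) ^ p := by
        rw [← ENNReal.mul_rpow_of_nonneg _ _ hp.le, ENNReal.zpow_add (by norm_num) (by norm_num), zpow_one, mul_comm]
      _ ≤ 2 ^ p * lc p x := by
        gcongr
        have := ENNReal.le_tsum (f := fun k : ℤ => if (2:ℝ≥0∞) ^ k < x then ((2:ℝ≥0∞) ^ k) ^ p else 0) k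
        simpa [lc, hk1] using this

/-- geometric constant -/
def gc (p : ℝ) : ℝ≥0∞ := (1 - (2:ℝ≥0∞) ^ (-p))⁻¹

lemma gc_lt_top {p : ℝ} (hp : 0 < p) : gc p < ⊤ := by
  rw [gc, ENNReal.inv_lt_top, tsub_pos_iff_lt]
  exact ENNReal.rpow_lt_one_of_one_lt_of_neg (by norm_num) (by linarith)

lemma tsum_geo (p : ℝ) : ∑' k : ℕ, (2:ℝ≥0∞) ^ (-(k:ℝ) * p) = gc p := by
  rw [gc, ← ENNReal.tsum_geometric]
  congr 1; funext k
  rw [← ENNReal.rpow_natCast, ← ENNReal.rpow_mul]; congr 1; ring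

lemma tsum_geo_le {p : ℝ} (K : ℤ) :
    ∑' k : ℤ, (if k ≤ K then ((2:ℝ≥0∞) ^ k) ^ p else 0) ≤ gc p * ((2:ℝ≥0∞) ^ K) ^ p := by
  rw [← tsum_geo, ← ENNReal.tsum_mul_right]
  have hinj : Function.Injective (fun j : ℕ => K - (j:ℤ)) := fun a b h => by simpa using h
  have hs : Function.support (fun k : ℤ => if k ≤ K then ((2:ℝ≥0∞) ^ k) ^ p else 0) ⊆
      range (fun j : ℕ => K - (j:ℤ)) := by
    intro k hk
    simp only [Function.mem_support, ne_eq, ite_eq_right_iff, Classical.not_imp] at hk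
    exact ⟨(K - k).toNat, by have := hk.1; simp; omega⟩
  rw [← hinj.tsum_eq hs]
  apply ENNReal.tsum_le_tsum
  intro j
  have : K - (j:ℤ) ≤ K := by omega
  simp only [this, if_true]
  simp only [← ENNReal.rpow_intCast, ← ENNReal.rpow_mul]
  rw [← ENNReal.rpow_add _ _ (by norm_num) (by norm_num)]
  apply le_of_eq; congr 1; push_cast; ring

lemma lc_le {p : ℝ} (hp : 0 < p) (x : ℝ≥0∞) : lc p x ≤ gc p * x ^ p := by
  rcases eq_or_ne x 0 with rfl | h0
  · simp [lc]
  rcases eq_or_ne x ⊤ with rfl | ht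
  · rw [ENNReal.top_rpow_of_pos hp, ENNReal.mul_top]
    · exact le_top
    · simp [gc, ENNReal.sub_eq_top_iff]
  · obtain ⟨k, hk1, hk2⟩ := ENNReal.exists_mem_Ioc_zpow h0 ht (y := 2) (by norm_num) (by norm_num)
    calc lc p x ≤ ∑' j : ℤ, (if j ≤ k then ((2:ℝ≥0∞) ^ j) ^ p else 0) := by
          apply ENNReal.tsum_le_tsum
          intro j
          split_ifs with h1 h2
          · exact le_rfl
          · exfalso
            push Not at h2
            have : (2:ℝ≥0∞) ^ (k+1) ≤ 2 ^ j := ENNReal.zpow_le_of_le (by norm_num) (by omega)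
            exact absurd (h1.trans_le hk2) (not_lt.2 this)
          · exact zero_le
          · exact zero_le
      _ ≤ gc p * ((2:ℝ≥0∞) ^ k) ^ p := tsum_geo_le k
      _ ≤ _ := by gcongr

lemma lc_meas (p : ℝ) : Measurable (lc p) := by
  apply Measurable.tsum
  intro k
  exact Measurable.ite measurableSet_Ioi measurable_const measurable_const

lemma lintegral_lc {X : Type*} [MeasurableSpace X] (μ : Measure X) (p : ℝ) {g : X → ℝ≥0∞}
    (hg : Measurable g) :
    ∫⁻ x, lc p (g x) ∂μ = ∑' k : ℤ, ((2:ℝ≥0∞) ^ k) ^ p * μ {x | (2:ℝ≥0∞) ^ k < g x} := by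
  unfold lc
  rw [lintegral_tsum]
  · congr 1; funext k
    have hm : MeasurableSet {x | (2:ℝ≥0∞) ^ k < g x} := measurableSet_lt measurable_const hg
    rw [← lintegral_indicator_const hm]
    congr 1; funext x
    by_cases h : (2:ℝ≥0∞) ^ k < g x <;> simp [h]
  · intro k
    exact (Measurable.ite (measurableSet_lt measurable_const hg) measurable_const measurable_const).aemeasurable

end Ext

end

section
namespace Ext

/-! ## Reverse Hölder for dyadic `A₁` weights -/

def av {n : ℕ} (f : (Fin n → ℝ) → ℝ≥0∞) (I : Idx n) : ℝ≥0∞ :=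
  (volume (D I))⁻¹ * ∫⁻ x in D I, f x

lemma av_mul {n : ℕ} (f : (Fin n → ℝ) → ℝ≥0∞) (I : Idx n) :
    ∫⁻ x in D I, f x = av f I * volume (D I) := by
  rw [av, mul_comm, ← mul_assoc, ENNReal.mul_inv_cancel (vol_D_ne_zero I) (vol_D_ne_top I), one_mul]

def LI {n : ℕ} (f : (Fin n → ℝ) → ℝ≥0∞) : Prop :=
  ∀ (c : Fin n → ℝ) (h : ℝ), 0 < h → ∫⁻ x in Icc c (fun i => c i + h), f x < ⊤

lemma LI.D {n : ℕ} {f : (Fin n → ℝ) → ℝ≥0∞} (h : LI f) (I : Idx n) : ∫⁻ x in D I, f x < ⊤ := by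
  rw [setLIntegral_congr (D_ae_K I), K]
  exact h _ _ (by positivity)

lemma closedBall_pi_Icc {n : ℕ} (c : Fin n → ℝ) (r : ℝ) (hr : 0 ≤ r) :
    Metric.closedBall c r = Icc (fun i => c i - r) (fun i => (c i - r) + 2 * r) := by
  ext x
  rw [Metric.mem_closedBall, dist_pi_le_iff hr]
  simp only [mem_Icc, Pi.le_def, Real.dist_eq, abs_le]
  constructor
  · intro h; exact ⟨fun i => by linarith [(h i).1], fun i => by linarith [(h i).2]⟩
  · intro h i; exact ⟨by linarith [h.1 i], by linarith [h.2 i]⟩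

lemma K_eq_closedBall {n : ℕ} (I : Idx n) :
    K I = Metric.closedBall (fun i => (I.2 i : ℝ) * 2 ^ I.1 + 2 ^ I.1 / 2) (2 ^ I.1 / 2) := by
  rw [closedBall_pi_Icc _ _ (by positivity), K]
  congr 1
  · funext i; ring
  · funext i; ring

lemma LI.locInt {n : ℕ} {f : (Fin n → ℝ) → ℝ≥0∞} (h : LI f) (hm : Measurable f) :
    LocallyIntegrable (fun x => (f x).toReal) volume := by
  intro x
  refine ⟨Metric.closedBall x 1, Metric.closedBall_mem_nhds x one_pos, ?_⟩
  rw [closedBall_pi_Icc _ _ (by positivity)]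
  exact integrable_toReal_of_lintegral_ne_top hm.aemeasurable (h _ _ (by norm_num)).ne

lemma leb {n : ℕ} {f : (Fin n → ℝ) → ℝ≥0∞} (h : LI f) (hm : Measurable f) (hf : ∀ x, f x ≠ ⊤) :
    ∀ᵐ x, ∀ l < f x, ∀ i : ℤ, ∃ j ≤ i, l < av f (cell j x) := by
  filter_upwards [IsUnifLocDoublingMeasure.ae_tendsto_average volume (h.locInt hm) 1] with x hx l hl i
  have key := hx (ι := ℕ) (l := Filter.atTop) 
    (fun j => (fun i => ((cell (-(j:ℤ)) x).2 i : ℝ) * 2 ^ (-(j:ℤ)) + 2 ^ (-(j:ℤ)) / 2))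
    (fun j => 2 ^ (-(j:ℤ)) / 2) ?_ ?_
  · have e : ∀ j : ℕ, (⨍ y in Metric.closedBall (fun i => ((cell (-(j:ℤ)) x).2 i : ℝ) * 2 ^ (-(j:ℤ)) + 2 ^ (-(j:ℤ)) / 2) (2 ^ (-(j:ℤ)) / 2), (f y).toReal) = (av f (cell (-(j:ℤ)) x)).toReal := by
      intro j
      have := K_eq_closedBall (cell (-(j:ℤ)) x)
      simp only [cell] at this ⊢
      rw [← this, setAverage_eq, ← setIntegral_congr_set (D_ae_K _), integral_toReal hm.aemeasurable
        (Filter.Eventually.of_forall fun y => (hf y).lt_top), av, ENNReal.toReal_mul, ENNReal.toReal_inv, measureReal_def,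
        measure_congr (D_ae_K _), smul_eq_mul]
    simp only [e] at key
    have h1 : ∀ᶠ j : ℕ in Filter.atTop, l.toReal < (av f (cell (-(j:ℤ)) x)).toReal :=
      key.eventually_const_lt ((ENNReal.toReal_lt_toReal (ne_top_of_lt hl) (hf x)).2 hl)
    obtain ⟨j, hj1, hj2⟩ := (h1.and (Filter.eventually_ge_atTop (-i).toNat)).exists
    refine ⟨-j, by omega, ?_⟩
    by_contra hc
    push Not at hc
    exact absurd (ENNReal.toReal_mono (ne_top_of_lt hl) hc) (not_le.2 hj1)
  · rw [tendsto_nhdsWithin_iff]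
    refine ⟨?_, Filter.Eventually.of_forall fun j => by simp only [mem_Ioi]; positivity⟩
    have : Filter.Tendsto (fun j : ℕ => (1/2:ℝ) ^ j / 2) Filter.atTop (nhds (0/2)) :=
      (_root_.tendsto_pow_atTop_nhds_zero_of_lt_one (by norm_num) (by norm_num)).div_const 2
    simpa using this
  · refine Filter.Eventually.of_forall fun j => ?_
    have hK := K_eq_closedBall (cell (-(j:ℤ)) x)
    rw [one_mul]
    simp only [cell] at hK ⊢
    rw [← hK, K]
    have := mem_cell (-(j:ℤ)) x
    rw [D_eq_pi] at this
    constructor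
    · intro i; exact (this i trivial).1
    · intro i; have := (this i trivial).2; simp only [add_mul, one_mul] at this; exact this.le

lemma vol_parent {n : ℕ} (I : Idx n) (k : Fin n → ℤ) :
    volume (D (I.1 + 1, k)) = 2 ^ n * volume (D I) := by
  rw [vol_D, vol_D, ← mul_pow]
  congr 1
  simp only
  rw [zpow_add₀ (by norm_num), zpow_one, mul_comm, ENNReal.ofReal_mul (by norm_num)]
  simp

/-- dyadic A1 (a.e. form) -/
def DA1 {n : ℕ} (f : (Fin n → ℝ) → ℝ≥0∞) (C : ℝ≥0∞) : Prop :=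
  ∀ I : Idx n, ∀ᵐ x ∂(volume.restrict (D I)), av f I ≤ C * f x

section
variable {n : ℕ} (f : (Fin n → ℝ) → ℝ≥0∞) (I0 : Idx n)

def GG (l : ℝ≥0∞) : Set (Idx n) := {J | J.1 ≤ I0.1 ∧ D J ⊆ D I0 ∧ l < av f J}
def UU (l : ℝ≥0∞) : Set (Fin n → ℝ) := ⋃ J ∈ GG f I0 l, D J

lemma UU_meas (l : ℝ≥0∞) : MeasurableSet (UU f I0 l) :=
  MeasurableSet.biUnion (to_countable _) (fun J _ => D_meas J)

lemma UU_mono {l l' : ℝ≥0∞} (h : l ≤ l') : UU f I0 l' ⊆ UU f I0 l :=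
  biUnion_subset_biUnion_left (fun _ hJ => ⟨hJ.1, hJ.2.1, h.trans_lt hJ.2.2⟩)

lemma UU_step {C : ℝ≥0∞} (hC : 1 ≤ C) (hCt : C ≠ ⊤) (h : LI f) (hm : Measurable f) (hA : DA1 f C)
    {l : ℝ≥0∞} (hl : av f I0 ≤ l) (hl0 : l ≠ 0) (hlt : l ≠ ⊤) :
    volume.withDensity f (UU f I0 (2 * 2 ^ n * l)) ≤
      (1 - (2 * C)⁻¹) * volume.withDensity f (UU f I0 l) := by
  set N := volume.withDensity f with hN
  have hND : ∀ J : Idx n, N (D J) = av f J * volume (D J) := fun J => by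
    rw [hN, withDensity_apply _ (D_meas J), av_mul]
  set l' := 2 * 2 ^ n * l with hl'
  have hll' : l ≤ l' := by
    rw [hl']
    have : (1:ℝ≥0∞) ≤ 2 * 2 ^ n := by
      calc (1:ℝ≥0∞) ≤ 2 := by norm_num
        _ = 2 * 1 := by ring
        _ ≤ _ := by gcongr; exact one_le_pow₀ (by norm_num)
    calc l = 1 * l := by ring
      _ ≤ _ := by gcongr
  have hl'0 : l' ≠ 0 := by
    intro h; rw [h] at hll'; exact hl0 (le_antisymm hll' zero_le)
  have hl't : l' ≠ ⊤ := by
    rw [hl']; exact mul_ne_top (by simp [ENNReal.mul_eq_top]) hlt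
  have main : (N.restrict (UU f I0 l')) (UU f I0 l) ≤ ((1 - (2 * C)⁻¹) • N) (UU f I0 l) := by
    apply cover _ I0.1 (fun I hI => hI.1)
    intro I hI
    have hIne : I.1 < I0.1 := by
      refine lt_of_le_of_ne hI.1.1 fun he => ?_
      have : I = I0 := D_eq_of_meet (by
        obtain ⟨x, hx⟩ := D_nonempty I
        exact ⟨x, hx, hI.1.2.1 hx⟩) he
      have h3 := hI.1.2.2
      rw [this] at h3
      exact absurd hl (not_le.2 h3)
    -- the parent
    obtain ⟨x, hx⟩ := D_nonempty I
    have hx0 := hI.1.2.1 hx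
    set Ip := cell (I.1 + 1) x with hIp
    have hxp : x ∈ D Ip := mem_cell _ _
    have hIIp : D I ⊆ D Ip := D_nested ⟨x, hx, hxp⟩ (by simp [hIp, cell])
    have hpn : ¬ (l < av f Ip) := by
      intro hc
      have := hI.2 Ip ⟨by simp [hIp, cell]; omega, D_nested ⟨x, hxp, hx0⟩ (by simp [hIp, cell]; omega), hc⟩ ⟨x, hx, hxp⟩
      simp [hIp, cell] at this
    push Not at hpn
    have hNI : N (D I) ≤ 2 ^ n * l * volume (D I) := by
      calc N (D I) ≤ N (D Ip) := measure_mono hIIp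
        _ = av f Ip * (2 ^ n * volume (D I)) := by rw [hND, hIp, cell, vol_parent]
        _ ≤ l * (2 ^ n * volume (D I)) := by gcongr
        _ = _ := by ring
    -- half of the measure
    set G' : Set (Idx n) := {J | J ∈ GG f I0 l' ∧ D J ⊆ D I} with hG'
    have hU' : D I ∩ UU f I0 l' ⊆ ⋃ J ∈ G', D J := by
      rintro y ⟨hy1, hy2⟩
      simp only [UU, mem_iUnion, exists_prop] at hy2 ⊢
      obtain ⟨J, hJ, hyJ⟩ := hy2
      refine ⟨J, ⟨hJ, ?_⟩, hyJ⟩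
      have := hI.2 J ⟨hJ.1, hJ.2.1, hll'.trans_lt hJ.2.2⟩ ⟨y, hy1, hyJ⟩
      exact D_nested ⟨y, hyJ, hy1⟩ this
    have hhalf : volume (D I ∩ UU f I0 l') ≤ 2⁻¹ * volume (D I) := by
      have h1 : volume (⋃ J ∈ G', D J) ≤ (l'⁻¹ • N) (⋃ J ∈ G', D J) := by
        apply cover _ I0.1 (fun I hI => hI.1.1)
        intro J hJ
        have h2 := hJ.1.1.2.2
        rw [Measure.smul_apply, smul_eq_mul, hND]
        calc volume (D J) = l'⁻¹ * l' * volume (D J) := by rw [ENNReal.inv_mul_cancel hl'0 hl't, one_mul]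
          _ ≤ l'⁻¹ * av f J * volume (D J) := by gcongr
          _ = _ := by ring
      calc volume (D I ∩ UU f I0 l') ≤ _ := measure_mono hU'
        _ ≤ _ := h1
        _ = l'⁻¹ * N (⋃ J ∈ G', D J) := by rw [Measure.smul_apply, smul_eq_mul]
        _ ≤ l'⁻¹ * N (D I) := by
          gcongr; exact iUnion₂_subset (fun J hJ => hJ.2)
        _ ≤ l'⁻¹ * (2 ^ n * l * volume (D I)) := by gcongr
        _ = l'⁻¹ * (2⁻¹ * l') * volume (D I) := by
          rw [hl', ← mul_assoc, ← mul_assoc 2⁻¹, ← mul_assoc 2⁻¹, ENNReal.inv_mul_cancel (by norm_num) (by norm_num), one_mul]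
        _ = 2⁻¹ * volume (D I) := by
          rw [mul_left_comm, ENNReal.inv_mul_cancel hl'0 hl't, mul_one]
    have hhalf2 : 2⁻¹ * volume (D I) ≤ volume (D I \ UU f I0 l') := by
      have h3 := measure_inter_add_sdiff (μ := volume) (D I) (UU_meas f I0 l')
      have h4 : 2⁻¹ * volume (D I) + 2⁻¹ * volume (D I) = volume (D I) := by
        rw [← add_mul, ENNReal.inv_two_add_inv_two, one_mul]
      have hfin : 2⁻¹ * volume (D I) ≠ ⊤ := mul_ne_top (by simp) (vol_D_ne_top I)
      have h5 : 2⁻¹ * volume (D I) + 2⁻¹ * volume (D I) ≤ 2⁻¹ * volume (D I) + volume (D I \ UU f I0 l') := by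
        rw [h4]
        calc volume (D I) = _ := h3.symm
          _ ≤ _ := by gcongr
      exact (ENNReal.add_le_add_iff_left hfin).1 h5
    have hlow : (2 * C)⁻¹ * N (D I) ≤ N (D I \ UU f I0 l') := by
      have hms : MeasurableSet (D I \ UU f I0 l') := (D_meas I).diff (UU_meas f I0 l')
      have h6 : av f I * volume (D I \ UU f I0 l') ≤ C * N (D I \ UU f I0 l') := by
        rw [hN, withDensity_apply _ hms, ← lintegral_const_mul _ hm, ← setLIntegral_const]
        apply lintegral_mono_ae
        exact ae_restrict_of_ae_restrict_of_subset sdiff_subset (hA I)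
      calc (2 * C)⁻¹ * N (D I) = C⁻¹ * (av f I * (2⁻¹ * volume (D I))) := by
            rw [hND, ENNReal.mul_inv (by simp) (by simp)]; ring
        _ ≤ C⁻¹ * (av f I * volume (D I \ UU f I0 l')) := by gcongr
        _ ≤ C⁻¹ * (C * N (D I \ UU f I0 l')) := by gcongr
        _ = _ := by rw [← mul_assoc, ENNReal.inv_mul_cancel (by positivity) hCt, one_mul]
    have hNfin : N (D I) ≠ ⊤ := by
      rw [hN, withDensity_apply _ (D_meas I)]; exact (h.D I).ne
    rw [Measure.restrict_apply (D_meas I), Measure.smul_apply, smul_eq_mul, ENNReal.sub_mul (fun _ _ => hNfin), one_mul]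
    refine ENNReal.le_sub_of_add_le_right (ne_top_of_le_ne_top hNfin (hlow.trans (measure_mono sdiff_subset))) ?_
    calc _ ≤ N (D I ∩ UU f I0 l') + N (D I \ UU f I0 l') := by gcongr
      _ = N (D I) := measure_inter_add_sdiff _ (UU_meas f I0 l')
  rw [Measure.restrict_apply (UU_meas f I0 l), inter_eq_self_of_subset_right (UU_mono f I0 hll')] at main
  exact main

end

lemma pow_rpow_comm (a : ℝ≥0∞) (k : ℕ) (e : ℝ) : (a ^ k) ^ e = (a ^ e) ^ k := by
  rw [← ENNReal.rpow_natCast, ← ENNReal.rpow_natCast, ← ENNReal.rpow_mul, ← ENNReal.rpow_mul, mul_comm]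

lemma exists_exp (a : ℝ) (ha : 1 < a) (θ : ℝ≥0∞) (hθ : θ < 1) :
    ∃ e : ℝ, 0 < e ∧ (ENNReal.ofReal a) ^ e * θ < 1 := by
  have hθt : θ ≠ ⊤ := ne_top_of_lt hθ
  have hc : Filter.Tendsto (fun e : ℝ => a ^ e * θ.toReal) (nhdsWithin 0 (Ioi 0)) (nhds (a ^ (0:ℝ) * θ.toReal)) := by
    apply Filter.Tendsto.mono_left _ nhdsWithin_le_nhds
    apply Filter.Tendsto.mul_const
    exact (Real.continuousAt_const_rpow (by linarith)).tendsto
  have h1 : a ^ (0:ℝ) * θ.toReal < 1 := by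
    rw [Real.rpow_zero, one_mul]
    have := (ENNReal.toReal_lt_toReal hθt one_ne_top).2 hθ
    simpa using this
  obtain ⟨e, he1, he2⟩ := ((hc.eventually_lt_const h1).and self_mem_nhdsWithin).exists
  refine ⟨e, he2, ?_⟩
  rw [ENNReal.ofReal_rpow_of_pos (by linarith), ← ENNReal.ofReal_toReal hθt, ← ENNReal.ofReal_mul (by positivity),
    ENNReal.ofReal_lt_one]
  exact he1

theorem revHolder {n : ℕ} {f : (Fin n → ℝ) → ℝ≥0∞} {C : ℝ≥0∞} (hCt : C ≠ ⊤) (h : LI f)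
    (hm : Measurable f) (hA : DA1 f C) (hft : ∀ x, f x ≠ ⊤) (hf0 : ∀ᵐ x, f x ≠ 0) :
    ∃ s : ℝ, 1 < s ∧ ∃ C1 : ℝ≥0∞, C1 < ⊤ ∧ ∀ I : Idx n, av (fun x => f x ^ s) I ≤ C1 * av f I ^ s := by
  wlog hC : 1 ≤ C generalizing C
  · refine this (C := C + 1) (by simp [hCt]) (fun I => ?_) (by simp)
    filter_upwards [hA I] with x hx
    refine hx.trans ?_
    gcongr; simp
  set a : ℝ≥0∞ := 2 * 2 ^ n with ha
  have haR : a = ENNReal.ofReal (2 * 2 ^ n) := by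
    rw [ENNReal.ofReal_mul (by norm_num), ENNReal.ofReal_pow (by norm_num)]; simp [ha]
  have h2n : (1:ℝ) ≤ 2 ^ n := one_le_pow₀ (by norm_num)
  have ha1 : 1 < a := by
    rw [haR, ENNReal.one_lt_ofReal]; linarith
  have hat : a ≠ ⊤ := by rw [haR]; exact ofReal_ne_top
  set θ : ℝ≥0∞ := 1 - (2 * C)⁻¹ with hθ
  have hθ1 : θ < 1 := by
    apply ENNReal.sub_lt_self (by simp) (by simp)
    exact ENNReal.inv_ne_zero.2 (mul_ne_top (by simp) hCt)
  obtain ⟨e, he0, he1⟩ := exists_exp (2 * 2 ^ n) (by linarith) θ hθ1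
  rw [← haR] at he1
  refine ⟨1 + e, by linarith, 1 + a ^ e * (1 - a ^ e * θ)⁻¹, ?_, fun I0 => ?_⟩
  · apply ENNReal.add_lt_top.2 ⟨by simp, ENNReal.mul_lt_top (rpow_lt_top_of_nonneg he0.le hat) ?_⟩
    rw [ENNReal.inv_lt_top, tsub_pos_iff_lt]
    exact he1
  set N := volume.withDensity f with hN
  have hND : ∀ J : Idx n, N (D J) = av f J * volume (D J) := fun J => by
    rw [hN, withDensity_apply _ (D_meas J), av_mul]
  set l0 := av f I0 with hl0
  have hl0t : l0 ≠ ⊤ := mul_ne_top (ENNReal.inv_ne_top.2 (vol_D_ne_zero _)) (h.D I0).ne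
  have hl00 : l0 ≠ 0 := by
    rw [hl0, av]
    refine mul_ne_zero (ENNReal.inv_ne_zero.2 (vol_D_ne_top _)) ?_
    intro hz
    rw [lintegral_eq_zero_iff hm] at hz
    have : ∀ᵐ x ∂(volume.restrict (D I0)), False := by
      filter_upwards [hz, ae_restrict_of_ae hf0] with x h1 h2 using h2 h1
    rw [Filter.eventually_false_iff_eq_bot, ae_eq_bot, Measure.restrict_eq_zero] at this
    exact vol_D_ne_zero _ this
  have hdec : ∀ k : ℕ, N (UU f I0 (a ^ k * l0)) ≤ θ ^ k * N (D I0) := by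
    intro k
    induction k with
    | zero =>
      simp only [pow_zero, one_mul]
      exact measure_mono (iUnion₂_subset fun J hJ => hJ.2.1)
    | succ k ih =>
      have h1k : (1:ℝ≥0∞) ≤ a ^ k := one_le_pow₀ ha1.le
      have := UU_step f I0 hC hCt h hm hA (l := a ^ k * l0) (by
        calc l0 = 1 * l0 := by ring
          _ ≤ _ := by gcongr) (mul_ne_zero (by positivity) hl00) (mul_ne_top (pow_ne_top hat) hl0t)
      rw [← ha, ← hθ, ← hN] at this
      calc N (UU f I0 (a ^ (k+1) * l0)) = N (UU f I0 (a * (a ^ k * l0))) := by congr 2; ring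
        _ ≤ θ * N (UU f I0 (a ^ k * l0)) := this
        _ ≤ θ * (θ ^ k * N (D I0)) := by gcongr
        _ = _ := by ring
  have hpt : ∀ᵐ x ∂(volume.restrict (D I0)), f x ^ (1 + e) ≤ 
      l0 ^ e * f x + ∑' k : ℕ, (a ^ (k+1) * l0) ^ e * (UU f I0 (a ^ k * l0)).indicator f x := by
    filter_upwards [ae_restrict_of_ae (leb h hm hft), ae_restrict_mem (D_meas I0)] with x hx hxI
    rw [ENNReal.rpow_add_of_nonneg _ _ (by norm_num) he0.le, ENNReal.rpow_one]
    rcases le_or_gt (f x) l0 with hle | hgt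
    · calc f x * f x ^ e ≤ f x * l0 ^ e := by gcongr
        _ ≤ _ := by rw [mul_comm]; exact le_self_add
    · have hex : ∃ k : ℕ, f x ≤ a ^ (k+1) * l0 := by
        obtain ⟨k, hk⟩ := ENNReal.exists_nat_mul_gt hl00 (hft x)
        refine ⟨k, hk.le.trans ?_⟩
        gcongr
        have : k < 2 ^ k := Nat.lt_two_pow_self
        calc (k:ℝ≥0∞) ≤ 2 ^ k := by exact_mod_cast this.le
          _ ≤ a ^ k := by
            gcongr; rw [ha]
            calc (2:ℝ≥0∞) = 2 * 1 := by ring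
              _ ≤ _ := by gcongr; exact one_le_pow₀ (by norm_num)
          _ ≤ a ^ (k+1) := pow_le_pow_right₀ ha1.le (by omega)
      classical
      set k := Nat.find hex with hk
      have hk1 : f x ≤ a ^ (k+1) * l0 := Nat.find_spec hex
      have hk2 : a ^ k * l0 < f x := by
        rcases Nat.eq_zero_or_pos k with h0 | h0
        · rw [h0]; simpa using hgt
        · have := Nat.find_min hex (m := k - 1) (by omega)
          push Not at this
          rwa [Nat.sub_add_cancel h0] at this
      have hxU : x ∈ UU f I0 (a ^ k * l0) := by
        obtain ⟨j, hj1, hj2⟩ := hx _ hk2 I0.1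
        simp only [UU, mem_iUnion, exists_prop]
        exact ⟨cell j x, ⟨hj1, D_nested ⟨x, mem_cell j x, hxI⟩ hj1, hj2⟩, mem_cell j x⟩
      calc f x * f x ^ e ≤ f x * (a ^ (k+1) * l0) ^ e := by gcongr
        _ = (a ^ (k+1) * l0) ^ e * (UU f I0 (a ^ k * l0)).indicator f x := by
          rw [indicator_of_mem hxU, mul_comm]
        _ ≤ ∑' k : ℕ, (a ^ (k+1) * l0) ^ e * (UU f I0 (a ^ k * l0)).indicator f x := 
          ENNReal.le_tsum (f := fun k : ℕ => (a ^ (k+1) * l0) ^ e * (UU f I0 (a ^ k * l0)).indicator f x) k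
        _ ≤ _ := le_add_self
  have hIntg : ∫⁻ x in D I0, f x ^ (1 + e) ≤ (1 + a ^ e * (1 - a ^ e * θ)⁻¹) * (l0 ^ e * N (D I0)) := by
    refine (lintegral_mono_ae hpt).trans ?_
    rw [lintegral_add_left (hm.const_mul _), lintegral_const_mul _ hm, lintegral_tsum
      (fun k => ((hm.indicator (UU_meas f I0 _)).const_mul _).aemeasurable), add_mul, one_mul,
      hN, withDensity_apply _ (D_meas I0)]
    gcongr
    rw [← withDensity_apply _ (D_meas I0), ← hN, ← ENNReal.tsum_geometric, ← ENNReal.tsum_mul_left, ← ENNReal.tsum_mul_right]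
    apply ENNReal.tsum_le_tsum
    intro k
    rw [lintegral_const_mul _ (hm.indicator (UU_meas f I0 _))]
    calc (a ^ (k+1) * l0) ^ e * ∫⁻ x in D I0, (UU f I0 (a ^ k * l0)).indicator f x 
        ≤ (a ^ (k+1) * l0) ^ e * N (UU f I0 (a ^ k * l0)) := by
          gcongr
          rw [hN, withDensity_apply _ (UU_meas f I0 _), ← lintegral_indicator (UU_meas f I0 _)]
          exact setLIntegral_le_lintegral _ _
      _ ≤ (a ^ (k+1) * l0) ^ e * (θ ^ k * N (D I0)) := by gcongr; exact hdec k
      _ = _ := by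
        rw [ENNReal.mul_rpow_of_nonneg _ _ he0.le, pow_rpow_comm, mul_pow (a ^ e) θ, pow_succ]
        ring
  rw [av]
  calc _ ≤ (volume (D I0))⁻¹ * ((1 + a ^ e * (1 - a ^ e * θ)⁻¹) * (l0 ^ e * N (D I0))) := by gcongr
    _ = (1 + a ^ e * (1 - a ^ e * θ)⁻¹) * (l0 ^ e * l0) * ((volume (D I0))⁻¹ * volume (D I0)) := by
      rw [hND, ← hl0]; ring
    _ = _ := by
      rw [ENNReal.inv_mul_cancel (vol_D_ne_zero I0) (vol_D_ne_top I0), mul_one, add_comm 1 e,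
        ENNReal.rpow_add_of_nonneg _ _ he0.le (by norm_num), ENNReal.rpow_one]

end Ext

end

section
namespace Ext

/-! ## Averages, Hölder -/

def avm {n : ℕ} (I : Idx n) : Measure (Fin n → ℝ) := (volume (D I))⁻¹ • volume.restrict (D I)

lemma av_eq {n : ℕ} (f : (Fin n → ℝ) → ℝ≥0∞) (I : Idx n) : av f I = ∫⁻ x, f x ∂(avm I) := by
  rw [avm, lintegral_smul_measure, av, smul_eq_mul]

lemma avm_univ {n : ℕ} (I : Idx n) : avm I univ = 1 := by
  rw [avm, Measure.smul_apply, Measure.restrict_apply_univ, smul_eq_mul,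
    ENNReal.inv_mul_cancel (vol_D_ne_zero I) (vol_D_ne_top I)]

lemma avm_ae {n : ℕ} {I : Idx n} {p : (Fin n → ℝ) → Prop} (h : ∀ᵐ x ∂(volume.restrict (D I)), p x) :
    ∀ᵐ x ∂(avm I), p x := Measure.ae_smul_measure h _

lemma av_mono_ae {n : ℕ} {f g : (Fin n → ℝ) → ℝ≥0∞} {I : Idx n}
    (h : ∀ᵐ x, x ∈ D I → f x ≤ g x) : av f I ≤ av g I := by
  rw [av_eq, av_eq]
  exact lintegral_mono_ae (avm_ae ((ae_restrict_iff' (D_meas I)).2 h))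

lemma av_const {n : ℕ} (c : ℝ≥0∞) (I : Idx n) : av (fun _ => c) I = c := by
  rw [av_eq, lintegral_const, avm_univ, mul_one]

lemma av_const_mul {n : ℕ} (c : ℝ≥0∞) {f : (Fin n → ℝ) → ℝ≥0∞} (hf : Measurable f) (I : Idx n) :
    av (fun x => c * f x) I = c * av f I := by
  rw [av_eq, av_eq, lintegral_const_mul _ hf]

lemma av_add {n : ℕ} {f : (Fin n → ℝ) → ℝ≥0∞} (hf : Measurable f) (g : (Fin n → ℝ) → ℝ≥0∞) (I : Idx n) :
    av (fun x => f x + g x) I = av f I + av g I := by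
  simp only [av_eq]; rw [lintegral_add_left hf]

lemma av_lt_top {n : ℕ} {f : (Fin n → ℝ) → ℝ≥0∞} {I : Idx n} (h : ∫⁻ x in D I, f x < ⊤) : av f I < ⊤ :=
  ENNReal.mul_lt_top (ENNReal.inv_lt_top.2 (pos_iff_ne_zero.2 (vol_D_ne_zero _))) h

lemma av_ne_zero {n : ℕ} {f : (Fin n → ℝ) → ℝ≥0∞} (hm : Measurable f) (hf : ∀ᵐ x, f x ≠ 0) (I : Idx n) :
    av f I ≠ 0 := by
  rw [av]
  refine mul_ne_zero (ENNReal.inv_ne_zero.2 (vol_D_ne_top _)) ?_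
  intro hz
  rw [lintegral_eq_zero_iff hm] at hz
  have : ∀ᵐ x ∂(volume.restrict (D I)), False := by
    filter_upwards [hz, ae_restrict_of_ae hf] with x h1 h2 using h2 h1
  rw [Filter.eventually_false_iff_eq_bot, ae_eq_bot, Measure.restrict_eq_zero] at this
  exact vol_D_ne_zero _ this

lemma av_holder {n : ℕ} {f g h : (Fin n → ℝ) → ℝ≥0∞} (hf : Measurable f) (hg : Measurable g)
    (hh : Measurable h) {a b c : ℝ} (ha : 0 ≤ a) (hb : 0 ≤ b) (hc : 0 ≤ c) (habc : a + b + c ≤ 1)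
    (I : Idx n) :
    av (fun x => f x ^ a * g x ^ b * h x ^ c) I ≤ av f I ^ a * av g I ^ b * av h I ^ c := by
  simp only [av_eq]
  have := ENNReal.lintegral_prod_norm_pow_le (μ := avm I) (Finset.univ : Finset (Fin 4))
    (f := ![f, g, h, fun _ => 1]) (p := ![a, b, c, 1 - a - b - c]) (by
      intro i _; fin_cases i
      · exact hf.aemeasurable
      · exact hg.aemeasurable
      · exact hh.aemeasurable
      · exact measurable_const.aemeasurable) (by
      simp [Fin.sum_univ_four]) (by
      intro i _; fin_cases i <;> simp <;> linarith)
  simpa [Fin.prod_univ_four, avm_univ] using this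

lemma av_jensen {n : ℕ} {f : (Fin n → ℝ) → ℝ≥0∞} (hf : Measurable f) {a : ℝ} (ha : 0 ≤ a) (ha1 : a ≤ 1)
    (I : Idx n) : av (fun x => f x ^ a) I ≤ av f I ^ a := by
  have := av_holder hf hf hf ha (le_refl 0) (le_refl 0) (by linarith) I
  simpa using this

/-! ## maximal function over finite families -/

def MF {n : ℕ} (S : Finset (Idx n)) (c : Idx n → ℝ≥0∞) (x : Fin n → ℝ) : ℝ≥0∞ :=
  S.sup (fun I => (D I).indicator (fun _ => c I) x)

lemma MF_meas {n : ℕ} (S : Finset (Idx n)) (c : Idx n → ℝ≥0∞) : Measurable (MF S c) := by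
  unfold MF
  classical
  induction S using Finset.induction with
  | empty => simp
  | insert I S hI ih =>
    simp only [Finset.sup_insert]
    exact (measurable_const.indicator (D_meas I)).sup ih

lemma lt_MF {n : ℕ} {S : Finset (Idx n)} {c : Idx n → ℝ≥0∞} {x : Fin n → ℝ} {l : ℝ≥0∞} :
    l < MF S c x ↔ ∃ I ∈ S, x ∈ D I ∧ l < c I := by
  rw [MF, Finset.lt_sup_iff]
  refine exists_congr fun I => and_congr_right fun _ => ?_
  by_cases h : x ∈ D I <;> simp [h]

lemma le_MF {n : ℕ} {S : Finset (Idx n)} {c : Idx n → ℝ≥0∞} {x : Fin n → ℝ} {I : Idx n}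
    (hI : I ∈ S) (hx : x ∈ D I) : c I ≤ MF S c x := by
  by_contra h
  push Not at h
  exact lt_irrefl _ (lt_MF.2 ⟨I, hI, hx, h⟩ |>.trans_le le_rfl)

lemma MF_le {n : ℕ} {S : Finset (Idx n)} {c : Idx n → ℝ≥0∞} {x : Fin n → ℝ} {l : ℝ≥0∞}
    (h : ∀ I ∈ S, x ∈ D I → c I ≤ l) : MF S c x ≤ l := by
  by_contra hc
  push Not at hc
  obtain ⟨I, h1, h2, h3⟩ := lt_MF.1 hc
  exact absurd (h I h1 h2) (not_le.2 h3)

lemma fin_bdd {n : ℕ} (S : Finset (Idx n)) : ∃ B : ℤ, ∀ I ∈ S, I.1 ≤ B := by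
  obtain ⟨B, hB⟩ := (S.image Prod.fst).bddAbove
  exact ⟨B, fun I hI => hB (by simp only [Finset.coe_image]; exact mem_image_of_mem _ hI)⟩

lemma cover_MF {n : ℕ} (S : Finset (Idx n)) (c : Idx n → ℝ≥0∞) (l : ℝ≥0∞)
    (σ τ : Measure (Fin n → ℝ)) (h : ∀ I ∈ S, l < c I → σ (D I) ≤ τ (D I)) :
    σ {x | l < MF S c x} ≤ τ {x | l < MF S c x} := by
  obtain ⟨B, hB⟩ := fin_bdd S
  have : {x | l < MF S c x} = ⋃ I ∈ {I | I ∈ S ∧ l < c I}, D I := by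
    ext x
    simp only [mem_ofPred_eq, lt_MF, mem_iUnion, exists_prop]
    exact ⟨fun ⟨I, a, b, c⟩ => ⟨I, ⟨a, c⟩, b⟩, fun ⟨I, ⟨a, c⟩, b⟩ => ⟨I, a, b, c⟩⟩
  rw [this]
  exact cover _ B (fun I hI => hB I hI.1) σ τ (fun I hI => h I hI.1.1 hI.1.2)

lemma two_sided {t : ℤ → ℝ≥0∞} {a b : ℝ} (h1 : ∀ k ≤ 0, t k ≤ ((2:ℝ≥0∞) ^ k) ^ a)
    (h2 : ∀ k, 0 ≤ k → t k ≤ ((2:ℝ≥0∞) ^ k) ^ (-b)) : ∑' k, t k ≤ gc a + gc b := by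
  have e1 := tsum_geo_le (p := a) 0
  have e2 := tsum_geo_le (p := b) 0
  simp only [zpow_zero, ENNReal.one_rpow, mul_one] at e1 e2
  rw [← (Equiv.neg ℤ).tsum_eq] at e2
  calc ∑' k, t k ≤ ∑' k : ℤ, ((if k ≤ 0 then ((2:ℝ≥0∞) ^ k) ^ a else 0) + 
        (if (Equiv.neg ℤ) k ≤ 0 then ((2:ℝ≥0∞) ^ ((Equiv.neg ℤ) k)) ^ b else 0)) := by
        apply ENNReal.tsum_le_tsum
        intro k
        rcases le_total k 0 with hk | hk
        · rw [if_pos hk]; exact (h1 k hk).trans le_self_add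
        · have : (Equiv.neg ℤ) k ≤ 0 := by simpa using hk
          rw [if_pos this]
          refine (h2 k hk).trans (le_of_eq_of_le ?_ le_add_self)
          simp only [Equiv.neg_apply, ← ENNReal.rpow_intCast, ← ENNReal.rpow_mul]
          congr 1; push_cast; ring
    _ ≤ _ := by rw [ENNReal.tsum_add]; gcongr

/-- Kolmogorov's inequality, local dyadic form. -/
lemma kolm {n : ℕ} {φ : (Fin n → ℝ) → ℝ≥0∞} {I : Idx n} (S : Finset (Idx n))
    (hS : ∀ J ∈ S, D J ⊆ D I) (hfin : av φ I ≠ ⊤) {δ : ℝ} (hδ0 : 0 < δ) :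
    av (fun x => MF S (av φ) x ^ δ) I ≤ 2 ^ δ * (gc δ + gc (1 - δ)) * av φ I ^ δ := by
  rcases eq_or_ne (av φ I) 0 with h0 | h0
  · have : ∀ x, MF S (av φ) x = 0 := by
      intro x
      rw [← le_zero_iff]
      apply MF_le
      intro J hJ _
      have h1 := av_mul φ I
      rw [h0, zero_mul] at h1
      have h2 : ∫⁻ x in D J, φ x ≤ 0 := h1 ▸ lintegral_mono_set (hS J hJ)
      rw [av, le_zero_iff.1 h2, mul_zero]
    simp only [this, ENNReal.zero_rpow_of_pos hδ0, av_const]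
    exact zero_le
  set l := av φ I with hl
  have hpt : ∀ x, MF S (av φ) x ^ δ ≤ l ^ δ * (2 ^ δ * lc δ (MF S (av φ) x / l)) := by
    intro x
    calc MF S (av φ) x ^ δ = (l * (MF S (av φ) x / l)) ^ δ := by rw [ENNReal.mul_div_cancel h0 hfin]
      _ = l ^ δ * (MF S (av φ) x / l) ^ δ := ENNReal.mul_rpow_of_nonneg _ _ hδ0.le
      _ ≤ _ := by gcongr; exact le_lc hδ0 _
  have hmm : Measurable fun x => MF S (av φ) x / l := (MF_meas _ _).div_const _
  have hlvl : ∀ k : ℤ, avm I {x | (2:ℝ≥0∞) ^ k < MF S (av φ) x / l} ≤ ((2:ℝ≥0∞) ^ k)⁻¹ := by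
    intro k
    have he : {x | (2:ℝ≥0∞) ^ k < MF S (av φ) x / l} = {x | 2 ^ k * l < MF S (av φ) x} := by
      ext x
      simp only [mem_ofPred_eq]
      rw [ENNReal.lt_div_iff_mul_lt (Or.inl h0) (Or.inl hfin)]
    have hc := cover_MF S (av φ) (2 ^ k * l) ((volume (D I))⁻¹ • volume) 
      (((2 ^ k * l)⁻¹ * (volume (D I))⁻¹) • (volume.restrict (D I)).withDensity φ) (by
        intro J hJ hlt
        have h2l0 : 2 ^ k * l ≠ 0 := mul_ne_zero (two_zpow_ne_zero k) h0
        have h2lt : 2 ^ k * l ≠ ⊤ := mul_ne_top (two_zpow_ne_top k) hfin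
        rw [Measure.smul_apply, Measure.smul_apply, withDensity_apply _ (D_meas J),
          Measure.restrict_restrict (D_meas J), inter_eq_self_of_subset_left (hS J hJ), av_mul]
        simp only [smul_eq_mul]
        calc _ = (2 ^ k * l)⁻¹ * (2 ^ k * l) * (volume (D I))⁻¹ * volume (D J) := by
              rw [ENNReal.inv_mul_cancel h2l0 h2lt, one_mul]
          _ ≤ (2 ^ k * l)⁻¹ * av φ J * (volume (D I))⁻¹ * volume (D J) := by gcongr
          _ = _ := by ring)
    rw [he]
    calc avm I {x | 2 ^ k * l < MF S (av φ) x} ≤ ((volume (D I))⁻¹ • volume) {x | 2 ^ k * l < MF S (av φ) x} := by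
          rw [avm, Measure.smul_apply, Measure.smul_apply]
          simp only [smul_eq_mul]
          gcongr
          exact Measure.restrict_le_self
      _ ≤ _ := hc
      _ ≤ (((2 ^ k * l)⁻¹ * (volume (D I))⁻¹) • (volume.restrict (D I)).withDensity φ) univ := measure_mono (subset_univ _)
      _ = (2 ^ k * l)⁻¹ * l := by
        rw [Measure.smul_apply, withDensity_apply _ MeasurableSet.univ, Measure.restrict_univ, hl, av, smul_eq_mul, mul_assoc]
      _ = _ := by
        rw [ENNReal.mul_inv (Or.inr hfin) (Or.inr h0), mul_assoc, ENNReal.inv_mul_cancel h0 hfin, mul_one]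
  calc av (fun x => MF S (av φ) x ^ δ) I ≤ av (fun x => (l ^ δ * 2 ^ δ) * lc δ (MF S (av φ) x / l)) I := by
        apply av_mono_ae
        filter_upwards with x _
        rw [mul_assoc]; exact hpt x
    _ = (l ^ δ * 2 ^ δ) * ∑' k : ℤ, ((2:ℝ≥0∞) ^ k) ^ δ * avm I {x | (2:ℝ≥0∞) ^ k < MF S (av φ) x / l} := by
        have hlm : Measurable (fun x => lc δ (MF S (av φ) x / l)) := (lc_meas δ).comp hmm
        rw [av_const_mul _ hlm, av_eq, lintegral_lc _ _ hmm]
    _ ≤ (l ^ δ * 2 ^ δ) * (gc δ + gc (1 - δ)) := by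
        gcongr
        apply two_sided
        · intro k _
          calc _ ≤ ((2:ℝ≥0∞) ^ k) ^ δ * avm I univ := by gcongr; exact subset_univ _
            _ = _ := by rw [avm_univ, mul_one]
        · intro k _
          calc _ ≤ ((2:ℝ≥0∞) ^ k) ^ δ * ((2:ℝ≥0∞) ^ k)⁻¹ := by gcongr; exact hlvl k
            _ = _ := by
              rw [← ENNReal.rpow_neg_one, ← ENNReal.rpow_add _ _ (two_zpow_ne_zero k) (two_zpow_ne_top k)]
              congr 1; ring
    _ = _ := by ring

end Ext

end

section
namespace Ext

structure WD {n : ℕ} (ν V : (Fin n → ℝ) → ℝ≥0∞) (C : ℝ≥0∞) (s0 κ : ℝ) : Prop where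
  mν : Measurable ν
  mV : Measurable V
  tν : ∀ x, ν x ≠ ⊤
  tV : ∀ x, V x ≠ ⊤
  zν : ∀ᵐ x, ν x ≠ 0
  zV : ∀ᵐ x, V x ≠ 0
  lν : LI ν
  lV : LI V
  a1 : DA1 ν C
  hs0 : 1 < s0
  rh : ∀ I, av (fun x => ν x ^ s0) I ≤ C * av ν I ^ s0
  hκ : 0 < κ
  ap : ∀ I, av V I * av (fun x => V x ^ (-κ)) I ^ (1/κ) ≤ C
  hC : C ≠ ⊤

lemma WD.a1' {n : ℕ} {ν V : (Fin n → ℝ) → ℝ≥0∞} {C : ℝ≥0∞} {s0 κ : ℝ} (h : WD ν V C s0 κ) (I : Idx n) :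
    ∀ᵐ x, x ∈ D I → av ν I ≤ C * ν x := (ae_restrict_iff' (D_meas I)).1 (h.a1 I)

lemma rpow_cancel {x : ℝ≥0∞} (h0 : x ≠ 0) (ht : x ≠ ⊤) (a : ℝ) : x ^ a * x ^ (-a) = 1 := by
  rw [← ENNReal.rpow_add _ _ h0 ht]; simp

lemma weakL {n : ℕ} {ν V : (Fin n → ℝ) → ℝ≥0∞} {C : ℝ≥0∞} {s0 κ : ℝ} (h : WD ν V C s0 κ)
    {P P1 : ℝ} (hP : 1 < P) (hP1 : (P - 1) / s0 + 1 / κ + 1 ≤ P1) :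
    ∃ C' : ℝ≥0∞, C' < ⊤ ∧ ∀ φ : (Fin n → ℝ) → ℝ≥0∞, Measurable φ → ∀ I : Idx n,
      av φ I ^ P1 * av (fun x => ν x ^ (1 - P) * V x) I ≤
        C' * av (fun x => φ x ^ P1 * (ν x ^ (1 - P) * V x)) I := by
  have hs0 := h.hs0
  have hκ := h.hκ
  have hmν := h.mν
  have hmV := h.mV
  have hb0 : 0 < (P - 1) / s0 := div_pos (by linarith) (by linarith)
  have hc0 : 0 < 1 / κ := by positivity
  have hP1p : 0 < P1 := by linarith
  have fC : ∀ a : ℝ, 0 ≤ a → C ^ a ≠ ⊤ := fun a ha => ENNReal.rpow_ne_top_of_nonneg ha h.hC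
  refine ⟨C ^ ((P-1)/s0) * C ^ (P - 1) * C, ?_, fun φ hφ I => ?_⟩
  · exact (ENNReal.mul_ne_top (ENNReal.mul_ne_top (fC _ hb0.le) (fC _ (by linarith))) h.hC).lt_top
  set nI := av ν I with hnI
  have hn0 : nI ≠ 0 := av_ne_zero hmν h.zν I
  have hnt : nI ≠ ⊤ := (av_lt_top (h.lν.D I)).ne
  have e1 : av φ I ≤ av (fun x => φ x ^ P1 * (ν x ^ (1 - P) * V x)) I ^ (1/P1) *
      av (fun x => ν x ^ s0) I ^ ((P-1)/s0/P1) * av (fun x => V x ^ (-κ)) I ^ (1/κ/P1) := by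
    refine le_trans (av_mono_ae ?_) (av_holder (by fun_prop) (by fun_prop) (by fun_prop) (by positivity) 
      (by positivity) (by positivity) ?_ I)
    · filter_upwards [h.zν, h.zV] with x h1 h2 _
      have t1 := h.tν x
      have t2 := h.tV x
      rw [ENNReal.mul_rpow_of_nonneg _ _ (by positivity), ENNReal.mul_rpow_of_nonneg _ _ (by positivity),
        ← ENNReal.rpow_mul, ← ENNReal.rpow_mul, ← ENNReal.rpow_mul, ← ENNReal.rpow_mul]
      have a1 : P1 * (1/P1) = 1 := by field_simp
      have a2 : s0 * ((P-1)/s0/P1) = -((1-P) * (1/P1)) := by field_simp; ring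
      have a3 : (-κ) * (1/κ/P1) = -(1/P1) := by field_simp
      rw [a1, a2, a3, ENNReal.rpow_one]
      apply le_of_eq
      calc φ x = φ x * (ν x ^ ((1-P) * (1/P1)) * ν x ^ (-((1-P) * (1/P1)))) * (V x ^ (1/P1) * V x ^ (-(1/P1))) := by
            rw [rpow_cancel h1 t1, rpow_cancel h2 t2, mul_one, mul_one]
        _ = _ := by ring
    · have : 1 / P1 + (P - 1) / s0 / P1 + 1 / κ / P1 = ((P - 1) / s0 + 1 / κ + 1) / P1 := by ring
      rw [this, div_le_one hP1p]; exact hP1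
  have e2 : av φ I ^ P1 ≤ av (fun x => φ x ^ P1 * (ν x ^ (1 - P) * V x)) I *
      (C ^ ((P-1)/s0) * nI ^ (P - 1)) * av (fun x => V x ^ (-κ)) I ^ (1/κ) := by
    calc _ ≤ _ := ENNReal.rpow_le_rpow e1 hP1p.le
      _ = av (fun x => φ x ^ P1 * (ν x ^ (1 - P) * V x)) I * av (fun x => ν x ^ s0) I ^ ((P-1)/s0) * av (fun x => V x ^ (-κ)) I ^ (1/κ) := by
        rw [ENNReal.mul_rpow_of_nonneg _ _ hP1p.le, ENNReal.mul_rpow_of_nonneg _ _ hP1p.le,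
          ← ENNReal.rpow_mul, ← ENNReal.rpow_mul, ← ENNReal.rpow_mul, div_mul_cancel₀ _ hP1p.ne', div_mul_cancel₀ _ hP1p.ne',
          div_mul_cancel₀ _ hP1p.ne', ENNReal.rpow_one]
      _ ≤ _ := by
        gcongr
        calc _ ≤ (C * nI ^ s0) ^ ((P-1)/s0) := ENNReal.rpow_le_rpow (h.rh I) hb0.le
          _ = _ := by
            rw [ENNReal.mul_rpow_of_nonneg _ _ hb0.le, ← ENNReal.rpow_mul, mul_div_cancel₀ _ (by linarith : s0 ≠ 0)]
  have e3 : nI ^ (P - 1) * av (fun x => ν x ^ (1 - P) * V x) I ≤ C ^ (P - 1) * av V I := by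
    rw [← av_const_mul _ (by fun_prop), ← av_const_mul _ hmV]
    apply av_mono_ae
    filter_upwards [h.zν, h.a1' I] with x h1 h2 hx
    have := h2 hx
    rw [← mul_assoc]
    gcongr
    calc nI ^ (P-1) * ν x ^ (1 - P) ≤ (C * ν x) ^ (P - 1) * ν x ^ (1 - P) := by
          gcongr
      _ = C ^ (P-1) * (ν x ^ (P - 1) * ν x ^ (-(P-1))) := by
          rw [ENNReal.mul_rpow_of_nonneg _ _ (by linarith), mul_assoc, neg_sub]
      _ = _ := by rw [rpow_cancel h1 (h.tν x), mul_one]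
  set A := av (fun x => φ x ^ P1 * (ν x ^ (1 - P) * V x)) I
  set B := av (fun x => V x ^ (-κ)) I ^ (1/κ) with hB
  set Sg := av (fun x => ν x ^ (1 - P) * V x) I
  calc av φ I ^ P1 * Sg ≤ A * (C ^ ((P-1)/s0) * nI ^ (P - 1)) * B * Sg := by gcongr
    _ = A * C ^ ((P-1)/s0) * B * (nI ^ (P - 1) * Sg) := by ring
    _ ≤ A * C ^ ((P-1)/s0) * B * (C ^ (P - 1) * av V I) := by gcongr
    _ = A * C ^ ((P-1)/s0) * C ^ (P-1) * (av V I * B) := by ring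
    _ ≤ A * C ^ ((P-1)/s0) * C ^ (P-1) * C := by gcongr; exact h.ap I
    _ = _ := by ring

lemma lc_mul_le {p r : ℝ} (hp : 0 < p) (hr : 0 ≤ r) (x : ℝ≥0∞) : lc p x * x ^ r ≤ gc p * x ^ (p + r) := by
  rw [ENNReal.rpow_add_of_nonneg _ _ hp.le hr, ← mul_assoc]
  gcongr
  exact lc_le hp x

lemma strongL {n : ℕ} {ν V : (Fin n → ℝ) → ℝ≥0∞} {C : ℝ≥0∞} {s0 κ : ℝ} (h : WD ν V C s0 κ)
    {P P1 R : ℝ} (hP : 1 < P) (hP1 : (P - 1) / s0 + 1 / κ + 1 ≤ P1) (hR : P1 < R) :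
    ∃ C' : ℝ≥0∞, C' < ⊤ ∧ ∀ φ : (Fin n → ℝ) → ℝ≥0∞, Measurable φ → ∀ S : Finset (Idx n),
      ∫⁻ x, MF S (av φ) x ^ R * (ν x ^ (1 - P) * V x) ≤
        C' * ∫⁻ x, φ x ^ R * (ν x ^ (1 - P) * V x) := by
  obtain ⟨C', hC', hw⟩ := weakL h hP hP1
  have hb0 : 0 < (P - 1) / s0 := div_pos (by linarith) (by linarith [h.hs0])
  have hc0 : 0 < 1 / κ := by have := h.hκ; positivity
  have hP1p : 0 < P1 := by linarith
  have hR0 : 0 < R := by linarith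
  have hmν := h.mν
  have hmV := h.mV
  refine ⟨2 ^ R * (C' * 2 ^ R * gc (R - P1)), ?_, fun φ hφ S => ?_⟩
  · have h2 : (2:ℝ≥0∞) ^ R < ⊤ := ENNReal.rpow_lt_top_of_nonneg hR0.le (by norm_num)
    exact ENNReal.mul_lt_top h2 (ENNReal.mul_lt_top (ENNReal.mul_lt_top hC' h2) (gc_lt_top (by linarith)))
  set σ : (Fin n → ℝ) → ℝ≥0∞ := fun x => ν x ^ (1 - P) * V x with hσ
  have hσm : Measurable σ := by fun_prop
  set τ := volume.withDensity σ with hτ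
  have hMm := MF_meas S (av φ)
  have hconv : ∀ g : (Fin n → ℝ) → ℝ≥0∞, Measurable g → ∫⁻ x, g x * σ x = ∫⁻ x, g x ∂τ := by
    intro g hg
    rw [hτ, lintegral_withDensity_eq_lintegral_mul _ hσm hg]
    simp [mul_comm]
  have hlev : ∀ j : ℤ, ((2:ℝ≥0∞) ^ j) ^ P1 * τ {x | (2:ℝ≥0∞) ^ (j+1) < MF S (av φ) x} ≤
      C' * ∫⁻ x, (if (2:ℝ≥0∞) ^ j < φ x then φ x ^ P1 else 0) ∂τ := by
    intro j
    set l := (2:ℝ≥0∞) ^ j with hl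
    have hl2 : (2:ℝ≥0∞) ^ (j+1) = l + l := by
      rw [ENNReal.zpow_add (by norm_num) (by norm_num), zpow_one, mul_two]
    set ψ : (Fin n → ℝ) → ℝ≥0∞ := fun x => if l < φ x then φ x else 0 with hψ
    have hms : MeasurableSet {x | l < φ x} := measurableSet_lt measurable_const hφ
    have hψm : Measurable ψ := Measurable.ite hms hφ measurable_const
    have hψP : ∀ x, ψ x ^ P1 = if l < φ x then φ x ^ P1 else 0 := by
      intro x
      simp only [hψ]; split_ifs
      · rfl
      · exact ENNReal.zero_rpow_of_pos hP1p
    simp only [← hψP]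
    have := cover_MF S (av φ) (2 ^ (j+1)) (l ^ P1 • τ) (C' • τ.withDensity (fun x => ψ x ^ P1)) ?_
    · refine this.trans ?_
      rw [Measure.smul_apply, smul_eq_mul]
      gcongr
      rw [← setLIntegral_univ, ← withDensity_apply _ MeasurableSet.univ]
      exact measure_mono (subset_univ _)
    · intro I hI hlt
      have h1 : av φ I ≤ av ψ I + l := by
        rw [← av_const l I, ← av_add hψm]
        apply av_mono_ae
        filter_upwards with x _
        simp only [hψ]; split_ifs with hc
        · exact le_self_add
        · rw [zero_add]; exact not_lt.1 hc
      have h2 : l < av ψ I := by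
        rw [hl2] at hlt
        have := hlt.trans_le h1
        exact lt_of_add_lt_add_right this
      have h3 := hw ψ hψm I
      rw [Measure.smul_apply, Measure.smul_apply, withDensity_apply _ (D_meas I), hτ, withDensity_apply _ (D_meas I),
        restrict_withDensity (D_meas I), lintegral_withDensity_eq_lintegral_mul _ hσm (by fun_prop)]
      simp only [Pi.mul_apply, smul_eq_mul]
      have e : ∫⁻ x in D I, σ x * ψ x ^ P1 = ∫⁻ x in D I, ψ x ^ P1 * σ x := by simp only [mul_comm]
      rw [e, av_mul, av_mul, ← mul_assoc, ← mul_assoc]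
      refine mul_le_mul' (le_trans ?_ h3) le_rfl
      gcongr
  rw [hconv _ (by fun_prop), hconv _ (by fun_prop)]
  calc ∫⁻ x, MF S (av φ) x ^ R ∂τ ≤ ∫⁻ x, 2 ^ R * lc R (MF S (av φ) x) ∂τ := by
        apply lintegral_mono; intro x; exact le_lc hR0 _
    _ = 2 ^ R * ∑' k : ℤ, ((2:ℝ≥0∞) ^ k) ^ R * τ {x | (2:ℝ≥0∞) ^ k < MF S (av φ) x} := by
        have hlm : Measurable (fun x => lc R (MF S (av φ) x)) := (lc_meas R).comp hMm
        rw [lintegral_const_mul _ hlm, lintegral_lc _ _ hMm]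
    _ = 2 ^ R * ∑' j : ℤ, ((2:ℝ≥0∞) ^ (j+1)) ^ R * τ {x | (2:ℝ≥0∞) ^ (j+1) < MF S (av φ) x} := by
        congr 1
        exact ((Equiv.addRight (1:ℤ)).tsum_eq (fun k : ℤ => ((2:ℝ≥0∞) ^ k) ^ R * τ {x | (2:ℝ≥0∞) ^ k < MF S (av φ) x})).symm
    _ ≤ 2 ^ R * ∑' j : ℤ, C' * 2 ^ R * ∫⁻ x, (if (2:ℝ≥0∞) ^ j < φ x then ((2:ℝ≥0∞) ^ j) ^ (R - P1) else 0) * φ x ^ P1 ∂τ := by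
        refine mul_le_mul' le_rfl (ENNReal.tsum_le_tsum fun j => ?_)
        calc ((2:ℝ≥0∞) ^ (j+1)) ^ R * τ {x | (2:ℝ≥0∞) ^ (j+1) < MF S (av φ) x} 
            = 2 ^ R * ((2:ℝ≥0∞) ^ j) ^ (R - P1) * (((2:ℝ≥0∞) ^ j) ^ P1 * τ {x | (2:ℝ≥0∞) ^ (j+1) < MF S (av φ) x}) := by
              rw [ENNReal.zpow_add (by norm_num) (by norm_num), zpow_one, ENNReal.mul_rpow_of_nonneg _ _ hR0.le,
                mul_comm (_ ^ R) (2 ^ R), ← mul_assoc (2 ^ R * _), mul_assoc (2 ^ R) _ (_ ^ P1),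
                ← ENNReal.rpow_add _ _ (two_zpow_ne_zero j) (two_zpow_ne_top j), sub_add_cancel]
          _ ≤ 2 ^ R * ((2:ℝ≥0∞) ^ j) ^ (R - P1) * (C' * ∫⁻ x, (if (2:ℝ≥0∞) ^ j < φ x then φ x ^ P1 else 0) ∂τ) := by
              exact mul_le_mul' le_rfl (hlev j)
          _ = C' * 2 ^ R * (((2:ℝ≥0∞) ^ j) ^ (R - P1) * ∫⁻ x, (if (2:ℝ≥0∞) ^ j < φ x then φ x ^ P1 else 0) ∂τ) := by ring
          _ = _ := by
              rw [← lintegral_const_mul]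
              · congr 2; funext x
                split_ifs <;> simp
              · exact Measurable.ite (measurableSet_lt measurable_const hφ) (by fun_prop) measurable_const
    _ = 2 ^ R * (C' * 2 ^ R * ∫⁻ x, lc (R - P1) (φ x) * φ x ^ P1 ∂τ) := by
        rw [ENNReal.tsum_mul_left, ← lintegral_tsum]
        · simp only [lc, ENNReal.tsum_mul_right]
        · intro j
          exact (Measurable.mul (Measurable.ite (measurableSet_lt measurable_const hφ) measurable_const measurable_const) 
            (by fun_prop)).aemeasurable
    _ ≤ 2 ^ R * (C' * 2 ^ R * ∫⁻ x, gc (R - P1) * φ x ^ R ∂τ) := by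
        refine mul_le_mul' le_rfl (mul_le_mul' le_rfl (lintegral_mono fun x => ?_))
        have := lc_mul_le (p := R - P1) (r := P1) (by linarith) hP1p.le (φ x)
        rwa [sub_add_cancel] at this
    _ = _ := by
        rw [lintegral_const_mul _ (by fun_prop)]; ring

end Ext

end

section
namespace Ext

lemma params {s0 κ : ℝ} (hs0 : 1 < s0) (hκ : 0 < κ) : ∃ s s1 P P1 ε : ℝ,
    1 < s1 ∧ s1 < s ∧ s < s0 ∧ 1 < P ∧ (P - 1) / s0 + 1 / κ + 1 ≤ P1 ∧ P1 < P / s ∧ 0 < ε ∧ ε < 1 ∧ ε * P < 1 ∧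
      0 < 1 - 1 / s1 - ε := by
  obtain ⟨s, hs1, hs⟩ := exists_between hs0
  obtain ⟨s1, hs11, hs1s⟩ := exists_between hs1
  have hpos : 0 < 1 / s - 1 / s0 := by
    rw [sub_pos]; exact one_div_lt_one_div_of_lt (by linarith) hs
  have hk : 0 < 1/κ := by positivity
  set P := (2 + 1/κ) / (1 / s - 1 / s0) + 1 with hP
  have hP1 : 1 < P := by rw [hP]; have : 0 < (2 + 1/κ) / (1 / s - 1 / s0) := by positivity
                         linarith
  have hPe : (P - 1) * (1 / s - 1 / s0) = 2 + 1/κ := by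
    rw [hP, add_sub_cancel_right, div_mul_cancel₀ _ hpos.ne']
  have ht : 0 < 1 - 1 / s1 := by
    rw [sub_pos, div_lt_one (by linarith)]; exact hs11
  have hPi : 0 < 1 / P := by positivity
  refine ⟨s, s1, P, _, min (1/P) (1 - 1/s1) / 2, hs11, hs1s, hs, hP1, le_rfl, ?_, ?_, ?_, ?_, ?_⟩
  · have e : P / s = (P - 1) * (1 / s - 1 / s0) + (P-1)/s0 + 1 / s := by field_simp; ring
    have : 0 < 1 / s := by positivity
    rw [e, hPe]; linarith
  · positivity
  · have : 1 / P < 1 := by rw [div_lt_one (by linarith)]; exact hP1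
    have := min_le_left (1/P) (1 - 1/s1)
    linarith
  · have h1 := min_le_left (1/P) (1 - 1/s1)
    have : min (1/P) (1 - 1/s1) / 2 * P ≤ (1/P) / 2 * P := by gcongr
    have e : (1/P) / 2 * P = 1/2 := by field_simp
    linarith
  · have := min_le_right (1/P) (1 - 1/s1)
    linarith

section
variable {n : ℕ} {ν V : (Fin n → ℝ) → ℝ≥0∞} {C : ℝ≥0∞} {s0 κ : ℝ}

lemma WD.V_low (h : WD ν V C s0 κ) {ε : ℝ} (hε : 0 < ε) (I : Idx n) :
    av V I ^ ε ≤ C ^ ε * av (fun x => V x ^ ε) I := by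
  have hκ := h.hκ
  have hmV := h.mV
  set t := κ / (κ + ε) with ht
  have ht0 : 0 < t := by positivity
  have h1t : 1 - t = ε / (κ + ε) := by rw [ht]; field_simp; ring
  have e1 : (1:ℝ≥0∞) ≤ av (fun x => V x ^ ε) I ^ t * av (fun x => V x ^ (-κ)) I ^ (1 - t) := by
    have := av_holder (f := fun x => V x ^ ε) (g := fun x => V x ^ (-κ)) (h := fun _ => 1) (by fun_prop) (by fun_prop) (by fun_prop)
      (a := t) (b := 1 - t) (c := 0) ht0.le (by rw [h1t]; positivity) le_rfl (by linarith) I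
    simp only [ENNReal.rpow_zero, mul_one] at this
    refine le_trans ?_ this
    rw [← av_const 1 I]
    apply av_mono_ae
    filter_upwards [h.zV] with x hx _
    rw [← ENNReal.rpow_mul, ← ENNReal.rpow_mul, h1t, ht]
    have : -κ * (ε / (κ + ε)) = -(ε * (κ / (κ + ε))) := by ring
    rw [this, rpow_cancel hx (h.tV x)]
  have e2 : (1:ℝ≥0∞) ≤ av (fun x => V x ^ ε) I * av (fun x => V x ^ (-κ)) I ^ (ε/κ) := by
    have := ENNReal.rpow_le_rpow e1 (one_div_pos.2 ht0).le
    rw [ENNReal.one_rpow, ENNReal.mul_rpow_of_nonneg _ _ (one_div_pos.2 ht0).le, ← ENNReal.rpow_mul, ← ENNReal.rpow_mul,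
      mul_one_div_cancel ht0.ne', ENNReal.rpow_one] at this
    have e : (1 - t) * (1 / t) = ε / κ := by rw [h1t, ht]; field_simp
    rwa [e] at this
  calc av V I ^ ε = av V I ^ ε * 1 := (mul_one _).symm
    _ ≤ av V I ^ ε * (av (fun x => V x ^ ε) I * av (fun x => V x ^ (-κ)) I ^ (ε/κ)) := by gcongr
    _ = (av V I * av (fun x => V x ^ (-κ)) I ^ (1/κ)) ^ ε * av (fun x => V x ^ ε) I := by
        rw [ENNReal.mul_rpow_of_nonneg _ _ hε.le, ← ENNReal.rpow_mul]
        have : 1 / κ * ε = ε / κ := by ring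
        rw [this]; ring
    _ ≤ _ := by gcongr; exact h.ap I

lemma WD.nu_s (h : WD ν V C s0 κ) {s : ℝ} (hs : 0 < s) (hss : s < s0) (I : Idx n) :
    av (fun x => ν x ^ s) I ≤ C ^ (s / s0) * av ν I ^ s := by
  have hs0 := h.hs0
  have hmν := h.mν
  have hd : 0 < s / s0 := by apply div_pos <;> linarith
  have : (fun x => ν x ^ s) = fun x => (ν x ^ s0) ^ (s / s0) := by
    funext x; rw [← ENNReal.rpow_mul, mul_div_cancel₀ _ (by linarith : s0 ≠ 0)]
  rw [this]
  calc _ ≤ av (fun x => ν x ^ s0) I ^ (s / s0) := av_jensen (by fun_prop) hd.le (by rw [div_le_one] <;> linarith) I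
    _ ≤ (C * av ν I ^ s0) ^ (s / s0) := ENNReal.rpow_le_rpow (h.rh I) hd.le
    _ = _ := by rw [ENNReal.mul_rpow_of_nonneg _ _ hd.le, ← ENNReal.rpow_mul, mul_div_cancel₀ _ (by linarith : s0 ≠ 0)]

def phi (ν : (Fin n → ℝ) → ℝ≥0∞) (E : Set (Fin n → ℝ)) (s : ℝ) : (Fin n → ℝ) → ℝ≥0∞ := 
  E.indicator (fun x => ν x ^ s)

lemma phi_meas (hν : Measurable ν) {E : Set (Fin n → ℝ)} (hE : MeasurableSet E) (s : ℝ) : Measurable (phi ν E s) :=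
  Measurable.indicator (by fun_prop) hE

lemma phi_le (E : Set (Fin n → ℝ)) (s : ℝ) (x) : phi ν E s x ≤ ν x ^ s := indicator_le_self _ _ _

def u1 (ν : (Fin n → ℝ) → ℝ≥0∞) (E : Set (Fin n → ℝ)) (s : ℝ) (S : Finset (Idx n)) : (Fin n → ℝ) → ℝ≥0∞ := 
  fun x => (max (phi ν E s x) (MF S (av (phi ν E s)) x)) ^ (1 / s)

lemma u1_meas (hν : Measurable ν) {E : Set (Fin n → ℝ)} (hE : MeasurableSet E) (s : ℝ) (S : Finset (Idx n)) : 
    Measurable (u1 ν E s S) := 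
  ((phi_meas hν hE s).max (MF_meas _ _)).pow_const _

lemma u1_ge {E : Set (Fin n → ℝ)} {s : ℝ} (hs : 0 < s) (S : Finset (Idx n)) {x} (hx : x ∈ E) : ν x ≤ u1 ν E s S x := by
  calc ν x = (ν x ^ s) ^ (1 / s) := by rw [← ENNReal.rpow_mul, mul_one_div_cancel hs.ne', ENNReal.rpow_one]
    _ ≤ _ := by
      apply ENNReal.rpow_le_rpow _ (by positivity)
      refine le_trans (le_of_eq ?_) (le_max_left _ _)
      simp [phi, hx]

lemma u1_le (h : WD ν V C s0 κ) (E : Set (Fin n → ℝ)) {s : ℝ} (hs : 0 < s) (hss : s < s0) (S : Finset (Idx n)) :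
    ∀ᵐ x, u1 ν E s S x ≤ (1 + C ^ (s / s0) * C ^ s) ^ (1 / s) * ν x := by
  have : ∀ᵐ x, ∀ I : Idx n, x ∈ D I → av ν I ≤ C * ν x := by
    rw [ae_all_iff]; exact h.a1'
  filter_upwards [this] with x hx
  have e : (1 + C ^ (s / s0) * C ^ s) ^ (1 / s) * ν x = ((1 + C ^ (s / s0) * C ^ s) * ν x ^ s) ^ (1 / s) := by
    rw [ENNReal.mul_rpow_of_nonneg _ _ (by positivity), ← ENNReal.rpow_mul, mul_one_div_cancel hs.ne', ENNReal.rpow_one]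
  rw [e]
  apply ENNReal.rpow_le_rpow _ (by positivity)
  rw [add_mul, one_mul]
  apply max_le
  · exact (phi_le E s x).trans le_self_add
  · refine le_trans (MF_le fun I hI hxI => ?_) le_add_self
    calc av (phi ν E s) I ≤ av (fun x => ν x ^ s) I := av_mono_ae (by filter_upwards with y _; exact phi_le E s y)
      _ ≤ C ^ (s / s0) * av ν I ^ s := h.nu_s hs hss I
      _ ≤ C ^ (s / s0) * (C * ν x) ^ s := by gcongr; exact hx I hxI
      _ = _ := by rw [ENNReal.mul_rpow_of_nonneg _ _ hs.le, mul_assoc]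

lemma max_rpow_le (a b : ℝ≥0∞) {p : ℝ} (_ : 0 ≤ p) : (max a b) ^ p ≤ a ^ p + b ^ p := by
  rcases le_total a b with h | h
  · rw [max_eq_right h]; exact le_add_self
  · rw [max_eq_left h]; exact le_self_add

lemma u1_int (h : WD ν V C s0 κ) {s P P1 : ℝ} (hs : 0 < s) (hP : 1 < P)
    (hP1 : (P - 1) / s0 + 1 / κ + 1 ≤ P1) (hR : P1 < P / s) :
    ∃ K : ℝ≥0∞, K < ⊤ ∧ ∀ E, MeasurableSet E → ∀ S : Finset (Idx n), 
      ∫⁻ x, u1 ν E s S x ^ P * (ν x ^ (1 - P) * V x) ≤ K * ∫⁻ x in E, ν x * V x := by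
  obtain ⟨C', hC', hst⟩ := strongL h hP hP1 hR
  refine ⟨1 + C', by simp [hC'], fun E hE S => ?_⟩
  have hmν := h.mν
  have hmV := h.mV
  have hmp := phi_meas hmν hE s
  have e1 : ∫⁻ x, phi ν E s x ^ (P / s) * (ν x ^ (1 - P) * V x) = ∫⁻ x in E, ν x * V x := by
    rw [← lintegral_indicator hE]
    apply lintegral_congr_ae
    filter_upwards [h.zν] with x hx
    by_cases hxE : x ∈ E
    · simp only [phi, indicator_of_mem hxE]
      rw [← ENNReal.rpow_mul, mul_div_cancel₀ _ hs.ne', ← mul_assoc, ← ENNReal.rpow_add _ _ hx (h.tν x)]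
      simp
    · simp only [phi, indicator_of_notMem hxE]
      rw [ENNReal.zero_rpow_of_pos (by positivity), zero_mul]
  calc ∫⁻ x, u1 ν E s S x ^ P * (ν x ^ (1 - P) * V x) 
      ≤ ∫⁻ x, (phi ν E s x ^ (P / s) * (ν x ^ (1 - P) * V x) + MF S (av (phi ν E s)) x ^ (P / s) * (ν x ^ (1 - P) * V x)) := by
        apply lintegral_mono
        intro x
        simp only
        rw [← add_mul]
        refine mul_le_mul' ?_ le_rfl
        rw [u1, ← ENNReal.rpow_mul]
        have : 1 / s * P = P / s := by ring
        rw [this]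
        exact max_rpow_le _ _ (by positivity)
    _ = _ := lintegral_add_left (by fun_prop) _
    _ ≤ (∫⁻ x in E, ν x * V x) + C' * ∫⁻ x in E, ν x * V x := by
        rw [← e1]; exact add_le_add le_rfl (hst _ hmp S)
    _ = _ := by ring

def mu (φ : (Fin n → ℝ) → ℝ≥0∞) (S : Finset (Idx n)) (I : Idx n) : ℝ≥0∞ := by
  classical exact (S.filter (fun J => D I ⊆ D J)).sup (av φ)

lemma le_mu {φ : (Fin n → ℝ) → ℝ≥0∞} {S : Finset (Idx n)} {I J : Idx n} (hJ : J ∈ S) (hD : D I ⊆ D J) :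
    av φ J ≤ mu φ S I := by
  classical
  unfold mu
  exact Finset.le_sup (f := av φ) (by simp [hJ, hD])

lemma mu_le {φ : (Fin n → ℝ) → ℝ≥0∞} {S : Finset (Idx n)} {I : Idx n} {l} (h : ∀ J ∈ S, D I ⊆ D J → av φ J ≤ l) :
    mu φ S I ≤ l := by
  classical
  unfold mu
  apply Finset.sup_le
  intro J hJ
  simp only [Finset.mem_filter] at hJ
  exact h J hJ.1 hJ.2

lemma mu_ne_top {φ : (Fin n → ℝ) → ℝ≥0∞} {S : Finset (Idx n)} {I : Idx n} (h : ∀ J, av φ J < ⊤) :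
    mu φ S I < ⊤ := by
  classical
  unfold mu
  rw [Finset.sup_lt_iff (by simp)]
  exact fun J _ => h J

lemma mu_le_MF {φ : (Fin n → ℝ) → ℝ≥0∞} {S : Finset (Idx n)} {I : Idx n} {x} (hx : x ∈ D I) :
    mu φ S I ≤ MF S (av φ) x := mu_le fun _ hJ hD => le_MF hJ (hD hx)

lemma MF_le_mu {φ : (Fin n → ℝ) → ℝ≥0∞} {S T : Finset (Idx n)} {I : Idx n} 
    (hT : ∀ J ∈ S, D J ⊆ D I → J ∈ T) {x} (hx : x ∈ D I) :
    MF S (av φ) x ≤ max (MF T (av φ) x) (mu φ S I) := by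
  apply MF_le
  intro J hJ hxJ
  rcases le_total I.1 J.1 with hle | hle
  · exact (le_mu hJ (D_nested ⟨x, hx, hxJ⟩ hle)).trans (le_max_right _ _)
  · exact (le_MF (hT J hJ (D_nested ⟨x, hxJ, hx⟩ hle)) hxJ).trans (le_max_left _ _)

lemma u1_dbl (h : WD ν V C s0 κ) {s s1 ε : ℝ} (hs1 : 1 < s1) (hs1s : s1 < s) (hss : s < s0)
    (hε : 0 < ε) (hθ : 0 < 1 - 1 / s1 - ε) :
    ∃ K : ℝ≥0∞, K < ⊤ ∧ ∀ E, MeasurableSet E → ∀ S : Finset (Idx n), ∀ I ∈ S, 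
      (∫⁻ x in D I, u1 ν E s S x * V x ^ ε) < ⊤ ∧ ∀ A, MeasurableSet A → A ⊆ D I →
        ∫⁻ x in A, u1 ν E s S x * V x ^ ε ≤ K * (volume A / volume (D I)) ^ (1 - 1 / s1 - ε) * 
          ∫⁻ x in D I, u1 ν E s S x * V x ^ ε := by
  classical
  have hs : 0 < s := by linarith
  set δ := s1 / s with hδ
  have hδ0 : 0 < δ := by positivity
  have hδ1 : δ < 1 := by rw [hδ, div_lt_one hs]; exact hs1s
  set θ := 1 - 1 / s1 - ε with hθe
  set C6 : ℝ≥0∞ := 1 + 2 ^ δ * (gc δ + gc (1 - δ)) + 1 with hC6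
  have hC6t : C6 < ⊤ := by
    have : (2:ℝ≥0∞) ^ δ * (gc δ + gc (1 - δ)) < ⊤ := ENNReal.mul_lt_top (ENNReal.rpow_lt_top_of_nonneg hδ0.le (by norm_num))
      (by simp [gc_lt_top hδ0, gc_lt_top (show 0 < 1 - δ by linarith)])
    rw [hC6]; simp [this]
  have hs1i : 0 < 1 / s1 := by positivity
  have hC6t' : C6 ^ (1 / s1) < ⊤ := ENNReal.rpow_lt_top_of_nonneg hs1i.le hC6t.ne
  refine ⟨C6 ^ (1 / s1) * C ^ ε, ENNReal.mul_lt_top hC6t' (ENNReal.rpow_lt_top_of_nonneg hε.le h.hC), fun E hE S I hI => ?_⟩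
  have hmν := h.mν
  have hmV := h.mV
  set φ := phi ν E s with hφ
  have hmp : Measurable φ := phi_meas hmν hE s
  have hmu := u1_meas hmν hE s S
  have hfin : ∀ J, av φ J < ⊤ := fun J => by
    calc av φ J ≤ av (fun x => ν x ^ s) J := av_mono_ae (by filter_upwards with y _; exact phi_le E s y)
      _ ≤ C ^ (s / s0) * av ν J ^ s := h.nu_s hs hss J
      _ < ⊤ := ENNReal.mul_lt_top (ENNReal.rpow_lt_top_of_nonneg (by have := h.hs0; positivity) h.hC)
        (ENNReal.rpow_lt_top_of_nonneg hs.le (av_lt_top (h.lν.D J)).ne)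
  set T := S.filter (fun J => D J ⊆ D I) with hT
  set μ := mu φ S I with hμ
  have hμt : μ < ⊤ := mu_ne_top hfin
  have hφμ : av φ I ≤ μ := le_mu hI Subset.rfl
  have hup : av (fun x => u1 ν E s S x ^ s1) I ≤ C6 * μ ^ δ := by
    calc av (fun x => u1 ν E s S x ^ s1) I ≤ av (fun x => φ x ^ δ + (MF T (av φ) x ^ δ + μ ^ δ)) I := by
          apply av_mono_ae
          filter_upwards with x hx
          rw [u1, ← ENNReal.rpow_mul]
          have : 1 / s * s1 = δ := by rw [hδ]; ring
          rw [this]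
          refine (max_rpow_le _ _ hδ0.le).trans (add_le_add le_rfl ?_)
          refine le_trans (ENNReal.rpow_le_rpow (MF_le_mu (T := T) (I := I) ?_ hx) hδ0.le) (max_rpow_le _ _ hδ0.le)
          intro J hJ hD
          simp [hT, hJ, hD]
      _ = av (fun x => φ x ^ δ) I + (av (fun x => MF T (av φ) x ^ δ) I + μ ^ δ) := by
          rw [av_add (by fun_prop), av_add ((MF_meas _ _).pow_const _), av_const]
      _ ≤ μ ^ δ + (2 ^ δ * (gc δ + gc (1 - δ)) * μ ^ δ + μ ^ δ) := by
          gcongr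
          · exact (av_jensen hmp hδ0.le hδ1.le I).trans (by gcongr)
          · refine (kolm T ?_ (hfin I).ne hδ0).trans (by gcongr)
            intro J hJ
            simp only [hT, Finset.mem_filter] at hJ
            exact hJ.2
      _ = _ := by rw [hC6]; ring
  have hA : ∀ A, MeasurableSet A → A ⊆ D I → av (A.indicator (fun x => u1 ν E s S x * V x ^ ε)) I ≤
      C6 ^ (1 / s1) * μ ^ (1 / s) * av V I ^ ε * (volume A / volume (D I)) ^ θ := by
    intro A hAm hAI
    have hind : av (A.indicator (fun _ => (1:ℝ≥0∞))) I = volume A / volume (D I) := by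
      rw [av, lintegral_indicator hAm, lintegral_const, Measure.restrict_restrict hAm, inter_eq_self_of_subset_left hAI,
        Measure.restrict_apply_univ, one_mul, ENNReal.div_eq_inv_mul]
    have := av_holder (f := fun x => u1 ν E s S x ^ s1) (g := V) (h := A.indicator (fun _ => (1:ℝ≥0∞))) 
      (by fun_prop) (by fun_prop) (measurable_const.indicator hAm) hs1i.le hε.le hθ.le (by rw [hθe]; linarith) I
    rw [hind] at this
    refine le_trans (le_of_eq ?_) (this.trans ?_)
    · congr 1; funext x
      rw [← ENNReal.rpow_mul, mul_one_div_cancel (by positivity), ENNReal.rpow_one]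
      by_cases hx : x ∈ A
      · simp [hx]
      · simp [hx, hθ]
    · have : C6 ^ (1 / s1) * μ ^ (1 / s) = (C6 * μ ^ δ) ^ (1 / s1) := by
        rw [ENNReal.mul_rpow_of_nonneg _ _ hs1i.le, ← ENNReal.rpow_mul]
        congr 2; rw [hδ]; field_simp
      rw [this]
      gcongr
  have hlow : μ ^ (1 / s) * av (fun x => V x ^ ε) I ≤ av (fun x => u1 ν E s S x * V x ^ ε) I := by
    rw [← av_const_mul _ (by fun_prop)]
    apply av_mono_ae
    filter_upwards with x hx
    refine mul_le_mul' ?_ le_rfl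
    apply ENNReal.rpow_le_rpow _ (by positivity)
    exact (mu_le_MF hx).trans (le_max_right _ _)
  have hVt : av V I < ⊤ := av_lt_top (h.lV.D I)
  constructor
  · have h1 := hA (D I) (D_meas I) Subset.rfl
    rw [ENNReal.div_self (vol_D_ne_zero I) (vol_D_ne_top I), ENNReal.one_rpow, mul_one] at h1
    have h2 : av ((D I).indicator fun x => u1 ν E s S x * V x ^ ε) I < ⊤ := by
      refine h1.trans_lt (ENNReal.mul_lt_top (ENNReal.mul_lt_top hC6t' ?_) ?_)
      · exact ENNReal.rpow_lt_top_of_nonneg (by positivity) hμt.ne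
      · exact ENNReal.rpow_lt_top_of_nonneg hε.le hVt.ne
    have h3 := av_mul ((D I).indicator fun x => u1 ν E s S x * V x ^ ε) I
    rw [lintegral_indicator (D_meas I), Measure.restrict_restrict (D_meas I), inter_self] at h3
    rw [h3]
    exact ENNReal.mul_lt_top h2 (vol_D_ne_top I).lt_top
  · intro A hAm hAI
    have h3 := av_mul (A.indicator fun x => u1 ν E s S x * V x ^ ε) I
    rw [lintegral_indicator hAm, Measure.restrict_restrict hAm, inter_eq_self_of_subset_left hAI] at h3
    rw [h3, av_mul, ← mul_assoc]
    refine mul_le_mul' ?_ le_rfl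
    calc _ ≤ _ := hA A hAm hAI
      _ ≤ C6 ^ (1 / s1) * μ ^ (1 / s) * (C ^ ε * av (fun x => V x ^ ε) I) * (volume A / volume (D I)) ^ θ := by
          gcongr; exact h.V_low hε I
      _ = C6 ^ (1 / s1) * C ^ ε * (volume A / volume (D I)) ^ θ * (μ ^ (1 / s) * av (fun x => V x ^ ε) I) := by ring
      _ ≤ _ := by gcongr

theorem u1_exists (h : WD ν V C s0 κ) : ∃ (ε P θ : ℝ) (K : ℝ≥0∞), 0 < ε ∧ ε < 1 ∧ 1 < P ∧ ε * P < 1 ∧ 0 < θ ∧ K < ⊤ ∧ 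
    ∀ E, MeasurableSet E → ∀ S : Finset (Idx n), ∃ u : (Fin n → ℝ) → ℝ≥0∞, Measurable u ∧ 
      (∀ x ∈ E, ν x ≤ u x) ∧ (∀ᵐ x, u x ≤ K * ν x) ∧ 
      ∫⁻ x, u x ^ P * (ν x ^ (1 - P) * V x) ≤ K * ∫⁻ x in E, ν x * V x ∧ 
      ∀ I ∈ S, (∫⁻ x in D I, u x * V x ^ ε) < ⊤ ∧ ∀ A, MeasurableSet A → A ⊆ D I →
        ∫⁻ x in A, u x * V x ^ ε ≤ K * (volume A / volume (D I)) ^ θ * ∫⁻ x in D I, u x * V x ^ ε := by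
  obtain ⟨s, s1, P, P1, ε, hs1, hs1s, hss, hP, hP1, hR, hε, hε1, hεP, hθ⟩ := params h.hs0 h.hκ
  have hs : 0 < s := by linarith
  obtain ⟨K1, hK1, h1⟩ := u1_int h hs hP hP1 hR
  obtain ⟨K2, hK2, h2⟩ := u1_dbl h hs1 hs1s hss hε hθ
  set K3 := (1 + C ^ (s / s0) * C ^ s) ^ (1 / s) with hK3
  have hK3t : K3 < ⊤ := by
    have := h.hs0
    apply ENNReal.rpow_lt_top_of_nonneg (by positivity)
    exact ENNReal.add_ne_top.2 ⟨by simp, ENNReal.mul_ne_top (ENNReal.rpow_ne_top_of_nonneg (by positivity) h.hC) 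
      (ENNReal.rpow_ne_top_of_nonneg hs.le h.hC)⟩
  refine ⟨ε, P, 1 - 1 / s1 - ε, K1 + K2 + K3, hε, hε1, hP, hεP, hθ, by simp [hK1, hK2, hK3t], fun E hE S => 
    ⟨u1 ν E s S, u1_meas h.mν hE s S, fun x hx => u1_ge hs S hx, ?_, ?_, fun I hI => ⟨(h2 E hE S I hI).1, fun A hA hAI => ?_⟩⟩⟩
  · filter_upwards [u1_le h E hs hss S] with x hx
    exact hx.trans (mul_le_mul' le_add_self le_rfl)
  · exact (h1 E hE S).trans (mul_le_mul' (le_self_add.trans le_self_add) le_rfl)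
  · refine ((h2 E hE S I hI).2 A hA hAI).trans (mul_le_mul' (mul_le_mul' ?_ le_rfl) le_rfl)
    exact le_add_self.trans le_self_add

end
end Ext

end

section
namespace Ext

section
variable {n : ℕ}

def FS (a : Idx n → ℝ≥0∞) (S : Finset (Idx n)) (x : Fin n → ℝ) : ℝ≥0∞ :=
  ∑ I ∈ S, (D I).indicator (fun _ => a I) x

def MD (a : Idx n → ℝ≥0∞) (x : Fin n → ℝ) : ℝ≥0∞ := ⨆ I : Idx n, (D I).indicator (fun _ => a I) x

lemma FS_meas (a : Idx n → ℝ≥0∞) (S : Finset (Idx n)) : Measurable (FS a S) :=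
  Finset.measurable_fun_sum _ (fun I _ => measurable_const.indicator (D_meas I))

lemma MD_meas (a : Idx n → ℝ≥0∞) : Measurable (MD a) :=
  Measurable.iSup (fun I => measurable_const.indicator (D_meas I))

lemma le_MD (a : Idx n → ℝ≥0∞) {I : Idx n} {x} (hx : x ∈ D I) : a I ≤ MD a x := by
  refine le_trans (le_of_eq ?_) (le_iSup _ I)
  simp [hx]

open Classical in
def loc (S : Finset (Idx n)) (I : Idx n) : Finset (Idx n) := S.filter (fun J => J.1 ≤ I.1 ∧ D J ⊆ D I)

open Classical in
def upS (S : Finset (Idx n)) (I : Idx n) : Finset (Idx n) := S.filter (fun J => I.1 ≤ J.1 ∧ D I ⊆ D J)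

lemma sum_up_le_FS (a : Idx n → ℝ≥0∞) (S : Finset (Idx n)) {I : Idx n} {x} (hx : x ∈ D I) :
    ∑ J ∈ upS S I, a J ≤ FS a S x := by
  classical
  calc ∑ J ∈ upS S I, a J = ∑ J ∈ upS S I, (D J).indicator (fun _ => a J) x := by
        apply Finset.sum_congr rfl
        intro J hJ
        simp only [upS, Finset.mem_filter] at hJ
        rw [indicator_of_mem (hJ.2.2 hx)]
    _ ≤ _ := Finset.sum_le_sum_of_subset (Finset.filter_subset _ _)

lemma FS_le_up (a : Idx n → ℝ≥0∞) (S : Finset (Idx n)) (x) : FS a S x = 0 ∨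
    ∃ I ∈ S, x ∈ D I ∧ FS a S x ≤ ∑ J ∈ upS S I, a J := by
  classical
  rcases (S.filter (fun I => x ∈ D I)).eq_empty_or_nonempty with he | hne
  · left
    apply Finset.sum_eq_zero
    intro I hI
    apply indicator_of_notMem
    intro hx
    have : I ∈ S.filter (fun I => x ∈ D I) := by simp [hI, hx]
    rw [he] at this
    simp at this
  · right
    obtain ⟨I, hI, hmin⟩ := Finset.exists_min_image _ (fun I : Idx n => I.1) hne
    simp only [Finset.mem_filter] at hI hmin
    refine ⟨I, hI.1, hI.2, ?_⟩
    rw [FS]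
    have : ∑ J ∈ S, (D J).indicator (fun _ => a J) x = ∑ J ∈ S.filter (fun I => x ∈ D I), a J := by
      rw [Finset.sum_filter]
      apply Finset.sum_congr rfl
      intro J _
      simp [indicator_apply]
    rw [this]
    apply Finset.sum_le_sum_of_subset
    intro J hJ
    simp only [Finset.mem_filter, upS] at hJ ⊢
    have := hmin J hJ
    exact ⟨hJ.1, this, D_nested ⟨x, hI.2, hJ.2⟩ this⟩

lemma FS_level (a : Idx n → ℝ≥0∞) (S : Finset (Idx n)) (l : ℝ≥0∞) :
    {x | l < FS a S x} = ⋃ I ∈ {I | I ∈ S ∧ l < ∑ J ∈ upS S I, a J}, D I := by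
  ext x
  simp only [mem_ofPred_eq, mem_iUnion, exists_prop]
  constructor
  · intro h
    rcases FS_le_up a S x with h0 | ⟨I, hI, hx, hle⟩
    · rw [h0] at h; exact absurd h (by simp)
    · exact ⟨I, ⟨hI, h.trans_le hle⟩, hx⟩
  · rintro ⟨I, ⟨_, h2⟩, hx⟩
    exact h2.trans_le (sum_up_le_FS a S hx)

lemma FS_split (a : Idx n → ℝ≥0∞) (S : Finset (Idx n)) (l : ℝ≥0∞) {I : Idx n} 
    (hI : IsMx {I | I ∈ S ∧ l < ∑ J ∈ upS S I, a J} I) {x} (hx : x ∈ D I) :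
    FS a S x ≤ FS a (loc S I) x + l := by
  classical
  set T := S.filter (fun J => I.1 < J.1 ∧ D I ⊆ D J) with hT
  have h1 : FS a S x ≤ FS a (loc S I) x + ∑ J ∈ T, a J := by
    have : FS a S x ≤ FS a (loc S I ∪ T) x := by
      unfold FS
      rw [← Finset.sum_filter_add_sum_filter_not S (fun J => x ∈ D J)]
      have : ∑ J ∈ S.filter (fun J => ¬ x ∈ D J), (D J).indicator (fun _ => a J) x = 0 := by
        apply Finset.sum_eq_zero
        intro J hJ
        simp only [Finset.mem_filter] at hJ
        exact indicator_of_notMem hJ.2 _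
      rw [this, add_zero]
      apply Finset.sum_le_sum_of_subset
      intro J hJ
      simp only [Finset.mem_filter, Finset.mem_union, loc, hT] at hJ ⊢
      rcases le_or_gt J.1 I.1 with hle | hgt
      · exact Or.inl ⟨hJ.1, hle, D_nested ⟨x, hJ.2, hx⟩ hle⟩
      · exact Or.inr ⟨hJ.1, hgt, D_nested ⟨x, hx, hJ.2⟩ hgt.le⟩
    refine this.trans ?_
    have h2 : FS a (loc S I ∪ T) x ≤ FS a (loc S I) x + FS a T x := by
      unfold FS
      rw [← Finset.sum_union_inter]
      exact le_self_add
    refine h2.trans (add_le_add le_rfl ?_)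
    exact Finset.sum_le_sum (fun J _ => indicator_le_self _ _ _)
  refine h1.trans (add_le_add le_rfl ?_)
  rcases T.eq_empty_or_nonempty with he | hne
  · rw [he]; simp
  obtain ⟨J0, hJ0, hmin⟩ := Finset.exists_min_image T (fun I : Idx n => I.1) hne
  have hJ0' := hJ0
  simp only [hT, Finset.mem_filter] at hJ0'
  have hJG : ¬ (J0 ∈ S ∧ l < ∑ J ∈ upS S J0, a J) := by
    intro hJ
    have := hI.2 J0 hJ ⟨x, hx, hJ0'.2.2 hx⟩
    omega
  have hle : ∑ J ∈ upS S J0, a J ≤ l := by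
    by_contra hc
    exact hJG ⟨hJ0'.1, not_le.1 hc⟩
  refine le_trans (Finset.sum_le_sum_of_subset ?_) hle
  intro J hJ
  have h3 := hmin J hJ
  simp only [hT, Finset.mem_filter] at hJ
  simp only [upS, Finset.mem_filter]
  exact ⟨hJ.1, h3, D_nested ⟨x, hJ0'.2.2 hx, hJ.2.2 hx⟩ h3⟩

def LocHyp (a : Idx n → ℝ≥0∞) (L : ℝ≥0∞) (e : ℝ) : Prop :=
  ∀ (S : Finset (Idx n)) (I : Idx n), ∫⁻ x in D I, FS a (loc S I) x ^ e ≤ L * volume (D I) * a I ^ e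

def DblHyp (W : (Fin n → ℝ) → ℝ≥0∞) (S : Finset (Idx n)) (K : ℝ≥0∞) (θ : ℝ) : Prop :=
  ∀ I ∈ S, (∫⁻ x in D I, W x) < ⊤ ∧ ∀ A, MeasurableSet A → A ⊆ D I →
        ∫⁻ x in A, W x ≤ K * (volume A / volume (D I)) ^ θ * ∫⁻ x in D I, W x

lemma goodl {a : Idx n → ℝ≥0∞} {L K : ℝ≥0∞} {e θ : ℝ} (he : 0 < e) (hθ : 0 < θ) (hL : LocHyp a L e)
    {W : (Fin n → ℝ) → ℝ≥0∞} {S : Finset (Idx n)} (hW : DblHyp W S K θ) {l γ : ℝ≥0∞}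
    (hl0 : l ≠ 0) (hlt : l ≠ ⊤) :
    (volume.withDensity W) {x | l + l < FS a S x ∧ MD a x ≤ γ * l} ≤ 
      K * (L * γ ^ e) ^ θ * (volume.withDensity W) {x | l < FS a S x} := by
  set wm := volume.withDensity W with hwm
  set B := {x | l + l < FS a S x ∧ MD a x ≤ γ * l} with hB
  have hBm : MeasurableSet B := (measurableSet_lt measurable_const (FS_meas a S)).inter 
    (measurableSet_le (MD_meas a) measurable_const)
  have hBs : B ⊆ {x | l < FS a S x} := fun x hx => lt_of_le_of_lt le_self_add hx.1
  obtain ⟨b, hb⟩ := fin_bdd S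
  set G := {I | I ∈ S ∧ l < ∑ J ∈ upS S I, a J} with hG
  have key := cover G b (fun I hI => hb I hI.1) (wm.restrict B) ((K * (L * γ ^ e) ^ θ) • wm) ?_
  · rw [hG, ← FS_level, Measure.restrict_apply' hBm, inter_eq_self_of_subset_right hBs] at key
    exact key
  intro I hI
  rw [Measure.restrict_apply' hBm, Measure.smul_apply, smul_eq_mul]
  rcases (D I ∩ B).eq_empty_or_nonempty with hemp | ⟨y, hyI, hyB⟩
  · rw [hemp]; simp
  have haI : a I ≤ γ * l := (le_MD a hyI).trans hyB.2
  have hle0 : l ^ e ≠ 0 := (ENNReal.rpow_pos (pos_iff_ne_zero.2 hl0) hlt).ne'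
  have hlet : l ^ e ≠ ⊤ := ENNReal.rpow_ne_top_of_nonneg he.le hlt
  have hAm : MeasurableSet (D I ∩ B) := (D_meas I).inter hBm
  have hvol : volume (D I ∩ B) / volume (D I) ≤ L * γ ^ e := by
    have h1 : l ^ e * volume (D I ∩ B) ≤ ∫⁻ x in D I, FS a (loc S I) x ^ e := by
      calc l ^ e * volume (D I ∩ B) = ∫⁻ x in D I ∩ B, l ^ e := by
            rw [lintegral_const, Measure.restrict_apply_univ]
        _ ≤ ∫⁻ x in D I ∩ B, FS a (loc S I) x ^ e := by
            apply setLIntegral_mono' hAm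
            intro x hx
            apply ENNReal.rpow_le_rpow _ he.le
            have h2 := FS_split a S l hI hx.1
            have h3 := hx.2.1.trans_le h2
            exact (lt_of_add_lt_add_right h3).le
        _ ≤ _ := lintegral_mono_set inter_subset_left
    have h2 : l ^ e * volume (D I ∩ B) ≤ l ^ e * (L * γ ^ e * volume (D I)) := by
      calc _ ≤ _ := h1
        _ ≤ L * volume (D I) * a I ^ e := hL S I
        _ ≤ L * volume (D I) * (γ * l) ^ e := by gcongr
        _ = _ := by rw [ENNReal.mul_rpow_of_nonneg _ _ he.le]; ring
    rw [ENNReal.mul_le_mul_iff_right hle0 hlet] at h2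
    rw [ENNReal.div_le_iff (vol_D_ne_zero I) (vol_D_ne_top I)]
    exact h2
  rw [hwm, withDensity_apply _ hAm, withDensity_apply _ (D_meas I)]
  refine ((hW I hI.1.1).2 _ hAm inter_subset_left).trans ?_
  gcongr

lemma exists_gamma {L K : ℝ≥0∞} {e θ p : ℝ} (he : 0 < e) (hθ : 0 < θ) (hp : 0 < p) (hL : L < ⊤) (hK : K < ⊤) :
    ∃ γ : ℝ≥0∞, γ ≠ 0 ∧ γ ≠ ⊤ ∧ 2 ^ p * (K * (L * γ ^ e) ^ θ) ≤ 2⁻¹ := by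
  set A : ℝ≥0∞ := 2 * (2 ^ p * K * L ^ θ) + 1 with hA
  have hAt : A ≠ ⊤ := by
    have : 2 ^ p * K * L ^ θ ≠ ⊤ := ENNReal.mul_ne_top (ENNReal.mul_ne_top (ENNReal.rpow_ne_top_of_nonneg hp.le (by norm_num)) hK.ne)
      (ENNReal.rpow_ne_top_of_nonneg hθ.le hL.ne)
    rw [hA]
    exact ENNReal.add_ne_top.2 ⟨ENNReal.mul_ne_top (by norm_num) this, by simp⟩
  have hA0 : A ≠ 0 := by simp [hA]
  refine ⟨A ^ (-(1 / (e * θ))), (ENNReal.rpow_pos (pos_iff_ne_zero.2 hA0) hAt).ne', 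
    (ENNReal.rpow_ne_top_of_ne_zero hA0 hAt), ?_⟩
  have : (L * (A ^ (-(1 / (e * θ)))) ^ e) ^ θ = L ^ θ * A⁻¹ := by
    rw [ENNReal.mul_rpow_of_nonneg _ _ hθ.le, ← ENNReal.rpow_mul, ← ENNReal.rpow_mul, ← ENNReal.rpow_neg_one]
    congr 2; field_simp
  rw [this]
  have e2 : 2 ^ p * (K * (L ^ θ * A⁻¹)) = (2 ^ p * K * L ^ θ) / A := by rw [div_eq_mul_inv]; ring
  rw [e2, ENNReal.div_le_iff hA0 hAt, ← ENNReal.div_eq_inv_mul, ENNReal.le_div_iff_mul_le (by norm_num) (by norm_num), mul_comm, hA]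
  exact le_self_add

theorem FM {L K : ℝ≥0∞} {e θ p : ℝ} (he : 0 < e) (hθ : 0 < θ) (hp : 0 < p) (hLt : L < ⊤) (hK : K < ⊤) :
    ∃ C : ℝ≥0∞, C < ⊤ ∧ ∀ (a : Idx n → ℝ≥0∞) (S : Finset (Idx n)) (W : (Fin n → ℝ) → ℝ≥0∞), LocHyp a L e →
      (∀ I, a I < ⊤) → Measurable W → DblHyp W S K θ → 
      ∫⁻ x, FS a S x ^ p * W x ≤ C * ∫⁻ x, MD a x ^ p * W x := by
  obtain ⟨γ, hγ0, hγt, hγ⟩ := exists_gamma he hθ hp hLt hK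
  have h2pt : (2:ℝ≥0∞) ^ p < ⊤ := ENNReal.rpow_lt_top_of_nonneg hp.le (by norm_num)
  refine ⟨2 ^ p * (2 * (2 ^ p * (gc p * (γ⁻¹) ^ p))), ?_, fun a S W hL hat hWm hW => ?_⟩
  · refine ENNReal.mul_lt_top h2pt (ENNReal.mul_lt_top (by norm_num) (ENNReal.mul_lt_top h2pt (ENNReal.mul_lt_top (gc_lt_top hp) ?_)))
    exact ENNReal.rpow_lt_top_of_nonneg hp.le (ENNReal.inv_ne_top.2 hγ0)
  have hFm := FS_meas a S
  have hMm := MD_meas a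
  set wm := volume.withDensity W with hwm
  have hconv : ∀ g : (Fin n → ℝ) → ℝ≥0∞, Measurable g → ∫⁻ x, g x * W x = ∫⁻ x, g x ∂wm := by
    intro g hg
    rw [hwm, lintegral_withDensity_eq_lintegral_mul _ hWm hg]
    simp [mul_comm]
  rw [hconv _ (by fun_prop), hconv _ (by fun_prop)]
  have hlcF : Measurable (fun x => lc p (FS a S x)) := (lc_meas p).comp hFm
  set T := ∑' k : ℤ, ((2:ℝ≥0∞) ^ k) ^ p * wm {x | (2:ℝ≥0∞) ^ k < FS a S x} with hT
  have hTt : T ≠ ⊤ := by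
    rw [hT, ← lintegral_lc _ _ hFm]
    have hU : MeasurableSet (⋃ I ∈ S, D I) := Finset.measurableSet_biUnion S (fun I _ => D_meas I)
    have hb : ∀ x, lc p (FS a S x) ≤ (⋃ I ∈ S, D I).indicator (fun _ => gc p * (∑ I ∈ S, a I) ^ p) x := by
      intro x
      by_cases hx : x ∈ ⋃ I ∈ S, D I
      · rw [indicator_of_mem hx]
        refine (lc_le hp _).trans ?_
        gcongr
        exact Finset.sum_le_sum (fun J _ => indicator_le_self _ _ _)
      · have : FS a S x = 0 := by
          apply Finset.sum_eq_zero
          intro I hI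
          apply indicator_of_notMem
          intro hxI
          exact hx (mem_biUnion hI hxI)
        rw [this, indicator_of_notMem hx]; simp [lc]
    refine ((lintegral_mono hb).trans_lt ?_).ne
    rw [lintegral_indicator hU, lintegral_const, Measure.restrict_apply_univ]
    refine ENNReal.mul_lt_top (ENNReal.mul_lt_top (gc_lt_top hp) ?_) ?_
    · exact ENNReal.rpow_lt_top_of_nonneg hp.le (ENNReal.sum_lt_top.2 (fun I _ => hat I)).ne
    · refine (measure_biUnion_finset_le _ _).trans_lt (ENNReal.sum_lt_top.2 fun I hI => ?_)
      rw [hwm, withDensity_apply _ (D_meas I)]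
      exact (hW I hI).1
  have hstep : T ≤ 2⁻¹ * T + 2 ^ p * (gc p * (γ⁻¹) ^ p) * ∫⁻ x, MD a x ^ p ∂wm := by
    have hMγ : Measurable (fun x => MD a x * γ⁻¹) := by fun_prop
    calc T = ∑' j : ℤ, ((2:ℝ≥0∞) ^ (j+1)) ^ p * wm {x | (2:ℝ≥0∞) ^ (j+1) < FS a S x} := 
          ((Equiv.addRight (1:ℤ)).tsum_eq (fun k : ℤ => ((2:ℝ≥0∞) ^ k) ^ p * wm {x | (2:ℝ≥0∞) ^ k < FS a S x})).symm
      _ ≤ ∑' j : ℤ, (2⁻¹ * (((2:ℝ≥0∞) ^ j) ^ p * wm {x | (2:ℝ≥0∞) ^ j < FS a S x}) + 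
            2 ^ p * (((2:ℝ≥0∞) ^ j) ^ p * wm {x | (2:ℝ≥0∞) ^ j < MD a x * γ⁻¹})) := by
          refine ENNReal.tsum_le_tsum fun j => ?_
          set l := (2:ℝ≥0∞) ^ j with hl
          have hl2 : (2:ℝ≥0∞) ^ (j+1) = 2 * l := by
            rw [ENNReal.zpow_add (by norm_num) (by norm_num), zpow_one, mul_comm]
          have h1 : wm {x | 2 * l < FS a S x} ≤ K * (L * γ ^ e) ^ θ * wm {x | l < FS a S x} + wm {x | l < MD a x * γ⁻¹} := by
            refine le_trans ?_ (add_le_add (goodl he hθ hL hW (two_zpow_ne_zero j) (two_zpow_ne_top j)) le_rfl)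
            refine le_trans (measure_mono ?_) (measure_union_le _ _)
            intro x hx
            by_cases hc : MD a x ≤ γ * l
            · left; refine ⟨?_, hc⟩
              rw [← two_mul]; exact hx
            · right
              simp only [mem_ofPred_eq]
              rw [← div_eq_mul_inv, ENNReal.lt_div_iff_mul_lt (Or.inl hγ0) (Or.inl hγt), mul_comm]
              exact not_le.1 hc
          rw [hl2, ENNReal.mul_rpow_of_nonneg _ _ hp.le]
          calc 2 ^ p * l ^ p * wm {x | 2 * l < FS a S x} ≤ 2 ^ p * l ^ p * (K * (L * γ ^ e) ^ θ * wm {x | l < FS a S x} + wm {x | l < MD a x * γ⁻¹}) := by gcongr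
            _ = 2 ^ p * (K * (L * γ ^ e) ^ θ) * (l ^ p * wm {x | l < FS a S x}) + 2 ^ p * (l ^ p * wm {x | l < MD a x * γ⁻¹}) := by ring
            _ ≤ _ := by gcongr
      _ = 2⁻¹ * T + 2 ^ p * ∫⁻ x, lc p (MD a x * γ⁻¹) ∂wm := by
          rw [ENNReal.tsum_add, ENNReal.tsum_mul_left, ENNReal.tsum_mul_left, lintegral_lc _ _ hMγ]
      _ ≤ 2⁻¹ * T + 2 ^ p * ∫⁻ x, gc p * (γ⁻¹) ^ p * MD a x ^ p ∂wm := by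
          gcongr with x
          refine (lc_le hp _).trans (le_of_eq ?_)
          rw [ENNReal.mul_rpow_of_nonneg _ _ hp.le]; ring
      _ = _ := by rw [lintegral_const_mul _ (by fun_prop)]; ring
  have hT2 : T ≤ 2 * (2 ^ p * (gc p * (γ⁻¹) ^ p) * ∫⁻ x, MD a x ^ p ∂wm) := by
    have e1 : T = 2⁻¹ * T + 2⁻¹ * T := by rw [← add_mul, ENNReal.inv_two_add_inv_two, one_mul]
    have h3 : 2⁻¹ * T ≤ 2 ^ p * (gc p * (γ⁻¹) ^ p) * ∫⁻ x, MD a x ^ p ∂wm := by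
      refine ENNReal.le_of_add_le_add_left (a := 2⁻¹ * T) (ENNReal.mul_ne_top (by norm_num) hTt) ?_
      rw [← e1]; exact hstep
    calc T = 2 * (2⁻¹ * T) := by rw [← mul_assoc, ENNReal.mul_inv_cancel (by norm_num) (by norm_num), one_mul]
      _ ≤ _ := by gcongr
  calc ∫⁻ x, FS a S x ^ p ∂wm ≤ ∫⁻ x, 2 ^ p * lc p (FS a S x) ∂wm := by
        apply lintegral_mono; intro x; exact le_lc hp _
    _ = 2 ^ p * T := by rw [lintegral_const_mul _ hlcF, lintegral_lc _ _ hFm]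
    _ ≤ 2 ^ p * (2 * (2 ^ p * (gc p * (γ⁻¹) ^ p) * ∫⁻ x, MD a x ^ p ∂wm)) := by gcongr
    _ = _ := by ring

end
end Ext

end

section
namespace Ext

lemma two_sided' {t : ℤ → ℝ≥0∞} {a b : ℝ} {B : ℝ≥0∞} (h1 : ∀ k ≤ 0, t k ≤ B * ((2:ℝ≥0∞) ^ k) ^ a)
    (h2 : ∀ k, 0 ≤ k → t k ≤ B * ((2:ℝ≥0∞) ^ k) ^ (-b)) : ∑' k, t k ≤ B * (gc a + gc b) := by
  have := two_sided (t := fun k : ℤ => if k ≤ 0 then ((2:ℝ≥0∞) ^ k) ^ a else ((2:ℝ≥0∞) ^ k) ^ (-b)) (a := a) (b := b) ?_ ?_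
  · refine le_trans ?_ (mul_le_mul' le_rfl this)
    rw [← ENNReal.tsum_mul_left]
    apply ENNReal.tsum_le_tsum
    intro k
    split_ifs with hk
    · exact h1 k hk
    · exact h2 k (by omega)
  · intro k hk; rw [if_pos hk]
  · intro k hk
    split_ifs with h
    · have : k = 0 := by omega
      subst this; simp
    · exact le_rfl

lemma lt_rpow_iff' {y x : ℝ≥0∞} {q : ℝ} (hq : 0 < q) : y < x ^ q ↔ y ^ (1/q) < x := by
  have : y = (y ^ (1/q)) ^ q := by rw [← ENNReal.rpow_mul, one_div_mul_cancel hq.ne', ENNReal.rpow_one]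
  conv_lhs => rw [this]
  exact ENNReal.rpow_lt_rpow_iff hq

section
variable {n : ℕ} {ν V : (Fin n → ℝ) → ℝ≥0∞} {C : ℝ≥0∞} {s0 κ : ℝ}

theorem core0 (h : WD ν V C s0 κ) {L : ℝ≥0∞} {e q : ℝ} (he : 0 < e) (hq : 0 < q) (hLt : L < ⊤) :
    ∃ C1 : ℝ≥0∞, C1 < ⊤ ∧ ∀ a : Idx n → ℝ≥0∞, LocHyp a L e → (∀ I, a I < ⊤) → ∀ N : ℝ≥0∞, N ≠ 0 → N ≠ ⊤ →
      (∀ s : ℝ≥0∞, s ≠ 0 → s ≠ ⊤ → s * (volume.withDensity (fun x => ν x * V x)) {x | s * V x < MD a x ^ q} ≤ N) → 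
      ∀ t : ℝ≥0∞, t ≠ 0 → t ≠ ⊤ → ∀ S : Finset (Idx n), ∀ E, MeasurableSet E → E ⊆ {x | t * V x < FS a S x ^ q} →
        (volume.withDensity (fun x => ν x * V x)) E < ⊤ →
        t * (volume.withDensity (fun x => ν x * V x)) E ≤ C1 * N := by
  obtain ⟨ε, P, θ, K, hε, hε1, hP, hεP, hθ, hK, hu⟩ := u1_exists h
  have h1ε : 0 < 1 - ε := by linarith
  set p := q * (1 - ε) with hp
  have hp0 : 0 < p := by positivity
  set r := 1 / (1 - ε) with hr
  have hr1 : 1 < r := by rw [hr, lt_div_iff₀ h1ε]; linarith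
  have hr0 : 0 < r := by linarith
  obtain ⟨Cf, hCf, hFM⟩ := FM (n := n) he hθ hp0 hLt hK
  set K' := K + K ^ (1 / P) with hK'
  have hPi : 0 < 1 / P := by positivity
  have hK't : K' < ⊤ := ENNReal.add_lt_top.2 ⟨hK, ENNReal.rpow_lt_top_of_nonneg hPi.le hK.ne⟩
  set b := 1 - r * (1 - 1 / P) with hb
  have hPi1 : ε < 1 / P := by rw [lt_div_iff₀ (by linarith)]; exact hεP
  have hPi2 : 1 / P < 1 := by rw [div_lt_one (by linarith)]; exact hP
  have hb0 : 0 < b := by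
    rw [hb, hr, one_div_mul_eq_div, sub_pos, div_lt_one h1ε]; linarith
  set C2 := Cf * (2 * (K' * (gc b + gc (r - 1)))) with hC2
  have hC2t : C2 < ⊤ := by
    refine ENNReal.mul_lt_top hCf (ENNReal.mul_lt_top (by norm_num) (ENNReal.mul_lt_top hK't ?_))
    simp [gc_lt_top hb0, gc_lt_top (show 0 < r - 1 by linarith)]
  refine ⟨C2 ^ r, ENNReal.rpow_lt_top_of_nonneg hr0.le hC2t.ne, fun a hL hat N hN0 hNt hN t ht0 htt S E hE hES hwt => ?_⟩
  set w := volume.withDensity (fun x => ν x * V x) with hw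
  have hmν := h.mν
  have hmV := h.mV
  have hmM := MD_meas a
  have hmF := FS_meas a S
  rcases eq_or_ne (w E) 0 with hw0 | hw0
  · rw [hw0]; simp
  have hwt := hwt.ne
  obtain ⟨u, hum, huE, huν, huP, hud⟩ := hu E hE S
  have hwE : w E = ∫⁻ x in E, ν x * V x := withDensity_apply _ hE
  rw [← hwE] at huP
  -- lower bound
  have low : t ^ (1 - ε) * w E ≤ ∫⁻ x, FS a S x ^ p * (u x * V x ^ ε) := by
    rw [hwE, ← lintegral_const_mul _ (by fun_prop)]
    refine le_trans (setLIntegral_mono' hE fun x hx => ?_) (setLIntegral_le_lintegral E _)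
    have h1 : (t * V x) ^ (1 - ε) ≤ FS a S x ^ p := by
      rw [hp, ENNReal.rpow_mul]
      exact ENNReal.rpow_le_rpow (hES hx).le h1ε.le
    calc t ^ (1 - ε) * (ν x * V x) = (t * V x) ^ (1 - ε) * (ν x * V x ^ ε) := by
          rw [ENNReal.mul_rpow_of_nonneg _ _ h1ε.le]
          have : V x = V x ^ (1 - ε) * V x ^ ε := by
            rw [← ENNReal.rpow_add_of_nonneg _ _ h1ε.le hε.le]; simp
          conv_lhs => rw [this]
          ring
      _ ≤ _ := mul_le_mul' h1 (mul_le_mul' (huE x hx) le_rfl)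
  have mid := hFM a S (fun x => u x * V x ^ ε) hL hat (by fun_prop) hud
  -- the right side
  set η := volume.withDensity (fun x => u x * V x) with hη
  set g : (Fin n → ℝ) → ℝ≥0∞ := fun x => (MD a x ^ q / V x) ^ (1 - ε) with hg
  have hgm : Measurable g := by fun_prop
  have hIntg : ∫⁻ x, MD a x ^ p * (u x * V x ^ ε) = ∫⁻ x, g x ∂η := by
    rw [hη, lintegral_withDensity_eq_lintegral_mul _ (by fun_prop) hgm]
    apply lintegral_congr_ae
    filter_upwards [h.zV] with x hx
    have hxt := h.tV x
    simp only [hg, Pi.mul_apply]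
    rw [ENNReal.div_rpow_of_nonneg _ _ h1ε.le, ← ENNReal.rpow_mul, ← hp, div_eq_mul_inv, ← ENNReal.rpow_neg]
    have : V x ^ ε = V x * V x ^ (-(1 - ε)) := by
      nth_rewrite 2 [← ENNReal.rpow_one (V x)]
      rw [← ENNReal.rpow_add _ _ hx hxt]; congr 1; ring
    rw [this]; ring
  set l0 := (N / w E) ^ (1 - ε) with hl0
  have hd0 : N / w E ≠ 0 := ENNReal.div_ne_zero.2 ⟨hN0, hwt⟩
  have hdt : N / w E ≠ ⊤ := ENNReal.div_ne_top hNt hw0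
  have hl00 : l0 ≠ 0 := (ENNReal.rpow_pos (pos_iff_ne_zero.2 hd0) hdt).ne'
  have hl0t : l0 ≠ ⊤ := ENNReal.rpow_ne_top_of_nonneg h1ε.le hdt
  have hl0r : l0 ^ r = N / w E := by
    rw [hl0, ← ENNReal.rpow_mul, hr, mul_one_div_cancel h1ε.ne', ENNReal.rpow_one]
  have hAk : ∀ k : ℤ, w {x | (2:ℝ≥0∞) ^ k < g x / l0} ≤ ((2:ℝ≥0∞) ^ k) ^ (-r) * w E := by
    intro k
    set c := (2:ℝ≥0∞) ^ k with hc
    have hc0 : c ≠ 0 := two_zpow_ne_zero k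
    have hct : c ≠ ⊤ := two_zpow_ne_top k
    have hs0 : (c * l0) ^ r ≠ 0 := (ENNReal.rpow_pos (pos_iff_ne_zero.2 (mul_ne_zero hc0 hl00)) (ENNReal.mul_ne_top hct hl0t)).ne'
    have hst : (c * l0) ^ r ≠ ⊤ := ENNReal.rpow_ne_top_of_nonneg hr0.le (ENNReal.mul_ne_top hct hl0t)
    have h1 := hN _ hs0 hst
    have h2 : w {x | c < g x / l0} ≤ w {x | (c * l0) ^ r * V x < MD a x ^ q} := by
      apply measure_mono_ae
      have hac : w ≪ volume := withDensity_absolutelyContinuous _ _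
      filter_upwards [hac.ae_le h.zV] with x hx hxl
      have hxl : c < g x / l0 := hxl
      rw [ENNReal.lt_div_iff_mul_lt (Or.inl hl00) (Or.inl hl0t)] at hxl
      simp only [hg] at hxl
      rw [lt_rpow_iff' h1ε, ← hr, ENNReal.lt_div_iff_mul_lt (Or.inl hx) (Or.inl (h.tV x))] at hxl
      exact hxl
    have h3 : (c * l0) ^ r * w {x | c < g x / l0} ≤ N := (mul_le_mul' le_rfl h2).trans h1
    have h4 : (c * l0) ^ r * (c ^ (-r) * w E) = N := by
      rw [ENNReal.mul_rpow_of_nonneg _ _ hr0.le, hl0r]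
      calc c ^ r * (N / w E) * (c ^ (-r) * w E) = (c ^ r * c ^ (-r)) * (N / w E * w E) := by ring
        _ = N := by rw [rpow_cancel hc0 hct, ENNReal.div_mul_cancel hw0 hwt, one_mul]
    rw [← h4] at h3
    exact (ENNReal.mul_le_mul_iff_right hs0 hst).1 h3
  have hη1 : ∀ A, MeasurableSet A → η A ≤ K * w A := by
    intro A hA
    rw [hη, hw, withDensity_apply _ hA, withDensity_apply _ hA, ← lintegral_const_mul _ (by fun_prop)]
    apply lintegral_mono_ae
    filter_upwards [ae_restrict_of_ae huν] with x hx
    rw [← mul_assoc]; gcongr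
  have hη2 : ∀ A, MeasurableSet A → η A ≤ (K * w E) ^ (1 / P) * w A ^ (1 - 1 / P) := by
    intro A hA
    have h1P : 0 < 1 - 1 / P := by linarith
    have := ENNReal.lintegral_prod_norm_pow_le (μ := volume.restrict A) (Finset.univ : Finset (Fin 2))
      (f := ![fun x => u x ^ P * (ν x ^ (1 - P) * V x), fun x => ν x * V x]) (p := ![1 / P, 1 - 1 / P]) ?_ ?_ ?_
    · simp only [Fin.prod_univ_two, Matrix.cons_val_zero, Matrix.cons_val_one] at this
      rw [hη, hw, withDensity_apply _ hA, withDensity_apply _ hA, ← hw]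
      calc ∫⁻ x in A, u x * V x ≤ _ := ?_
        _ ≤ _ := this
        _ ≤ _ := by
          gcongr
          exact (setLIntegral_le_lintegral A _).trans huP
      apply lintegral_mono_ae
      filter_upwards [ae_restrict_of_ae h.zν] with x hx
      have hxt := h.tν x
      rw [ENNReal.mul_rpow_of_nonneg _ _ hPi.le, ENNReal.mul_rpow_of_nonneg _ _ hPi.le, ENNReal.mul_rpow_of_nonneg _ _ h1P.le,
        ← ENNReal.rpow_mul, ← ENNReal.rpow_mul, mul_one_div_cancel (by linarith : P ≠ 0), ENNReal.rpow_one]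
      have e1 : (1 - P) * (1 / P) = -(1 - 1 / P) := by field_simp; ring
      have e2 : V x = V x ^ (1/P) * V x ^ (1 - 1/P) := by
        rw [← ENNReal.rpow_add_of_nonneg _ _ hPi.le h1P.le]; simp
      rw [e1]
      apply le_of_eq
      calc u x * V x = u x * V x * (ν x ^ (1 - 1/P) * ν x ^ (-(1 - 1/P))) := by rw [rpow_cancel hx hxt, mul_one]
        _ = u x * (V x ^ (1/P) * V x ^ (1 - 1/P)) * (ν x ^ (1 - 1/P) * ν x ^ (-(1 - 1/P))) := by rw [← e2]
        _ = _ := by ring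
    · intro i _; fin_cases i
      · simp only [Fin.zero_eta, Matrix.cons_val_zero]; fun_prop
      · exact (hmν.mul hmV).aemeasurable
    · simp [Fin.sum_univ_two]
    · intro i _; fin_cases i
      · simpa using hPi.le
      · simp only [Fin.mk_one, Matrix.cons_val_one]; exact h1P.le
  have hglm : Measurable fun x => g x / l0 := hgm.div_const _
  have hup : ∫⁻ x, g x ∂η ≤ l0 * (2 * (K' * w E * (gc b + gc (r - 1)))) := by
    calc ∫⁻ x, g x ∂η ≤ ∫⁻ x, l0 * (2 * lc 1 (g x / l0)) ∂η := by
          apply lintegral_mono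
          intro x
          have := le_lc one_pos (g x / l0)
          simp only [ENNReal.rpow_one] at this
          calc g x = l0 * (g x / l0) := (ENNReal.mul_div_cancel hl00 hl0t).symm
            _ ≤ _ := mul_le_mul' le_rfl this
      _ = l0 * (2 * ∑' k : ℤ, ((2:ℝ≥0∞) ^ k) ^ (1:ℝ) * η {x | (2:ℝ≥0∞) ^ k < g x / l0}) := by
          have hlm : Measurable fun x => lc 1 (g x / l0) := (lc_meas 1).comp hglm
          rw [lintegral_const_mul _ (by fun_prop), lintegral_const_mul _ hlm, lintegral_lc _ _ hglm]
      _ ≤ _ := by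
          refine mul_le_mul' le_rfl (mul_le_mul' le_rfl (two_sided' ?_ ?_))
          · intro k _
            have hm : MeasurableSet {x | (2:ℝ≥0∞) ^ k < g x / l0} := measurableSet_lt measurable_const hglm
            have hc0 := two_zpow_ne_zero k
            have hct := two_zpow_ne_top k
            have h1P : 0 < 1 - 1 / P := by linarith
            set c := (2:ℝ≥0∞) ^ k
            calc c ^ (1:ℝ) * η {x | c < g x / l0} ≤ c ^ (1:ℝ) * ((K * w E) ^ (1 / P) * (c ^ (-r) * w E) ^ (1 - 1 / P)) := by
                  refine mul_le_mul' le_rfl ((hη2 _ hm).trans (mul_le_mul' le_rfl ?_))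
                  exact ENNReal.rpow_le_rpow (hAk k) h1P.le
              _ = K ^ (1/P) * (w E ^ (1/P) * w E ^ (1 - 1/P)) * (c ^ (1:ℝ) * c ^ (-r * (1 - 1/P))) := by
                  rw [ENNReal.mul_rpow_of_nonneg _ _ hPi.le, ENNReal.mul_rpow_of_nonneg _ _ h1P.le, ← ENNReal.rpow_mul]; ring
              _ = K ^ (1/P) * w E * c ^ b := by
                  rw [← ENNReal.rpow_add _ _ hc0 hct, ← ENNReal.rpow_add_of_nonneg _ _ hPi.le h1P.le, hb]
                  congr 2
                  · simp
                  · ring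
              _ ≤ _ := by
                  gcongr; exact le_add_self
          · intro k _
            have hm : MeasurableSet {x | (2:ℝ≥0∞) ^ k < g x / l0} := measurableSet_lt measurable_const hglm
            have hc0 := two_zpow_ne_zero k
            have hct := two_zpow_ne_top k
            set c := (2:ℝ≥0∞) ^ k
            calc c ^ (1:ℝ) * η {x | c < g x / l0} ≤ c ^ (1:ℝ) * (K * (c ^ (-r) * w E)) :=
                  mul_le_mul' le_rfl ((hη1 _ hm).trans (mul_le_mul' le_rfl (hAk k)))
              _ = K * w E * (c ^ (1:ℝ) * c ^ (-r)) := by ring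
              _ = K * w E * c ^ (-(r - 1)) := by
                  rw [← ENNReal.rpow_add _ _ hc0 hct]; congr 2; ring
              _ ≤ _ := by gcongr; exact le_self_add
  have hfin : t ^ (1 - ε) ≤ C2 * l0 := by
    rw [← ENNReal.mul_le_mul_iff_left hw0 hwt]
    calc t ^ (1 - ε) * w E ≤ _ := low.trans mid
      _ ≤ Cf * (l0 * (2 * (K' * w E * (gc b + gc (r - 1))))) := by rw [hIntg]; gcongr
      _ = _ := by rw [hC2]; ring
  have h5 : t ≤ C2 ^ r * (N / w E) := by
    have := ENNReal.rpow_le_rpow hfin hr0.le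
    rw [← ENNReal.rpow_mul, hr, mul_one_div_cancel h1ε.ne', ENNReal.rpow_one, ← hr, ENNReal.mul_rpow_of_nonneg _ _ hr0.le, hl0r] at this
    exact this
  calc t * w E ≤ C2 ^ r * (N / w E) * w E := by gcongr
    _ = _ := by rw [mul_assoc, ENNReal.div_mul_cancel hw0 hwt]

theorem core (h : WD ν V C s0 κ) {L : ℝ≥0∞} {e q : ℝ} (he : 0 < e) (hq : 0 < q) (hLt : L < ⊤) :
    ∃ C1 : ℝ≥0∞, C1 < ⊤ ∧ ∀ a : Idx n → ℝ≥0∞, LocHyp a L e → (∀ I, a I < ⊤) → ∀ N : ℝ≥0∞, N ≠ 0 → N ≠ ⊤ →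
      (∀ s : ℝ≥0∞, s ≠ 0 → s ≠ ⊤ → s * (volume.withDensity (fun x => ν x * V x)) {x | s * V x < MD a x ^ q} ≤ N) → 
      ∀ t : ℝ≥0∞, t ≠ 0 → t ≠ ⊤ → 
        t * (volume.withDensity (fun x => ν x * V x)) {x | t * V x < (∑' I, (D I).indicator (fun _ => a I) x) ^ q} ≤ C1 * N := by
  obtain ⟨C1, hC1, H⟩ := core0 h he hq hLt
  refine ⟨C1, hC1, fun a hL hat N hN0 hNt hN t ht0 htt => ?_⟩
  have H' := H a hL hat N hN0 hNt hN t ht0 htt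
  have hmν := h.mν
  have hmV := h.mV
  set w := volume.withDensity (fun x => ν x * V x) with hw
  have hset : {x | t * V x < (∑' I, (D I).indicator (fun _ => a I) x) ^ q} = ⋃ S : Finset (Idx n), {x | t * V x < FS a S x ^ q} := by
    ext x
    simp only [mem_ofPred_eq, mem_iUnion]
    rw [lt_rpow_iff' hq, ENNReal.tsum_eq_iSup_sum, lt_iSup_iff]
    simp only [lt_rpow_iff' hq, FS]
  have hmono : ∀ S T : Finset (Idx n), S ⊆ T → {x | t * V x < FS a S x ^ q} ⊆ {x | t * V x < FS a T x ^ q} := by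
    intro S T hST x hx
    refine lt_of_lt_of_le (show _ < _ from hx) (ENNReal.rpow_le_rpow ?_ hq.le)
    exact Finset.sum_le_sum_of_subset hST
  have hdir : Directed (· ⊆ ·) (fun S : Finset (Idx n) => {x | t * V x < FS a S x ^ q}) := by
    classical
    intro S T
    exact ⟨S ∪ T, hmono _ _ Finset.subset_union_left, hmono _ _ Finset.subset_union_right⟩
  rw [hset, hdir.measure_iUnion, ENNReal.mul_iSup]
  refine iSup_le fun S => ?_
  set E : ℕ → Set (Fin n → ℝ) := fun j => {x | t * V x < FS a S x ^ q} ∩ {x | ν x * V x ≤ j} with hE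
  have hEu : {x | t * V x < FS a S x ^ q} = ⋃ j, E j := by
    ext x
    simp only [hE, mem_iUnion, mem_inter_iff]
    constructor
    · intro hx
      obtain ⟨j, hj⟩ := ENNReal.exists_nat_gt (ENNReal.mul_ne_top (h.tν x) (h.tV x))
      exact ⟨j, hx, hj.le⟩
    · rintro ⟨j, hx, _⟩; exact hx
  have hEm : Monotone E := by
    intro i j hij x hx
    refine ⟨hx.1, le_trans (show ν x * V x ≤ i from hx.2) ?_⟩
    exact_mod_cast hij
  rw [hEu, hEm.measure_iUnion, ENNReal.mul_iSup]
  refine iSup_le fun j => ?_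
  have hmF := FS_meas a S
  have hEme : MeasurableSet (E j) := by
    refine MeasurableSet.inter (measurableSet_lt (by fun_prop) (by fun_prop)) (measurableSet_le (by fun_prop) (by fun_prop))
  refine H' S (E j) hEme inter_subset_left ?_
  have hsub : E j ⊆ ⋃ I ∈ S, D I := by
    intro x hx
    by_contra hc
    have : FS a S x = 0 := by
      apply Finset.sum_eq_zero
      intro I hI
      apply indicator_of_notMem
      intro hxI
      exact hc (mem_biUnion hI hxI)
    have h1 : t * V x < FS a S x ^ q := hx.1
    rw [this, ENNReal.zero_rpow_of_pos hq] at h1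
    simp at h1
  rw [hw, withDensity_apply _ hEme]
  calc ∫⁻ x in E j, ν x * V x ≤ ∫⁻ x in E j, (j:ℝ≥0∞) := setLIntegral_mono' hEme (fun x hx => hx.2)
    _ = j * volume (E j) := by rw [lintegral_const, Measure.restrict_apply_univ]
    _ ≤ j * ∑ I ∈ S, volume (D I) := by
        gcongr
        exact (measure_mono hsub).trans (measure_biUnion_finset_le _ _)
    _ < ⊤ := ENNReal.mul_lt_top (by simp) (ENNReal.sum_lt_top.2 fun I _ => (vol_D_ne_top I).lt_top)

end
end Ext

end

section
namespace Ext

def T {n : ℕ} (I : Idx n) : Set (Fin n → ℝ) :=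
  Icc (fun i => ((I.2 i : ℝ) - 1) * 2 ^ I.1) (fun i => ((I.2 i : ℝ) - 1) * 2 ^ I.1 + 3 * 2 ^ I.1)

lemma T_meas {n : ℕ} (I : Idx n) : MeasurableSet (T I) := measurableSet_Icc

lemma K_sub {n : ℕ} {I J : Idx n} (h : D J ⊆ D I) : K J ⊆ K I := by
  have h1 := closure_mono h
  have e : ∀ I : Idx n, closure (D I) = K I := by
    intro I
    rw [D_eq_pi, closure_pi_set, K, ← pi_univ_Icc]
    congr 1
    ext i : 1
    have : (0:ℝ) < 2 ^ I.1 := by positivity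
    rw [closure_Ico (by nlinarith)]
    congr 1; ring
  rwa [e, e] at h1

lemma T_sub {n : ℕ} {I J : Idx n} (hl : J.1 ≤ I.1) (h : D J ⊆ D I) : T J ⊆ T I := by
  have h1 := K_sub h
  have hp : (0:ℝ) < 2 ^ J.1 := by positivity
  have hle : (2:ℝ) ^ J.1 ≤ 2 ^ I.1 := zpow_le_zpow_right₀ (by norm_num) hl
  rw [K, K, Icc_subset_Icc_iff (fun i => by simp [hp.le])] at h1
  apply Icc_subset_Icc
  · intro i; have := h1.1 i; simp only at this ⊢; nlinarith
  · intro i; have := h1.2 i; simp only at this ⊢; nlinarith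

open Classical in
lemma overlap {n : ℕ} (S : Finset (Idx n)) (j : ℤ) (hS : ∀ J ∈ S, J.1 = j) (y : Fin n → ℝ) :
    (S.filter (fun J => y ∈ T J)).card ≤ 4 ^ n := by
  have hp : (0:ℝ) < 2 ^ j := by positivity
  let B : Finset (Fin n → ℤ) := Fintype.piFinset fun i => Finset.Icc (⌈y i / 2 ^ j⌉ - 2) (⌈y i / 2 ^ j⌉ + 1)
  have hB : B.card = 4 ^ n := by
    simp only [B, Fintype.card_piFinset, Int.card_Icc]
    have : ∀ i, (⌈y i / 2 ^ j⌉ + 1 + 1 - (⌈y i / 2 ^ j⌉ - 2)).toNat = 4 := by intro i; ring_nf; rfl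
    simp [this]
  rw [← hB]
  apply Finset.card_le_card_of_injOn (fun J => J.2)
  · intro J hJ
    simp only [Finset.coe_filter, Set.mem_ofPred_eq] at hJ
    obtain ⟨hJ1, hJ2⟩ := hJ
    have hj := hS J hJ1
    simp only [T, hj] at hJ2
    simp only [B, Finset.mem_coe, Fintype.mem_piFinset, Finset.mem_Icc]
    intro i
    have h1 := hJ2.1 i
    have h2 := hJ2.2 i
    simp only at h1 h2
    rw [← le_div_iff₀ hp] at h1
    have h2' : y i / 2 ^ j ≤ (J.2 i : ℝ) + 2 := by rw [div_le_iff₀ hp]; linarith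
    constructor
    · have : ⌈y i / 2 ^ j⌉ ≤ J.2 i + 2 := by rw [Int.ceil_le]; push_cast; exact h2'
      linarith
    · have : (J.2 i : ℝ) - 1 ≤ ⌈y i / 2 ^ j⌉ := h1.trans (Int.le_ceil _)
      have : J.2 i - 1 ≤ ⌈y i / 2 ^ j⌉ := by exact_mod_cast this
      linarith
  · intro J hJ J' hJ' he
    simp only [Finset.coe_filter, Set.mem_ofPred_eq] at hJ hJ'
    exact Prod.ext ((hS J hJ.1).trans (hS J' hJ'.1).symm) he

lemma sum_T {n : ℕ} (S : Finset (Idx n)) (j : ℤ) (hS : ∀ J ∈ S, J.1 = j) (I : Idx n) (hI : ∀ J ∈ S, T J ⊆ T I)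
    {g : (Fin n → ℝ) → ℝ≥0∞} (hg : Measurable g) :
    ∑ J ∈ S, ∫⁻ y in T J, g y ≤ 4 ^ n * ∫⁻ y in T I, g y := by
  classical
  have e : ∀ J ∈ S, ∫⁻ y in T J, g y = ∫⁻ y, (T J).indicator g y := fun J _ => (lintegral_indicator (T_meas J) _).symm
  rw [Finset.sum_congr rfl e, ← lintegral_finsetSum _ (fun J _ => hg.indicator (T_meas J)), ← lintegral_indicator (T_meas I),
    ← lintegral_const_mul _ (hg.indicator (T_meas I))]
  apply lintegral_mono
  intro y
  simp only [Set.indicator_apply]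
  rw [← Finset.sum_filter, Finset.sum_const, nsmul_eq_mul]
  by_cases hy : y ∈ T I
  · rw [if_pos hy]
    have := overlap S j hS y
    have h2 : (((S.filter (fun J => y ∈ T J)).card : ℕ) : ℝ≥0∞) ≤ ((4 ^ n : ℕ) : ℝ≥0∞) := by exact_mod_cast this
    push_cast at h2
    exact mul_le_mul' h2 le_rfl
  · have : S.filter (fun J => y ∈ T J) = ∅ := by
      rw [Finset.filter_eq_empty_iff]; intro J hJ hy'; exact hy (hI J hJ hy')
    rw [this]; simp

lemma sum_prod_le {ι κ : Type*} (S : Finset ι) (s : Finset κ) (f : κ → ι → ℝ≥0∞) (p : ℝ) (hp : 0 ≤ p)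
    (hs : (s.card : ℝ) * p = 1) : ∑ J ∈ S, ∏ i ∈ s, f i J ^ p ≤ ∏ i ∈ s, (∑ J ∈ S, f i J) ^ p := by
  let _ : MeasurableSpace ι := ⊤
  have := ENNReal.lintegral_prod_norm_pow_le (μ := ∑ J ∈ S, Measure.dirac J) s (f := f) (p := fun _ => p)
    (fun i _ => (measurable_from_top).aemeasurable) (by simpa using hs) (fun _ _ => hp)
  simpa [lintegral_finsetSum_measure] using this

def aco {n m : ℕ} (β : ℝ) (g : Fin m → (Fin n → ℝ) → ℝ≥0∞) (I : Idx n) : ℝ≥0∞ :=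
  ((2:ℝ≥0∞) ^ I.1) ^ (-β) * ∏ i, ∫⁻ y in T I, g i y

lemma ofReal_two_zpow (j : ℤ) : ENNReal.ofReal ((2:ℝ) ^ j) = (2:ℝ≥0∞) ^ j := by
  rw [← Real.rpow_intCast, ← ENNReal.ofReal_rpow_of_pos (by norm_num), ENNReal.rpow_intCast]; simp

lemma finsum_rpow_le {ι : Type*} (S : Finset ι) (f : ι → ℝ≥0∞) {e : ℝ} (he : 0 < e) (he1 : e ≤ 1) :
    (∑ i ∈ S, f i) ^ e ≤ ∑ i ∈ S, f i ^ e := by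
  classical
  induction S using Finset.induction with
  | empty => simp [he]
  | insert a s ha ih =>
    rw [Finset.sum_insert ha, Finset.sum_insert ha]
    exact (ENNReal.rpow_add_le_add_rpow _ _ he.le he1).trans (add_le_add le_rfl ih)

lemma vol_D' {n : ℕ} (I : Idx n) : volume (D I) = ((2:ℝ≥0∞) ^ I.1) ^ (n:ℝ) := by
  rw [vol_D, ENNReal.rpow_natCast, ofReal_two_zpow]

theorem aco_loc {n m : ℕ} (hm : 0 < m) {α β : ℝ} (hα : 0 < α) (hβ : β = m * n - α)
    (g : Fin m → (Fin n → ℝ) → ℝ≥0∞) (hg : ∀ i, Measurable (g i)) :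
    LocHyp (aco β g) (4 ^ n * gc (α / m)) (1 / m) := by
  classical
  intro S I
  have hm0 : (0:ℝ) < m := by exact_mod_cast hm
  have he : (0:ℝ) < 1 / m := by positivity
  have hm1 : (1:ℝ) ≤ m := by exact_mod_cast hm
  have he1 : (1:ℝ) / m ≤ 1 := by rw [div_le_one hm0]; exact hm1
  set e : ℝ := 1 / m with hedef
  set G := ∏ i, (∫⁻ y in T I, g i y) ^ e with hG
  set Lc := loc S I with hLc
  have hloc : ∀ J ∈ Lc, J.1 ≤ I.1 ∧ D J ⊆ D I := by
    intro J hJ; simp only [hLc, loc, Finset.mem_filter] at hJ; exact hJ.2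
  have hterm : ∀ J, volume (D J) * aco β g J ^ e = ((2:ℝ≥0∞) ^ J.1) ^ (α / m) * ∏ i, (∫⁻ y in T J, g i y) ^ e := by
    intro J
    rw [vol_D', aco, ENNReal.mul_rpow_of_nonneg _ _ he.le, ← ENNReal.rpow_mul, ← mul_assoc,
      ← ENNReal.rpow_add _ _ (two_zpow_ne_zero _) (two_zpow_ne_top _), ENNReal.prod_rpow_of_nonneg he.le]
    congr 2
    rw [hedef, hβ]; field_simp; ring
  calc ∫⁻ x in D I, FS (aco β g) Lc x ^ e
      ≤ ∫⁻ x, ∑ J ∈ Lc, (D J).indicator (fun _ => aco β g J ^ e) x := by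
        refine (setLIntegral_le_lintegral _ _).trans (lintegral_mono fun x => ?_)
        rw [FS]
        refine (finsum_rpow_le _ _ he he1).trans ?_
        apply Finset.sum_le_sum
        intro J _
        simp only [Set.indicator_apply]
        split_ifs
        · rfl
        · simp [he]
    _ = ∑ J ∈ Lc, volume (D J) * aco β g J ^ e := by
        rw [lintegral_finsetSum _ (fun J _ => measurable_const.indicator (D_meas J))]
        refine Finset.sum_congr rfl fun J _ => ?_
        rw [lintegral_indicator (D_meas J), setLIntegral_const, mul_comm]
    _ = ∑ j ∈ Lc.image Prod.fst, ∑ J ∈ Lc with J.1 = j, volume (D J) * aco β g J ^ e := by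
        rw [Finset.sum_fiberwise_of_maps_to]
        intro J hJ; exact Finset.mem_image_of_mem _ hJ
    _ ≤ ∑ j ∈ Lc.image Prod.fst, (if j ≤ I.1 then ((2:ℝ≥0∞) ^ j) ^ (α / m) else 0) * (4 ^ n * G) := by
        refine Finset.sum_le_sum fun j hj => ?_
        obtain ⟨J0, hJ0, rfl⟩ := Finset.mem_image.1 hj
        rw [if_pos (hloc J0 hJ0).1]
        set j := J0.1
        calc ∑ J ∈ Lc with J.1 = j, volume (D J) * aco β g J ^ e
            = ((2:ℝ≥0∞) ^ j) ^ (α / m) * ∑ J ∈ Lc with J.1 = j, ∏ i, (∫⁻ y in T J, g i y) ^ e := by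
              rw [Finset.mul_sum]
              refine Finset.sum_congr rfl fun J hJ => ?_
              rw [hterm, (Finset.mem_filter.1 hJ).2]
          _ ≤ ((2:ℝ≥0∞) ^ j) ^ (α / m) * ∏ i, (4 ^ n * ∫⁻ y in T I, g i y) ^ e := by
              refine mul_le_mul' le_rfl ((sum_prod_le _ _ _ _ he.le ?_).trans ?_)
              · simp [hedef, hm0.ne']
              · refine Finset.prod_le_prod' fun i _ => ENNReal.rpow_le_rpow ?_ he.le
                refine sum_T _ j (fun J hJ => (Finset.mem_filter.1 hJ).2) I (fun J hJ => ?_) (hg i)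
                have := hloc J (Finset.mem_filter.1 hJ).1
                exact T_sub this.1 this.2
          _ = _ := by
              simp only [ENNReal.mul_rpow_of_nonneg _ _ he.le, Finset.prod_mul_distrib, Finset.prod_const, Finset.card_univ,
                Fintype.card_fin]
              congr 2
              rw [← ENNReal.rpow_natCast, ← ENNReal.rpow_mul, hedef, one_div_mul_cancel hm0.ne', ENNReal.rpow_one]
    _ ≤ (gc (α / m) * ((2:ℝ≥0∞) ^ I.1) ^ (α / m)) * (4 ^ n * G) := by
        rw [← Finset.sum_mul]
        exact mul_le_mul' ((ENNReal.sum_le_tsum _).trans (tsum_geo_le I.1)) le_rfl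
    _ = 4 ^ n * gc (α / m) * (((2:ℝ≥0∞) ^ I.1) ^ (α / m) * G) := by ring
    _ = _ := by rw [← hterm, mul_assoc, mul_assoc, mul_assoc]

end Ext

end

section
namespace Ext

lemma lintegral_prod_pi {E : Type*} [MeasureSpace E] [SigmaFinite (volume : Measure E)] :
    ∀ {m : ℕ} (g : Fin m → E → ℝ≥0∞), (∀ i, Measurable (g i)) →
    ∫⁻ y : Fin m → E, ∏ i, g i (y i) = ∏ i, ∫⁻ z, g i z := by
  intro m
  induction m with
  | zero => intro g _; simp [volume_pi, Measure.pi_of_empty]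
  | succ m ih =>
    intro g hg
    have hmp := (volume_preserving_piFinSuccAbove (fun _ : Fin (m+1) => E) 0).symm
    rw [← hmp.lintegral_comp_emb (MeasurableEquiv.measurableEmbedding _)]
    simp only [Fin.prod_univ_succ, MeasurableEquiv.piFinSuccAbove_symm_apply, Fin.insertNthEquiv, Equiv.coe_fn_mk,
      Fin.insertNth_zero, Fin.cons_zero, Fin.cons_succ]
    rw [← ih (fun i => g i.succ) (fun i => hg _), Measure.volume_eq_prod]
    exact lintegral_prod_mul (hg 0).aemeasurable (Finset.measurable_prod _ fun i _ => (hg _).comp (measurable_pi_apply i)).aemeasurable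

lemma tr {n : ℕ} (F : ESp n → ℝ≥0∞) (A : Set (Fin n → ℝ)) :
    ∫⁻ x in {x : ESp n | x.ofLp ∈ A}, F x = ∫⁻ z in A, F (WithLp.toLp 2 z) := by
  have h := PiLp.volume_preserving_toLp (Fin n)
  have he : MeasurableEmbedding (@WithLp.toLp 2 (Fin n → ℝ)) := (MeasurableEquiv.toLp 2 (Fin n → ℝ)).measurableEmbedding
  rw [← h.setLIntegral_comp_preimage_emb he]
  rfl

lemma tr_vol {n : ℕ} (A : Set (Fin n → ℝ)) : volume {x : ESp n | x.ofLp ∈ A} = volume A := by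
  have := tr (fun _ => 1) A
  simpa using this

lemma cube_T {n : ℕ} (c : Fin n → ℝ) {h : ℝ} (hh : 0 < h) : IsCube {x : ESp n | x.ofLp ∈ Icc c (fun i => c i + h)} := by
  refine ⟨c, h, hh, ?_⟩
  ext x
  simp only [Set.mem_ofPred_eq, Set.mem_Icc, Pi.le_def]
  exact ⟨fun h i => ⟨h.1 i, h.2 i⟩, fun h => ⟨fun i => (h i).1, fun i => (h i).2⟩⟩

def gX {n m : ℕ} (f : Fin m → ESp n → ℝ) (i : Fin m) (z : Fin n → ℝ) : ℝ≥0∞ := ENNReal.ofReal |f i (WithLp.toLp 2 z)|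

lemma gX_meas {n m : ℕ} {f : Fin m → ESp n → ℝ} (hf : ∀ i, Measurable (f i)) (i : Fin m) : Measurable (gX f i) := by
  have : Measurable fun z : Fin n → ℝ => f i (WithLp.toLp 2 z) := (hf i).comp (MeasurableEquiv.toLp 2 (Fin n → ℝ)).measurable
  unfold gX
  exact (measurable_norm.comp this).ennreal_ofReal

lemma D_sub_T {n : ℕ} (I : Idx n) : D I ⊆ T I := by
  intro x hx
  rw [D_eq_pi] at hx
  have hp : (0:ℝ) < 2 ^ I.1 := by positivity
  constructor
  · intro i; have := (hx i trivial).1; simp only; nlinarith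
  · intro i; have := (hx i trivial).2; simp only; nlinarith

lemma vol_T {n : ℕ} (I : Idx n) : volume (T I) = (3 * (2:ℝ≥0∞) ^ I.1) ^ (n:ℝ) := by
  rw [T, Real.volume_Icc_pi, ENNReal.rpow_natCast, ← ofReal_two_zpow]
  simp [ENNReal.ofReal_mul]

lemma aco_le_M {n m : ℕ} (hn : 0 < n) (hm : 0 < m) {α β : ℝ} (hβ : β = m * n - α) (hβ0 : 0 < β)
    (f : Fin m → ESp n → ℝ) (x : ESp n) (I : Idx n) (hx : x.ofLp ∈ D I) :
    aco β (gX f) I ≤ 3 ^ β * multiMα α f x := by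
  have hm0 : (0:ℝ) < m := by exact_mod_cast hm
  have hn0 : (0:ℝ) < n := by exact_mod_cast hn
  have h20 := two_zpow_ne_zero I.1
  have h2t := two_zpow_ne_top I.1
  have hM : ∏ i, (volume {x : ESp n | x.ofLp ∈ T I} ^ (1 - α / ((m : ℝ) * (n : ℝ))))⁻¹ *
      ∫⁻ y in {x : ESp n | x.ofLp ∈ T I}, ENNReal.ofReal |f i y| ≤ multiMα α f x := by
    rw [multiMα]
    exact le_iSup₂_of_le _ (cube_T _ (by positivity)) (le_iSup_of_le (D_sub_T I hx) le_rfl)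
  refine le_trans (le_of_eq ?_) (mul_le_mul' le_rfl hM)
  simp only [tr, tr_vol, vol_T, Finset.prod_mul_distrib, Finset.prod_const, Finset.card_univ, Fintype.card_fin]
  rw [aco, ← mul_assoc]
  congr 1
  rw [← ENNReal.rpow_mul, ← ENNReal.rpow_neg, ← ENNReal.rpow_natCast, ← ENNReal.rpow_mul]
  have : -(n * (1 - α / (m * n))) * (m:ℝ) = -β := by rw [hβ]; field_simp
  rw [this, ENNReal.mul_rpow_of_ne_top (by simp) h2t, ← mul_assoc, ← ENNReal.rpow_add _ _ (by simp) (by simp)]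
  simp

lemma MD_le_M {n m : ℕ} (hn : 0 < n) (hm : 0 < m) {α β : ℝ} (hβ : β = m * n - α) (hβ0 : 0 < β)
    (f : Fin m → ESp n → ℝ) (x : ESp n) :
    MD (aco β (gX f)) x.ofLp ≤ 3 ^ β * multiMα α f x := by
  classical
  refine iSup_le fun I => ?_
  rw [Set.indicator_apply]
  split_ifs with h
  · exact aco_le_M hn hm hβ hβ0 f x I h
  · exact zero_le

lemma mem_T_of_dist {n : ℕ} (j : ℤ) (x y : ESp n) (h : dist x y ≤ 2 ^ j) : y.ofLp ∈ T (cell j x.ofLp) := by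
  have hp : (0:ℝ) < 2 ^ j := by positivity
  have hk : ∀ i, |x i - y i| ≤ 2 ^ j := by
    intro i
    have := PiLp.norm_apply_le (x - y) i
    rw [← dist_eq_norm] at this
    simpa using this.trans h
  have h1 : ∀ i, (⌊x i / 2 ^ j⌋ : ℝ) * 2 ^ j ≤ x i := fun i => by
    rw [← le_div_iff₀ hp]; exact Int.floor_le _
  have h2 : ∀ i, x i < ((⌊x i / 2 ^ j⌋ : ℝ) + 1) * 2 ^ j := fun i => by
    rw [← div_lt_iff₀ hp]; exact Int.lt_floor_add_one _
  constructor
  · intro i; have a := abs_le.1 (hk i); have b := h1 i; simp only [cell]; nlinarith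
  · intro i; have a := abs_le.1 (hk i); have b := h2 i; simp only [cell]; nlinarith

lemma ker_le {n m : ℕ} {β : ℝ} (hβ0 : 0 < β) (f : Fin m → ESp n → ℝ) (x : ESp n) (y : Fin m → ESp n) :
    ‖(∏ i, f i (y i)) / (∑ i, dist x (y i)) ^ β‖ₑ ≤
      2 ^ β * ∑' j : ℤ, ((2:ℝ≥0∞) ^ j) ^ (-β) * ∏ i, {z : ESp n | z.ofLp ∈ T (cell j x.ofLp)}.indicator (fun z => ENNReal.ofReal |f i z|) (y i) := by
  set s := ∑ i, dist x (y i) with hs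
  have hs0 : 0 ≤ s := Finset.sum_nonneg fun i _ => dist_nonneg
  rcases hs0.eq_or_lt with h0 | hpos
  · rw [← h0, Real.zero_rpow hβ0.ne']; simp
  obtain ⟨k, hk1, hk2⟩ := exists_mem_Ioc_zpow hpos (one_lt_two : (1:ℝ) < 2)
  have hmem : ∀ i, (y i) ∈ {z : ESp n | z.ofLp ∈ T (cell (k+1) x.ofLp)} := fun i =>
    mem_T_of_dist _ _ _ (le_trans (Finset.single_le_sum (f := fun i => dist x (y i)) (fun i _ => dist_nonneg) (Finset.mem_univ i)) hk2)
  refine le_trans ?_ (mul_le_mul' le_rfl (ENNReal.le_tsum (k+1)))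
  simp only [Set.indicator_of_mem (hmem _)]
  rw [← ENNReal.ofReal_prod_of_nonneg (fun i _ => abs_nonneg _), ← Finset.abs_prod, Real.enorm_eq_ofReal_abs, abs_div,
    abs_of_nonneg (Real.rpow_nonneg hs0 _), div_eq_mul_inv, ENNReal.ofReal_mul (abs_nonneg _), mul_comm, ← mul_assoc]
  refine mul_le_mul' ?_ le_rfl
  rw [ENNReal.ofReal_inv_of_pos (by positivity), ← ENNReal.ofReal_rpow_of_pos hpos, ENNReal.rpow_neg, ← div_eq_mul_inv]
  rw [← ENNReal.inv_div (Or.inl (by simp)) (Or.inl (by simp)), ENNReal.inv_le_inv, ← ENNReal.div_rpow_of_nonneg _ _ hβ0.le]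
  apply ENNReal.rpow_le_rpow _ hβ0.le
  rw [ENNReal.zpow_add (by norm_num) (by norm_num), zpow_one, ENNReal.mul_div_cancel_right (by simp) (by simp), ← ofReal_two_zpow]
  exact ENNReal.ofReal_le_ofReal hk1.le

lemma I_le {n m : ℕ} {α β : ℝ} (hβ : β = m * n - α) (hβ0 : 0 < β)
    (f : Fin m → ESp n → ℝ) (hf : ∀ i, Measurable (f i)) (x : ESp n) :
    ENNReal.ofReal |multiIα α f x| ≤ 2 ^ β * ∑' I, (D I).indicator (fun _ => aco β (gX f) I) x.ofLp := by
  have hA : ∀ j, MeasurableSet {z : ESp n | z.ofLp ∈ T (cell j x.ofLp)} := fun j =>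
    (MeasurableEquiv.toLp 2 (Fin n → ℝ)).symm.measurable (T_meas _)
  have hfm : ∀ j i, Measurable ({z : ESp n | z.ofLp ∈ T (cell j x.ofLp)}.indicator (fun z => ENNReal.ofReal |f i z|)) := fun j i =>
    ((measurable_norm.comp (hf i)).ennreal_ofReal).indicator (hA j)
  have hpm : ∀ j, Measurable fun y : Fin m → ESp n => ∏ i, {z : ESp n | z.ofLp ∈ T (cell j x.ofLp)}.indicator (fun z => ENNReal.ofReal |f i z|) (y i) :=
    fun j => Finset.measurable_prod _ fun i _ => (hfm j i).comp (measurable_pi_apply i)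
  rw [multiIα, ← hβ, ← Real.enorm_eq_ofReal_abs]
  calc _ ≤ ∫⁻ y : Fin m → ESp n, ‖(∏ i, f i (y i)) / (∑ i, dist x (y i)) ^ β‖ₑ := enorm_integral_le_lintegral_enorm _
    _ ≤ _ := lintegral_mono (ker_le hβ0 f x)
    _ = 2 ^ β * ∑' j : ℤ, ((2:ℝ≥0∞) ^ j) ^ (-β) * ∏ i, ∫⁻ z in {z : ESp n | z.ofLp ∈ T (cell j x.ofLp)}, ENNReal.ofReal |f i z| := by
        rw [lintegral_const_mul _ (by fun_prop), lintegral_tsum (fun j => ((hpm j).const_mul _).aemeasurable)]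
        congr 2
        ext j
        rw [lintegral_const_mul _ (hpm j), lintegral_prod_pi _ (hfm j)]
        simp only [lintegral_indicator (hA j)]
    _ = 2 ^ β * ∑' j : ℤ, aco β (gX f) (cell j x.ofLp) := by simp only [tr]; rfl
    _ = 2 ^ β * ∑' j : ℤ, (D (cell j x.ofLp)).indicator (fun _ => aco β (gX f) (cell j x.ofLp)) x.ofLp := by
        simp only [Set.indicator_of_mem (mem_cell _ _)]
    _ ≤ _ := by
        refine mul_le_mul' le_rfl ?_
        exact ENNReal.tsum_comp_le_tsum_of_injective (f := fun j => cell j x.ofLp) (fun a b h => congrArg Prod.fst h)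
          (fun I => (D I).indicator (fun _ => aco β (gX f) I) x.ofLp)

lemma aco_lt_top {n m : ℕ} {β : ℝ} (f : Fin m → ESp n → ℝ) (hB : ∀ i, ∃ B : ℝ, ∀ x, |f i x| ≤ B) (I : Idx n) :
    aco β (gX f) I < ⊤ := by
  rw [aco]
  refine ENNReal.mul_lt_top (ENNReal.rpow_ne_top_of_ne_zero (two_zpow_ne_zero _) (two_zpow_ne_top _)).lt_top ?_
  refine ENNReal.prod_lt_top fun i _ => ?_
  obtain ⟨B, hB⟩ := hB i
  calc ∫⁻ y in T I, gX f i y ≤ ∫⁻ y in T I, ENNReal.ofReal B := lintegral_mono fun y => ENNReal.ofReal_le_ofReal (hB _)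
    _ < ⊤ := by
      rw [setLIntegral_const]
      exact ENNReal.mul_lt_top ofReal_lt_top (by rw [T]; exact isCompact_Icc.measure_lt_top)

end Ext

end

section
namespace Ext

lemma tr_ae {n : ℕ} {P : ESp n → Prop} {A : Set (Fin n → ℝ)}
    (h : ∀ᵐ x ∂(volume.restrict {x : ESp n | x.ofLp ∈ A}), P x) : ∀ᵐ z ∂(volume.restrict A), P (WithLp.toLp 2 z) := by
  have hp := PiLp.volume_preserving_toLp (Fin n)
  have he : MeasurableEmbedding (@WithLp.toLp 2 (Fin n → ℝ)) := (MeasurableEquiv.toLp 2 (Fin n → ℝ)).measurableEmbedding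
  exact (hp.restrict_preimage_emb he {x : ESp n | x.ofLp ∈ A}).quasiMeasurePreserving.ae h

lemma tr_ae' {n : ℕ} {P : ESp n → Prop} (h : ∀ᵐ x, P x) : ∀ᵐ z : Fin n → ℝ, P (WithLp.toLp 2 z) :=
  (PiLp.volume_preserving_toLp (Fin n)).quasiMeasurePreserving.ae h

abbrev Cb {n : ℕ} (c : Fin n → ℝ) (h : ℝ) : Set (Fin n → ℝ) := Icc c (fun i => c i + h)

lemma Cb_ne_top {n : ℕ} (c : Fin n → ℝ) (h : ℝ) : volume (Cb c h) ≠ ⊤ := isCompact_Icc.measure_lt_top.ne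

lemma Cb_ne_zero {n : ℕ} (c : Fin n → ℝ) {h : ℝ} (hh : 0 < h) : volume (Cb c h) ≠ 0 := by
  rw [Real.volume_Icc_pi, Finset.prod_ne_zero_iff]; intro i _; simp [hh]

lemma Cb_neBot {n : ℕ} (c : Fin n → ℝ) {h : ℝ} (hh : 0 < h) : (ae (volume.restrict (Cb c h))).NeBot := by
  rw [ae_neBot, Ne, Measure.restrict_eq_zero]; exact Cb_ne_zero c hh

lemma lt_top_of_avg {n : ℕ} {c : Fin n → ℝ} {h : ℝ} {x : ℝ≥0∞} (hx : (volume (Cb c h))⁻¹ * x < ⊤) : x < ⊤ := by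
  by_contra hc
  rw [not_lt, top_le_iff] at hc
  rw [hc, ENNReal.mul_top (ENNReal.inv_ne_zero.2 (Cb_ne_top c h))] at hx
  exact absurd hx (lt_irrefl _)

lemma av_Cb {n : ℕ} (f : (Fin n → ℝ) → ℝ≥0∞) (I : Idx n) : ∃ c h, 0 < h ∧ D I =ᵐ[volume] Cb c h ∧
    av f I = (volume (Cb c h))⁻¹ * ∫⁻ x in Cb c h, f x := by
  refine ⟨_, (2:ℝ) ^ I.1, by positivity, D_ae_K I, ?_⟩
  rw [av, measure_congr (D_ae_K I), setLIntegral_congr (D_ae_K I), K]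

lemma DA1_of {n : ℕ} {f : (Fin n → ℝ) → ℝ≥0∞} {C : ℝ≥0∞} (hC : C ≠ ⊤) (hf : ∀ x, f x ≠ ⊤)
    (h : ∀ c h, 0 < h → ∀ᵐ z ∂(volume.restrict (Cb c h)), (volume (Cb c h))⁻¹ * ∫⁻ x in Cb c h, f x ≤ C * f z) :
    LI f ∧ DA1 f C := by
  constructor
  · intro c l hl
    have := Cb_neBot c hl
    obtain ⟨z, hz⟩ := (h c l hl).exists
    exact lt_top_of_avg (hz.trans_lt (ENNReal.mul_lt_top hC.lt_top (hf z).lt_top))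
  · intro I
    obtain ⟨c, l, hl, h1, h2⟩ := av_Cb f I
    rw [h2, Measure.restrict_congr_set h1]
    exact h c l hl

lemma A1_case {n : ℕ} {w : ESp n → ℝ} {C : ℝ≥0∞} (hC : C ≠ ⊤) (h : A1Const w C) :
    LI (fun z => ENNReal.ofReal (w (WithLp.toLp 2 z))) ∧ DA1 (fun z => ENNReal.ofReal (w (WithLp.toLp 2 z))) C := by
  refine DA1_of hC (fun _ => ofReal_ne_top) fun c l hl => ?_
  have h1 := h _ (cube_T c hl)
  rw [wMeas, tr, tr_vol] at h1
  have h2 : ∀ᵐ x ∂(volume.restrict {x : ESp n | x.ofLp ∈ Cb c l}),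
    essInf (fun x => ENNReal.ofReal (w x)) (volume.restrict {x : ESp n | x.ofLp ∈ Cb c l}) ≤ ENNReal.ofReal (w x) := ae_essInf_le
  filter_upwards [tr_ae h2] with z hz
  exact h1.trans (mul_le_mul' le_rfl hz)

lemma V_data {n : ℕ} {w : ESp n → ℝ} (hm : Measurable w) (hp : ∀ᵐ x, 0 < w x) (h : IsAinfty w) :
    ∃ (C : ℝ≥0∞) (κ : ℝ), C ≠ ⊤ ∧ 0 < κ ∧ LI (fun z => ENNReal.ofReal (w (WithLp.toLp 2 z))) ∧
      ∀ I, av (fun z => ENNReal.ofReal (w (WithLp.toLp 2 z))) I *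
        av (fun z => ENNReal.ofReal (w (WithLp.toLp 2 z)) ^ (-κ)) I ^ (1/κ) ≤ C := by
  set V : (Fin n → ℝ) → ℝ≥0∞ := fun z => ENNReal.ofReal (w (WithLp.toLp 2 z)) with hV
  have hVm : Measurable V := (hm.comp (MeasurableEquiv.toLp 2 (Fin n → ℝ)).measurable).ennreal_ofReal
  have hVt : ∀ z, V z ≠ ⊤ := fun _ => ofReal_ne_top
  have hV0 : ∀ᵐ z, V z ≠ 0 := by
    filter_upwards [tr_ae' hp] with z hz
    simp [hV, hz]
  rcases h with ⟨C, hC, h⟩ | ⟨p, hp1, C, hC, h⟩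
  · obtain ⟨h1, h2⟩ := A1_case hC.ne h
    refine ⟨C, 1, hC.ne, one_pos, h1, fun I => ?_⟩
    simp only [div_one, ENNReal.rpow_one]
    rw [← av_const_mul _ (by fun_prop), ← av_const C I]
    apply av_mono_ae
    have h3 := (ae_restrict_iff' (D_meas I)).1 (h2 I)
    filter_upwards [h3, hV0] with x hx h0 hxD
    rw [ENNReal.rpow_neg_one, ← div_eq_mul_inv]
    exact ENNReal.div_le_of_le_mul (hx hxD)
  · have hp0 : 0 < p - 1 := by linarith
    have e1 : 1 - p / (p - 1) = -(1 / (p - 1)) := by field_simp; ring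
    have key : ∀ c l, 0 < l → ((volume (Cb c l))⁻¹ * ∫⁻ x in Cb c l, V x) *
        ((volume (Cb c l))⁻¹ * ∫⁻ x in Cb c l, V x ^ (-(1 / (p - 1)))) ^ (p - 1) ≤ C := by
      intro c l hl
      have := h _ (cube_T c hl)
      rwa [wMeas, tr, tr, tr_vol, e1] at this
    refine ⟨C, 1 / (p - 1), hC.ne, by positivity, fun c l hl => ?_, fun I => ?_⟩
    · apply lt_top_of_avg (c := c) (h := l)
      by_contra hc
      rw [not_lt, top_le_iff] at hc
      have k := key c l hl
      rw [hc, ENNReal.top_mul] at k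
      · exact absurd k (not_le.2 hC)
      · rw [Ne, ENNReal.rpow_eq_zero_iff_of_pos hp0]
        refine mul_ne_zero (ENNReal.inv_ne_zero.2 (Cb_ne_top c l)) ?_
        rw [Ne, lintegral_eq_zero_iff (by fun_prop)]
        intro h0
        have := Cb_neBot c hl
        obtain ⟨z, hz⟩ := h0.exists
        simp only [Pi.zero_apply, ENNReal.rpow_eq_zero_iff] at hz
        rcases hz with ⟨_, hz⟩ | ⟨hz, _⟩
        · have : 0 < 1 / (p - 1) := by positivity
          linarith
        · exact hVt z hz
    · obtain ⟨c, l, hl, h1, h2⟩ := av_Cb V I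
      have h3 : av (fun x => V x ^ (-(1 / (p - 1)))) I = (volume (Cb c l))⁻¹ * ∫⁻ x in Cb c l, V x ^ (-(1 / (p - 1))) := by
        rw [av, measure_congr h1, setLIntegral_congr h1]
      rw [h3, h2, one_div_one_div]
      exact key c l hl

lemma nu_data {n m : ℕ} (hm : 0 < m) {q : ℝ} {u : Fin m → ESp n → ℝ} (hu0 : ∀ i x, 0 ≤ u i x)
    (hA : A11 (fun i x => u i x ^ ((m : ℝ) * q))) :
    ∃ C, C ≠ ⊤ ∧ LI (fun z => ENNReal.ofReal (∏ i, u i (WithLp.toLp 2 z) ^ q)) ∧ 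
      DA1 (fun z => ENNReal.ofReal (∏ i, u i (WithLp.toLp 2 z) ^ q)) C := by
  obtain ⟨C, hC, h⟩ := hA
  have hm0 : (0:ℝ) < m := by exact_mod_cast hm
  have e1 : ∀ x, ∏ i, (u i x ^ ((m:ℝ) * q)) ^ ((m:ℝ)⁻¹) = ∏ i, u i x ^ q := by
    intro x
    refine Finset.prod_congr rfl fun i _ => ?_
    rw [← Real.rpow_mul (hu0 i x)]; congr 1; field_simp
  have e2 : ∀ x, ∏ i, ENNReal.ofReal (u i x ^ ((m:ℝ) * q)) = ENNReal.ofReal (∏ i, u i x ^ q) ^ (m:ℝ) := by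
    intro x
    rw [← ENNReal.ofReal_prod_of_nonneg (fun i _ => Real.rpow_nonneg (hu0 i x) _), ENNReal.ofReal_rpow_of_nonneg
      (Finset.prod_nonneg fun i _ => Real.rpow_nonneg (hu0 i x) _) hm0.le, ← Real.finsetProd_rpow _ _ 
      (fun i _ => Real.rpow_nonneg (hu0 i x) _)]
    congr 1
    refine Finset.prod_congr rfl fun i _ => ?_
    rw [← Real.rpow_mul (hu0 i x)]; congr 1; ring
  have hCm : C ^ (1 / (m:ℝ)) ≠ ⊤ := (ENNReal.rpow_lt_top_of_nonneg (by positivity) hC.ne).ne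
  refine ⟨C ^ (1 / (m:ℝ)), hCm, DA1_of hCm (fun _ => ofReal_ne_top) fun c l hl => ?_⟩
  have h1 := h _ (cube_T c hl)
  simp only [e1] at h1
  rw [tr, tr_vol] at h1
  set Q := {x : ESp n | x.ofLp ∈ Cb c l} with hQ
  have h2 : ∀ i, ∀ᵐ x ∂(volume.restrict Q),
    essInf (fun x => ENNReal.ofReal (u i x ^ ((m:ℝ) * q))) (volume.restrict Q) ≤ ENNReal.ofReal (u i x ^ ((m:ℝ) * q)) := fun i => ae_essInf_le
  have h3 := tr_ae (ae_all_iff.2 h2)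
  have := Cb_neBot c hl
  have hes : ∀ i, essInf (fun x => ENNReal.ofReal (u i x ^ ((m:ℝ) * q))) (volume.restrict Q) ≠ ⊤ := by
    intro i
    obtain ⟨z, hz⟩ := h3.exists
    exact ne_top_of_le_ne_top ofReal_ne_top (hz i)
  rw [← ENNReal.prod_inv_distrib (fun i _ j _ _ => Or.inr (hes j)), ← div_eq_mul_inv,
    ENNReal.div_le_iff_le_mul (Or.inr hC.ne) (Or.inl (ENNReal.prod_ne_top fun i _ => hes i))] at h1
  filter_upwards [h3] with z hz
  have h4 := h1.trans (mul_le_mul' le_rfl (Finset.prod_le_prod' fun i _ => hz i))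
  rw [e2] at h4
  have h5 := ENNReal.rpow_le_rpow h4 (show 0 ≤ 1 / (m:ℝ) by positivity)
  rwa [← ENNReal.rpow_mul, ENNReal.mul_rpow_of_nonneg C _ (by positivity), ← ENNReal.rpow_mul, mul_one_div_cancel hm0.ne',
    ENNReal.rpow_one, ENNReal.rpow_one] at h5

end Ext

end

section
namespace Ext

lemma wd_exists {n m : ℕ} (hm : 0 < m) {q : ℝ} {u : Fin m → ESp n → ℝ} {v : ESp n → ℝ}
    (hu : ∀ i, IsWeight (u i)) (hv : IsWeight v)
    (hA : A11 (fun i x => u i x ^ ((m : ℝ) * q)))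
    (hAinf : IsAinfty (fun x => v x ^ q)) :
    ∃ C s0 κ, WD (fun z : Fin n → ℝ => ENNReal.ofReal (∏ i, u i (WithLp.toLp 2 z) ^ q))
      (fun z => ENNReal.ofReal (v (WithLp.toLp 2 z) ^ q)) C s0 κ := by
  have hto : Measurable (WithLp.toLp 2 : (Fin n → ℝ) → ESp n) := (MeasurableEquiv.toLp 2 (Fin n → ℝ)).measurable
  have hum : ∀ i, Measurable (u i) := fun i => (hu i).1
  have hvm := hv.1
  have hvqm : Measurable fun x => v x ^ q := by fun_prop
  have hvp : ∀ᵐ x, 0 < v x ^ q := by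
    filter_upwards [hv.2.2.1] with x hx
    exact Real.rpow_pos_of_pos hx _
  obtain ⟨CV, κ, hCV, hκ, hLV, hap⟩ := V_data hvqm hvp hAinf
  obtain ⟨Cν, hCν, hLν, ha1⟩ := nu_data hm (fun i => (hu i).2.1) hA
  have hmν : Measurable fun z : Fin n → ℝ => ENNReal.ofReal (∏ i, u i (WithLp.toLp 2 z) ^ q) := by
    apply Measurable.ennreal_ofReal
    exact Finset.measurable_prod _ fun i _ => ((hum i).comp hto).pow_const q
  have hmV : Measurable fun z : Fin n → ℝ => ENNReal.ofReal (v (WithLp.toLp 2 z) ^ q) := (hvqm.comp hto).ennreal_ofReal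
  have hzν : ∀ᵐ z : Fin n → ℝ, ENNReal.ofReal (∏ i, u i (WithLp.toLp 2 z) ^ q) ≠ 0 := by
    filter_upwards [ae_all_iff.2 fun i => tr_ae' (hu i).2.2.1] with z hz
    rw [Ne, ENNReal.ofReal_eq_zero, not_le]
    exact Finset.prod_pos fun i _ => Real.rpow_pos_of_pos (hz i) _
  have hzV : ∀ᵐ z : Fin n → ℝ, ENNReal.ofReal (v (WithLp.toLp 2 z) ^ q) ≠ 0 := by
    filter_upwards [tr_ae' hvp] with z hz
    rwa [Ne, ENNReal.ofReal_eq_zero, not_le]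
  obtain ⟨s0, hs0, C1, hC1, hrh⟩ := revHolder hCν hLν hmν ha1 (fun _ => ofReal_ne_top) hzν
  refine ⟨CV + Cν + C1, s0, κ, hmν, hmV, fun _ => ofReal_ne_top, fun _ => ofReal_ne_top, hzν, hzV, hLν, hLV, fun I => ?_, hs0,
    fun I => ?_, hκ, fun I => ?_, ?_⟩
  · filter_upwards [ha1 I] with x hx
    refine hx.trans (mul_le_mul' ?_ le_rfl)
    exact le_add_right le_add_self
  · exact (hrh I).trans (mul_le_mul' le_add_self le_rfl)
  · exact (hap I).trans (le_add_right le_self_add)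
  · simp [hCV, hCν, hC1.ne]

lemma weak_iff {n : ℕ} {q : ℝ} (hq : 0 < q) {v : ESp n → ℝ} (hv0 : ∀ x, 0 ≤ v x) (hv : ∀ᵐ x, 0 < v x)
    {p : ESp n → ℝ} (hp0 : ∀ x, 0 ≤ p x) (G : ESp n → ℝ≥0∞) (N : ℝ≥0∞) :
    wnorm (fun x => G x / ENNReal.ofReal (v x)) q (fun x => p x * v x ^ q) ≤ N ↔
    ∀ s : ℝ≥0∞, s ≠ 0 → s ≠ ⊤ → s * (volume.withDensity (fun z : Fin n → ℝ => ENNReal.ofReal (p (WithLp.toLp 2 z)) *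
      ENNReal.ofReal (v (WithLp.toLp 2 z) ^ q))) {z | s * ENNReal.ofReal (v (WithLp.toLp 2 z) ^ q) < G (WithLp.toLp 2 z) ^ q} ≤ N ^ q := by
  set W := volume.withDensity (fun z : Fin n → ℝ => ENNReal.ofReal (p (WithLp.toLp 2 z)) *
      ENNReal.ofReal (v (WithLp.toLp 2 z) ^ q)) with hW
  have key : ∀ t : ℝ, 0 < t → wMeas (fun x => p x * v x ^ q) {x | ENNReal.ofReal t < G x / ENNReal.ofReal (v x)} =
      W {z | ENNReal.ofReal t ^ q * ENNReal.ofReal (v (WithLp.toLp 2 z) ^ q) < G (WithLp.toLp 2 z) ^ q} := by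
    intro t ht
    have e : {x : ESp n | ENNReal.ofReal t < G x / ENNReal.ofReal (v x)} = {x : ESp n | x.ofLp ∈ {z : Fin n → ℝ |
      ENNReal.ofReal t < G (WithLp.toLp 2 z) / ENNReal.ofReal (v (WithLp.toLp 2 z))}} := rfl
    rw [wMeas, e, tr, hW, withDensity_apply']
    simp only [ENNReal.ofReal_mul (hp0 _)]
    apply setLIntegral_congr
    filter_upwards [tr_ae' hv] with z hz
    apply propext
    change ENNReal.ofReal t < G (WithLp.toLp 2 z) / ENNReal.ofReal (v (WithLp.toLp 2 z)) ↔
      ENNReal.ofReal t ^ q * ENNReal.ofReal (v (WithLp.toLp 2 z) ^ q) < G (WithLp.toLp 2 z) ^ q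
    rw [ENNReal.lt_div_iff_mul_lt (Or.inl (by simpa using hz)) (Or.inl ofReal_ne_top),
      ← ENNReal.ofReal_rpow_of_nonneg (hv0 _) hq.le, ← ENNReal.mul_rpow_of_nonneg _ _ hq.le, ENNReal.rpow_lt_rpow_iff hq]
  rw [wnorm, iSup₂_le_iff]
  have conv : ∀ (a b : ℝ≥0∞), a * b ^ (1 / q) ≤ N ↔ a ^ q * b ≤ N ^ q := by
    intro a b
    rw [← ENNReal.rpow_le_rpow_iff hq, ENNReal.mul_rpow_of_nonneg _ _ hq.le, ← ENNReal.rpow_mul, one_div_mul_cancel hq.ne',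
      ENNReal.rpow_one]
  constructor
  · intro h s hs0 hst
    have hst' : s ^ (1 / q) ≠ ⊤ := (ENNReal.rpow_lt_top_of_nonneg (by positivity) hst).ne
    have hs0' : s ^ (1 / q) ≠ 0 := by
      rw [Ne, ENNReal.rpow_eq_zero_iff_of_pos (by positivity)]; exact hs0
    have ht : 0 < (s ^ (1 / q)).toReal := ENNReal.toReal_pos hs0' hst'
    have h1 := h _ ht
    rw [key _ ht, conv, ENNReal.ofReal_toReal hst', ← ENNReal.rpow_mul, one_div_mul_cancel hq.ne', ENNReal.rpow_one] at h1
    exact h1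
  · intro h t ht
    rw [key t ht, conv]
    refine h _ ?_ (ENNReal.rpow_lt_top_of_nonneg hq.le ofReal_ne_top).ne
    rw [Ne, ENNReal.rpow_eq_zero_iff_of_pos hq]; simpa using ht

end Ext


end

/-- **Extrapolation: `𝓘_α` controlled by `𝓜_α` in the mixed weak norm.**  Let
`0 < α < mn`, `q = n/(mn-α)`, `u⃗^{mq} ∈ A_{(1,…,1)}`, `v^q ∈ A_∞`, `ν = ∏ uᵢ^q`.
Then there is `C` such that for all `f⃗` bounded with compact support,
`‖𝓘_α(f⃗)/v‖_{L^{q,∞}(ν v^q)} ≤ C ‖𝓜_α(f⃗)/v‖_{L^{q,∞}(ν v^q)}`. -/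
theorem extrapolation_Ialpha_le_Malpha {n m : ℕ} (hn : 0 < n) (hm : 0 < m)
    (α q : ℝ) (hα0 : 0 < α) (hα : α < (m : ℝ) * (n : ℝ))
    (hq : q = (n : ℝ) / ((m : ℝ) * (n : ℝ) - α))
    (u : Fin m → ESp n → ℝ) (v : ESp n → ℝ)
    (hu : ∀ i, IsWeight (u i)) (hv : IsWeight v)
    (hA : A11 (fun i x => u i x ^ ((m : ℝ) * q)))
    (hAinf : IsAinfty (fun x => v x ^ q)) :
    ∃ C : ℝ≥0∞, C < ⊤ ∧
      ∀ f : Fin m → ESp n → ℝ, (∀ i, Measurable (f i)) →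
        (∀ i, ∃ B : ℝ, ∀ x, |f i x| ≤ B) → (∀ i, HasCompactSupport (f i)) →
        wnorm (fun x => ENNReal.ofReal |multiIα α f x| / ENNReal.ofReal (v x)) q
            (fun x => (∏ i, u i x ^ q) * v x ^ q)
          ≤ C * wnorm (fun x => multiMα α f x / ENNReal.ofReal (v x)) q
              (fun x => (∏ i, u i x ^ q) * v x ^ q) := by
  have hm0 : (0:ℝ) < m := by exact_mod_cast hm
  have hn0 : (0:ℝ) < n := by exact_mod_cast hn
  have hβ0 : 0 < (m:ℝ) * n - α := by linarith
  have hq0 : 0 < q := by rw [hq]; positivity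
  set β := (m:ℝ) * n - α with hβ
  obtain ⟨C0, s0, κ, hWD⟩ := Ext.wd_exists hm hu hv hA hAinf
  have hLt : (4:ℝ≥0∞) ^ n * Ext.gc (α / m) < ⊤ :=
    ENNReal.mul_lt_top (by finiteness) (Ext.gc_lt_top (by positivity))
  obtain ⟨C1, hC1, hcore⟩ := Ext.core hWD (e := 1 / (m:ℝ)) (by positivity) hq0 hLt
  have hp0 : ∀ x, 0 ≤ ∏ i, u i x ^ q := fun x => Finset.prod_nonneg fun i _ => Real.rpow_nonneg ((hu i).2.1 x) _
  set c1 : ℝ≥0∞ := (2 ^ β) ^ q with hc1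
  set c2 : ℝ≥0∞ := (3 ^ β) ^ q with hc2
  have hfin : ∀ k : ℝ≥0∞, k ≠ 0 → k ≠ ⊤ → (k ^ β) ^ q ≠ 0 ∧ (k ^ β) ^ q ≠ ⊤ := by
    intro k hk0 hkt
    constructor
    · rw [Ne, ENNReal.rpow_eq_zero_iff_of_pos hq0, ENNReal.rpow_eq_zero_iff_of_pos hβ0]; exact hk0
    · exact (ENNReal.rpow_lt_top_of_nonneg hq0.le (ENNReal.rpow_lt_top_of_nonneg hβ0.le hkt).ne).ne
  obtain ⟨hc10, hc1t⟩ := hfin 2 (by simp) (by simp)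
  obtain ⟨hc20, hc2t⟩ := hfin 3 (by simp) (by simp)
  rw [← hc1] at hc10 hc1t
  rw [← hc2] at hc20 hc2t
  set A := c1 * C1 * c2 + 1 with hAdef
  have hAt : A ≠ ⊤ := by
    rw [hAdef]
    exact (ENNReal.add_lt_top.2 ⟨ENNReal.mul_lt_top (ENNReal.mul_lt_top hc1t.lt_top hC1) hc2t.lt_top, by simp⟩).ne
  have hA0 : A ≠ 0 := by simp [hAdef]
  refine ⟨A ^ (1 / q), ENNReal.rpow_lt_top_of_nonneg (by positivity) hAt, fun f hf hB _ => ?_⟩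
  rw [Ext.weak_iff hq0 hv.2.1 hv.2.2.1 hp0]
  set N := wnorm (fun x => multiMα α f x / ENNReal.ofReal (v x)) q (fun x => (∏ i, u i x ^ q) * v x ^ q) with hN
  have hNh := (Ext.weak_iff hq0 hv.2.1 hv.2.2.1 hp0 (multiMα α f) N).1 le_rfl
  rw [ENNReal.mul_rpow_of_nonneg _ _ hq0.le, ← ENNReal.rpow_mul, one_div_mul_cancel hq0.ne', ENNReal.rpow_one]
  intro t ht0 htt
  rcases eq_or_ne N ⊤ with hNt | hNt
  · rw [hNt, ENNReal.top_rpow_of_pos hq0, ENNReal.mul_top hA0]; exact le_top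
  set W := volume.withDensity (fun z : Fin n → ℝ => ENNReal.ofReal (∏ i, u i (WithLp.toLp 2 z) ^ q) *
      ENNReal.ofReal (v (WithLp.toLp 2 z) ^ q)) with hW
  set V := fun z : Fin n → ℝ => ENNReal.ofReal (v (WithLp.toLp 2 z) ^ q) with hV
  have hNqt : N ^ q ≠ ⊤ := (ENNReal.rpow_lt_top_of_nonneg hq0.le hNt).ne
  -- the bound for every admissible level
  have main : ∀ N' : ℝ≥0∞, N' ≠ 0 → N' ≠ ⊤ → N ^ q ≤ N' →
      t * W {z | t * V z < ENNReal.ofReal |multiIα α f (WithLp.toLp 2 z)| ^ q} ≤ (c1 * C1 * c2) * N' := by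
    intro N' hN0 hNt' hNN
    have h1 := hcore (Ext.aco β (Ext.gX f)) (Ext.aco_loc hm hα0 hβ _ (Ext.gX_meas hf)) (Ext.aco_lt_top f hB) (c2 * N')
      (mul_ne_zero hc20 hN0) (ENNReal.mul_ne_top hc2t hNt') (fun s hs0 hst => by
        have h2 := hNh (s / c2) (ENNReal.div_ne_zero.2 ⟨hs0, hc2t⟩) (ENNReal.div_ne_top hst hc20)
        calc s * W {x | s * V x < Ext.MD (Ext.aco β (Ext.gX f)) x ^ q}
            ≤ s * W {z | s / c2 * V z < multiMα α f (WithLp.toLp 2 z) ^ q} := by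
              refine mul_le_mul' le_rfl (measure_mono fun z hz => ?_)
              change s * V z < _ at hz
              change s / c2 * V z < _
              have h3 : Ext.MD (Ext.aco β (Ext.gX f)) z ^ q ≤ c2 * multiMα α f (WithLp.toLp 2 z) ^ q := by
                rw [hc2, ← ENNReal.mul_rpow_of_nonneg _ _ hq0.le]
                exact ENNReal.rpow_le_rpow (Ext.MD_le_M hn hm hβ hβ0 f (WithLp.toLp 2 z)) hq0.le
              have h4 := hz.trans_le h3
              rw [div_eq_mul_inv, mul_right_comm, ← div_eq_mul_inv]
              exact ENNReal.div_lt_of_lt_mul' h4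
          _ = c2 * (s / c2 * W {z | s / c2 * V z < multiMα α f (WithLp.toLp 2 z) ^ q}) := by
              rw [← mul_assoc, ENNReal.mul_div_cancel hc20 hc2t]
          _ ≤ c2 * N' := mul_le_mul' le_rfl (h2.trans hNN))
      (t / c1) (ENNReal.div_ne_zero.2 ⟨ht0, hc1t⟩) (ENNReal.div_ne_top htt hc10)
    calc t * W {z | t * V z < ENNReal.ofReal |multiIα α f (WithLp.toLp 2 z)| ^ q}
        ≤ t * W {x | t / c1 * V x < (∑' I, (Ext.D I).indicator (fun _ => Ext.aco β (Ext.gX f) I) x) ^ q} := by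
          refine mul_le_mul' le_rfl (measure_mono fun z hz => ?_)
          change t * V z < _ at hz
          change t / c1 * V z < _
          have h3 : ENNReal.ofReal |multiIα α f (WithLp.toLp 2 z)| ^ q ≤
              c1 * (∑' I, (Ext.D I).indicator (fun _ => Ext.aco β (Ext.gX f) I) z) ^ q := by
            rw [hc1, ← ENNReal.mul_rpow_of_nonneg _ _ hq0.le]
            exact ENNReal.rpow_le_rpow (Ext.I_le hβ hβ0 f hf (WithLp.toLp 2 z)) hq0.le
          have h4 := hz.trans_le h3
          rw [div_eq_mul_inv, mul_right_comm, ← div_eq_mul_inv]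
          exact ENNReal.div_lt_of_lt_mul' h4
      _ = c1 * (t / c1 * W {x | t / c1 * V x < (∑' I, (Ext.D I).indicator (fun _ => Ext.aco β (Ext.gX f) I) x) ^ q}) := by
          rw [← mul_assoc, ENNReal.mul_div_cancel hc10 hc1t]
      _ ≤ c1 * (C1 * (c2 * N')) := mul_le_mul' le_rfl h1
      _ = _ := by ring
  change t * W {z | t * V z < ENNReal.ofReal |multiIα α f (WithLp.toLp 2 z)| ^ q} ≤ A * N ^ q
  rcases eq_or_ne (N ^ q) 0 with hN0 | hN0
  · rw [hN0, mul_zero]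
    by_contra hx
    set x := t * W {z | t * V z < ENNReal.ofReal |multiIα α f (WithLp.toLp 2 z)| ^ q} with hxdef
    have hx0 : x ≠ 0 := fun h => hx h.le
    have hB : ∀ N' : ℝ≥0∞, N' ≠ 0 → N' ≠ ⊤ → x ≤ A * N' := fun N' h1 h2 =>
      (main N' h1 h2 (by simp [hN0])).trans (mul_le_mul' le_self_add le_rfl)
    have hxt : x ≠ ⊤ := ne_top_of_le_ne_top hAt (by simpa using hB 1 (by simp) (by simp))
    have := hB (x / 2 / A) (ENNReal.div_ne_zero.2 ⟨ENNReal.div_ne_zero.2 ⟨hx0, by simp⟩, hAt⟩)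
      (ENNReal.div_ne_top (ENNReal.div_ne_top hxt (by simp)) hA0)
    rw [ENNReal.mul_div_cancel hA0 hAt] at this
    exact absurd this (not_le.2 (ENNReal.half_lt_self hx0 hxt))
  · exact (main _ hN0 hNqt le_rfl).trans (mul_le_mul' le_self_add le_rfl)


end
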